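/- arXiv:2302.05810 — 2 statements merged into one kernel-verified Lean document; each statement's English description precedes it below -/
import Mathlib

section
/- The pessimistic distortion of the class of median schemes over 6 voters is at most 1.80: for every m ≥ 1, every 6-tuple of budgets (P_1,…,P_6) ∈ 𝔹^6 on m projects, and every family (p^Q), indexed by the 3-element subsets Q of [6], such that each p^Q ∈ 𝔹 is a median-scheme outcome for the triple (P_q)_{q∈Q}, one has (1/60) Σ_{Q, |Q|=3} Σ_{i∈[6]∖Q} d(p^Q, P_i) ≤ 1.80 · (1/6) · min_{v∈𝔹} Σ_{i=1}^6 d(v, P_i). -/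
/-- A budget on `m` projects: nonnegative allocations summing to 1. -/
def IsBudget {m : ℕ} (b : Fin m → ℝ) : Prop :=
  (∀ j, 0 ≤ b j) ∧ ∑ j, b j = 1

/-- The ℓ₁ cost `d(a,b)`. -/
noncomputable def cost {m : ℕ} (a b : Fin m → ℝ) : ℝ := ∑ j, |a j - b j|

/-- The overlap utility `u(a,b)`. -/
noncomputable def util {m : ℕ} (a b : Fin m → ℝ) : ℝ := ∑ j, min (a j) (b j)

/-- `z` is a median-scheme outcome for `(a,b,c)`: a budget maximizing
`u(z,a) + u(z,b) + u(z,c)` over all budgets. -/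
def MedianOutcome {m : ℕ} (a b c z : Fin m → ℝ) : Prop :=
  IsBudget z ∧ ∀ z' : Fin m → ℝ, IsBudget z' →
    util z' a + util z' b + util z' c ≤ util z a + util z b + util z c

/-- `z` is a median-scheme outcome for the triple of budgets `(w_r)_{r∈R}`:
a budget maximizing `Σ_{r∈R} u(z, w_r)` over all budgets. -/
def MedianOutcomeOn {m : ℕ} {ι : Type*} [Fintype ι]
    (w : ι → Fin m → ℝ) (R : Finset ι) (z : Fin m → ℝ) : Prop :=
  IsBudget z ∧ ∀ z' : Fin m → ℝ, IsBudget z' →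
    ∑ r ∈ R, util z' (w r) ≤ ∑ r ∈ R, util z (w r)

namespace PD

/-- Approval pattern of the six voters at a given level. -/
abbrev Pat := Fin 6 → Bool

/-- Number of approving voters. -/
def cnt (S : Pat) : ℕ :=
  (S 0).toNat + ((S 1).toNat + ((S 2).toNat + ((S 3).toNat + ((S 4).toNat + (S 5).toNat))))

def aa (i j k : Fin 6) (S : Pat) : ℕ := (S i).toNat + ((S j).toNat + (S k).toNat)

def bb (i j k : Fin 6) (S : Pat) : ℕ := cnt S - aa i j k S

def fVB (i j k : Fin 6) (S : Pat) : ℕ :=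
  if aa i j k S = 3 then bb i j k S else if aa i j k S = 2 then min (bb i j k S) 2 else 0

def fR (i j k : Fin 6) (S : Pat) : ℕ :=
  if aa i j k S = 2 ∧ bb i j k S = 3 then 1 else 0

def fNA (i j k : Fin 6) (S : Pat) : ℕ :=
  if 2 ≤ aa i j k S ∨ (aa i j k S = 1 ∧ bb i j k S = 0) then 1 else 0

def fT2 (i j k : Fin 6) (S : Pat) : ℕ := if 2 ≤ aa i j k S then 1 else 0

def fE2 (i j k : Fin 6) (S : Pat) : ℕ := if aa i j k S = 2 then 1 else 0

def fG (θ : ℕ) (S : Pat) : ℕ := cnt S - θ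

def fV (i : Fin 6) (S : Pat) : ℕ := (S i).toNat

def bits (s : ℕ) : Pat := fun i => Nat.testBit s i.val

def allPats : List Pat := (List.range 64).map bits

/-- Kronecker packing of a vector of small naturals, base `2^16`. -/
def pk (f : Pat → ℕ) : List Pat → ℕ
  | [] => 0
  | S :: t => f S + 65536 * pk f t

/-- One row per triple: the triple, its key `2^i+2^j+2^k` and its packed vectors. -/
structure Row where
  i : Fin 6
  j : Fin 6
  k : Fin 6
  key : ℕ
  vb : ℕ
  r : ℕ
  na : ℕ
  t2 : ℕ
  e2 : ℕ

def Row.ok (w : Row) : Bool :=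
  (w.key == 2 ^ w.i.val + 2 ^ w.j.val + 2 ^ w.k.val) &&
  (w.vb == pk (fVB w.i w.j w.k) allPats) && (w.r == pk (fR w.i w.j w.k) allPats) &&
  (w.na == pk (fNA w.i w.j w.k) allPats) && (w.t2 == pk (fT2 w.i w.j w.k) allPats) &&
  (w.e2 == pk (fE2 w.i w.j w.k) allPats)

/-- Digitwise comparison of packed vectors. -/
def chk : ℕ → ℕ → ℕ → Bool
  | 0, _, _ => true
  | n + 1, a, b => Nat.ble (a % 65536) (b % 65536) && chk n (a / 65536) (b / 65536)

/-- Check of a leaf: process the rows one after another. -/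
def go (am bm D tot : ℕ) : List Row → ℕ → ℕ → ℕ → ℕ → ℕ → Bool
  | [], _, pos, neg, k, sm =>
      Nat.ble tot (48 * D + k) && (Nat.blt sm 65536 && chk 64 neg pos)
  | w :: ws, c, pos, neg, k, sm =>
      bif Nat.testBit am w.key then
        Nat.ble (c % 32) D &&
        go am bm D tot ws (c / 32) (pos + (D * w.vb + D * w.r)) (neg + (c % 32) * w.na)
          (k + c % 32) (sm + 4 * D)
      else bif Nat.testBit bm w.key then
        Nat.ble (c % 32) D &&
        go am bm D tot ws (c / 32) (pos + (D * w.vb + (c % 32) * w.r))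
          (neg + (2 * D + c % 32) * w.t2) (k + (2 * D + c % 32)) (sm + 4 * D)
      else
        Nat.ble (c % 32) D && (Nat.ble (c / 32 % 32) D &&
        go am bm D tot ws (c / 1024) (pos + (D * w.vb + (c / 32 % 32) * w.r))
          (neg + ((c % 32) * w.na + ((2 * D + c / 32 % 32 - c % 32 + 2) / 3) * w.e2))
          (k + c % 32) (sm + 4 * D))

/-- The twenty triples in lexicographic order. -/
def rows : List Row := [
  ⟨0, 1, 2, 7,
   8229269816077807250417977533643406866672350761199569632503127769037259498983190380642351674594524842019740184322319904817595801336064630210542660558926108259072913666724219101355131023705798759760979440122946790991145266808809283268981589501867065390489707802664502568619006283599289836472330873775063040,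
   41856443637112767036578431296480772319645832031706759013204946300280323419559146947457328899474431618364965116059968919329729953199817348736560747176712538056982018011685074931301603034083143737757640402883183070879873059078842681231385538261058246094068173385461556788867424999002820097700893032448,
   2743103890840481454395004704024901115817577221616701798723563387404580404051676953529881912413171722606548910826691959281748998039334097306678181684355350746753402199994251513484333714491454714853584432549373692553854452219046651126499551927035048534705835956369296904640294728774465695919694945645035520,
   2743103890840481454395004704024901115817577221616701798723563387404580404051676953529881912413171722606548910826691959281748998039334097306678181684355350746753402199994251513484333714491454714853584432549373692553854452219046651126499551927035048534705835956369296904640294728774465677472950867640451072,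
   41856443637112767036578431296480772319768837064309102859942845113967100667386622580588660262699937554002913737557646145034667928587303059505279375758818968729685716228807520494850486640552168617789517646092843182623735295003531041168005116687920900612320343951346860282368669708004599531426612772864⟩,
  ⟨0, 1, 3, 11,
   8229269816077807250417982071728119254129309004524736900330716426576362794788817883559458384493967393600750907822145719390091044026957285601926655269669537063510777370730170260212345409349883388129299389774751981126519872133278371290153559387446384865454071389434359237037325879634786377256749306939965440,
   41856443637112618334887583518174500574530830513105310589635111728580488991776993980734174626015669427490280587168981509544873633749739700043096514602778094458963573035368511809678045088321227197184955297772035242692681244016314900143662497738497491724937882897731545965168933524987460718275705438208,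
   2743103890840481454395006973067257309546056343279285432637357716174132051954490704988435267362893640513285483179161570505442413800213181446293323595814755307150741206878150126933882125497961027206123526470396002867601773317263853839608185933037765773437650121708386270557223825495931817663364628578631680,
   2743103890840481454395006973067257309546056343279285432637357716174132051954490704988435267362893640513285483179161570505442413800213181446293323595814755307150741206878150126933882125497961027206123526470396002867601773317263853839608185933037765773437650121708385930274856904557468354288757192515387392,
   41856443637112618337156625874368229053775498129341568230701780093915169053355928167220455709874869233111623302556242452035020372892930802939345339969216865496626997281005110738720378131350899371445239945789850807838943868838313766186417817491911141423221509893402841179185957668120028926902611738624⟩,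
  ⟨0, 1, 4, 19,
   8229269816077807250417982071728119254129309250534802105017098924060486704659746538904563026877065433061006871919002780327579475533413636278834145395527951570176049188022383954245009924082390026369681603208575895299194351254550338191141535449311649065831455125966001521555413855276209584742359858665226240,
   41856443637112618334887583518174492513396017041650745887184780360834417866062761439523035819684347128121994431956984175246788970081895207728276559604734384872337128424176811064267159989924869436334370048591893377347979074441426078430742389853693741148720122888526009876089655367638709823412820246528,
   2743103890840481454395006973067257309546056466284318034980767465747188703307583727914778799850445695423997721102596186916208786112430122764745536427858784081438397199532898374093676323714008346198700775907388688241923065081952615260750071092447336898964658704601534921120842815218900795478168249527500800,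
   2743103890840481454395006973067257309546056466284318034980767465747188703307583727914778799850445695423997721102596186916208786112430122764745536427858784081438397199532898374093676323714008346198700775907388688241923065081952499468660833776251913327979650016693681651136177174654861337894160332102828032,
   41856443637112618337156625874368220992763689690489346501006027909606321314567455012833453463203789101274861758022761227966334921037945252032403143223337931538103272874505471512083573084301841029587638223338318247127994661527239430690011229676051645438508113328676695290548268628324125755896594694144⟩,
  ⟨0, 1, 5, 35,
   8229269816077807250417982071728119254129309250534802105017098924060486704659746539627521631610894032061305436268164200535542216351033636462033692477339259066756366550962584660152435847511419597918438570004473296061301716896792926515106036828947997586137909028115396462684676266729507568988087545327779840,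
   41856443637112618334887583518174492513396017041650745887184780360834417842373215353391612859037077101533515500424909939457350933902512303278036192686346345886917416639098320990269283235109289596994348522452201757466303186210414234136719231243418440206104556277625760022432958118729374786999044538368,
   2743103890840481454395006973067257309546056466284318034980767465747188703307583728276258102217360637040378213879733670576017237610648765767770583758266541469718773633050020224608273569901793320729495326522174569537103774123408700815658666677050280042503783178000975013423693574744528930010280564258570240,
   2743103890840481454395006973067257309546056466284318034980767465747188703307583728276258102217360637040378213879733670576017237610648765767770583758253133661788831035950446199610067723774313954908902933144451008093382010093335153838856792378883376614813751319814488962569939691932582360063846910957453312,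
   41856443637112618337156625874368220992763689690489346501006027909606321290878270406004397416213922588590201588113472186008884393850473776371800030839371773178049495401063377619298134859680436840151845655435429166979809098003677781894169892731002234755111749269032106013584844766568706923764786397184⟩,
  ⟨0, 2, 3, 13,
   8229269816077826741046000333710812194222140180739773818972129498019309796807570300890431979800053799819032708291315465096976143072741464055735405224183292605993046013215775152035449515087695039274265740046914754341550658273141452281960180576974997058629419259537556318172440850738222574495795207041187840,
   41855804968213715926238701257212608592439503918757984369241996852908814661157527506298839479904066300897381613221050347818774581866888459551649632558373422395967180873015745759345604222237759269670040278471564012556581613300689868240008741092820404060701515484849646927746153384660269384727409983488,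
   2743103890840491199709016104058603779592471931386803891958064251895605552963866913653924822884148839712231674735275497376280291490075602088659022389072918344697395987698985525832975194825953731368198570850201413965102142454395441672191081752402799938724571015531646925334082449191400838651138189111132160,
   2743103890840491199709016104058603779592471931386803891958064251895605552963866913653924822884148839712231674735275497376280291490075602088659022389072918344697395987698985525832975194825953731368198570850201413965102142454395441672191081752402799938724571015531646585051715528252937356829786683633303552,
   41855804977959029937638734959876383487272279053453562716844386691744504098945127176824989557144690620570510610895525628203529486833485503673048750413223338764912657830452643209590489406946883334549584890756039742648779401439619598185614392300910583908342025799431055648926210868210070198270876975104⟩,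
  ⟨0, 2, 4, 21,
   8229269816077826741046000333710812194222140426744208414677123367119521752334914964685426174414075402215026317478509732324370940422247940899869093167162413977107311260589416265780201758746176911720578396150667116660195270867330902185809087647978669290044771442782816414727983930200538654372765821556490240,
   41855804968213715926238701257212600531304690447303419666791665485162743535443294965087700673572744001529095458009053013520689918199043967236829677560329712809340736261824045013934719123841401508819455029291422147211879443725801046527088633208016653484483755475644110838666875227311518489864524791808,
   2743103890840491199709016104058603779592472054389959643733613733211989400561718379126889339392888216015333637190365898241359143447087947529900194281297945376227493930235408107837569778151197503049060833288765998373428193416756533582706389312605339225551240659632534717639021405540708150972712546671329280,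
   2743103890840491199709016104058603779592472054389959643733613733211989400561718379126889339392888216015333637190365898241359143447087947529900194281297945376227493930235408107837569778151197503049060833288765998373428193416756417790617151996409915654566231971724681447654355764976668674941960559832072192,
   41855804977959029937638734959876375426260466860871566362700314215056606947382152277706113365915774552418560062857416513557587957743644960344545204519905250524078914974830282427010701945741272100419748927522913927002189667845331295554813882689519993208971630067497267684288608511741276769344945127424⟩,
  ⟨0, 2, 5, 37,
   8229269816077826741046000333710812194222140426744208414677123367119521752334914965408368232275280722297206905391402701941124356619886653466044435206457997594562380371118739211595695335420204730163586325486216487487013582586142173397469163847891057169908716656171146383016866523656156832442224905069527040,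
   41855804968213715926238701257212600531304690447303419666791665485162743511753748878956277712925473974940616526476978777731251882019661062786589310641941673823921024476745554939936842369025821669479433503151730527330203555494789202233065474597741352541868188864743860985010177978402183453450749083648,
   2743103890840491199709016104058603779592472054389959643733613733211989400561718379488363126191703514262460433070898210622958252698011014957581821660163543047548606369577443459482120709302594483251493379056663183078651915214112506978314544131995056663107457074614775566967379799993901091545939901293854720,
   2743103890840491199709016104058603779592472054389959643733613733211989400561718379488363126191703514262460433070898210622958252698011014957581821660150135239618663772477869434483914863175115117430900985678939621634930151184038960001512669833828153235417425216428289516113625917181954503152762178578153472,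
   41855804977959029937638734959876375426260466860871566362700314215056606923692967659845836957464764353897233456137192762258599393196194300470980032436293687911473363292759312424656969917643792337071737140144160922961808003828890549054363752539213713894429697979745927668196743219402087661625948504064⟩,
  ⟨0, 3, 4, 25,
   8229269816077826741046004871691658178796108932985411823394330050898291195763406732472666242167337485936927165265768860002662750837161706900424058717150195253839496521600210297050818620366069824833663398630357062631752186197511335399982004586572252281330911120408674151626984999534467389924769991481098240,
   41855804968213567224547853478906328786189688928701971243221830913462909107661141998364546400113981810654410929118065603735833598748966318543365444986395269211322291285507481892311161178079484968246769924180274319024687628663273265439365592685455899115353464987914100014968383753296159110439337197568,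
   2743103890840491199709018373066338191222975354134719540411201402755859973957848287173276238453196547624803246999166882073293252905514542611506310949250652002531989667237320716941455680161836081245637545582194457712404973642042527123158620029968586280891845594918302547132140723544640306606783260109373440,
   2743103890840491199709018373066338191222975354134719540411201402755859973957848287173276238453196547624803246999166882073293252905514542611506310949250652002531989667237320716941455680161836081245637545582194457712404973642042411331069382713773162709906836907010448936865108162042137385648167915211456512,
   41855804977958881238216860293671341677487627032105858439142756187541233423562186847788891016063628043108141510198869839188651186360048284751409037557572248030163757455461906540862792301577256899313553010181070340657731560265336127120332019306489447124549803426855444275444703431580945865034101161984⟩,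
  ⟨0, 3, 5, 41,
   8229269816077826741046004871691658178796108932985411823394330050898291195763406733195608300028538953400102921537947401469843735680873137918813060302979977781347390866481623930632544424472258687702918932523400109430141530510857962387813050843395892522949797642851090254047787201515823903475251222612541440,
   41855804968213567224547853478906328786189688928701971243221830913462909083971595912233123439466711784065931997585991367946395562569583414093125078068007230225902579500428991818313284423263905128906748398040582699143011740432261421145342434075180598172737898377013850161311686504386824074025561489408,
   2743103890840491199709018373066338191222975354134719540411201402755859973957848287534750025252010561678658688164406966691081219783911986796988337441538648524274152471384006429258170472483578856144456601201189576266725330626450482736957477514717310031631437972107037793210143068426999851544615500428410880,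
   2743103890840491199709018373066338191222975354134719540411201402755859973957848287534750025252010561678658688164406966691081219783911986796988337441525240716344209874284432404259964626356099490323864207823466014823003566596376935760155603216550406603941406113920551402074022264676589818223574419654049792,
   41855804977958881238216860293671341677487627032105858439142756187541233399873002229928614605044211706344137127212754114284079203700688288738562495019085024129580259795324615659428377560328890587956579496355190380717000496544330193675333957063659711004800613651259080570976042553615765655262356045824⟩,
  ⟨0, 4, 5, 49,
   8229269816077826741046004871691658178796109178989846419098012941684694450130093341048036313271329411780703168046129758979892994356711460582071505388048247538991433509280043273206291870889031849225408067873408666089355769637567851516982240573345847984349753802791083630536549661646924711577044352489226240,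
   41855804968213567224547853478906320725054875457247406540771499545716837958257363371021984633135389484697645842373994033648310898901738921778305123069963520639276134889237291072902399324867547368056163148860440833798309570857372599432422326190376847596520138367808314072232408347038073179162676297728,
   2743103890840491199709018373066338191222975477137875292186313895746283296032669002960544635760238950333420272268366353468122994860219025497669523938907164390765316224899689899898375630893939286716340096913895652122594206951525690918592343265022070715732948619161767851066861255144685320702506047283200000,
   2743103890840491199709018373066338191222975477137875292186313895746283296032669002960544635760238950333420272268366353468122994860219025497669523938893756582835373627800115874900169784766459920895747703536172090678872442921452028149701231650659743717057908073067428530228441731768699293172064485147410432,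
   41855804977958881238216860293671333616475814839523861211015363775367857814443552430271867154554411292091158714779321384658297422451546731633516807708586607542929943546918770603005406782202511901992860493516136753758335021772560726958343394629514290225092965505494334145294778240839574542644458553344⟩,
  ⟨1, 2, 3, 14,
   8229269816077826741046004871657035340109071085737776218767397097648927112071442426076835009390284274201706611125075883426578384125492225439878659406562987147428856099597881641823548338637188566831741423109790781090001577166700631470166859824027369235415074430728771693363085719529528823746834988888227840,
   638668899199812030577817574459655725770045913917174883778122309556634395108289909328993964904486212563291962120691558379790324688728173556312942182565714152277904423937819961017158283734192865180203510384473707642521084259071140542779487142780424788181522576791827255924909485679083727752265728,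
   2743103890840491199709018373031715352535937383885805091855698051710414210595802976427860473210458445724459844808408700969004164575583677054190469996714928916275349696209210846692396562882185353317637503690459345674846401654701543689231640571565705492383093310302361391820317273480773261116014778646528000,
   2743103890840491199709018373031715352535937383885805091855698051710414210595802976427860473210458445724459844808408700969004164575583677054190469996714928916275349696209210846692396562882185353317637503690459345674846401654701543689231640571565705492383093310302361051537950352542309779294663268873797632,
   638678644513825699584631811178016011044181809393156285982769802878008245120427814742992073918846852691437904593518123616310528204181192682044213516710931333217140597512707352082173523363413016753683617654922428124852434754570087631056529716331022919661500702657192377674459410526963978148511744⟩,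
  ⟨1, 2, 4, 22,
   8229269816077826741046004871657035340109070962738374282685368795047187073253583041225688161942938300882361172107799712558538424148420648752467372258082762949169947905110016836788084343002660858169865540713295360639284620651276295537921365200773639402789720935867406526011096138797537409772304802554839040,
   638668899199812030577817574451594590956574459352472433446754563485508680875748698190187633582186844277136750123357260295126656844235858736357944138856127525833293232237074550132059887376432014594954330242608362940351509370249427622671602339029848570421513371255738176646752136928188864867074048,
   2743103890840491199709018373031715352535937383887681999702240146904755851448024595564829887166409909160916639725588520673967864164995974850650088990417245838576553026689477463200539379308903804439812280947077293674659518697048805565189336636179871126030976814799628057063645409129481880000986692578181120,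
   2743103890840491199709018373031715352535937383887681999702240146904755851448024595564829887166409909160916639725588520673967864164995974850650088990417245838576553026689477463200539379308903804439812280947077293674659518697048689773100099319984447555045968126891774787078979768565442403970234701444022272,
   638678644513825699584631811169954753229431539538787362998296014435439734654460623559723100711786592869699356856628522827692387775474600183507292359321656472515454033013590769198944866918736288149383217990202938616258429338016454876199260572776011139394483018229459449109760609189751099662270464⟩,
  ⟨1, 2, 5, 38,
   8229269816077826741046004871657035340109070962738374282685368795047187073253583040864225406616977408117575385037258928647239795718988367909070859134133137685784602380325270290433733993285292684585724878986443762466903978770119376596943434691796874983575227856589764101989288988873237367134151828245053440,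
   638668899199812030577817574451594590956574459352472433446754563485484991329662566767226986312160255798205218049121470857090477461331408495991025750817142106121508153747000552255305071796592674573428190550988481264463278358405133599512992063728905954854902471005884519949503227593152451091365888,
   2743103890840491199709018373031715352535937383887681999702240146904755851448024595564835402902836469805451466770656950718932573773222068219062978409982594931785846441449530498616209136055383735443477817095161660681536529432730001320302431084786521603025794004373987610589495834005736874058310553761218560,
   2743103890840491199709018373031715352535937383887681999702240146904755851448024595564835402902836469805451466770656950718932573773222068219062978409969187123855903844349956473618003289927904369622885423717438099237814765402656454343500556786619618175335762146187501559735741951193790285665132826750615552,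
   638678644513825699584631811169954753229431539538787362998296014435416044746906221158537174476808899633643818700002871815949684962423006553994646371243422678080300625841952187199851798301738409239844210142527131371082946391127115559600683845653431785167881811865269829494595726320518323874299904⟩,
  ⟨1, 3, 4, 26,
   8229269816077826741046002602718546605852643849490247155283718436121259906584989229790368723617342980925163307073332626876230316311414751286641061009605474051039098406986236101891741082540136872110804890956378230898641086268784760181599518306225438556807345473933822825776976991371078115991532883872317440,
   638668899051110339730039268179849475955055857904048863612182863651080898722781975035914174819995969592607859135947475438807206766587165272125370204412529507388316915673952926574114125459891441909849219094780175748536446842468339899631079778275479440131025641244914478155278121568809439679479808,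
   2743103890840491199709018373066338191222975477135998384340208802213727554811792643870363617533765772890416834752828135558064196180246591435326597861449791134759444958258837996241445582184871386477113426676868516697350541817147853145555501042957381025763794594950123501558278116732810163406668102400737280,
   2743103890840491199709018373066338191222975477135998384340208802213727554811792643870363617533765772890416834752828135558064196180246591435326597861449791134759444958258837996241445582184871386477113426676868516697350541817147737353466263726761957454778785907042269891291245555230307242448052753207918592,
   638678644365121739763742460249275567396715749751625776970470758997192195207324368951468312785743218649502907155735306043373183197143564749647714273826843275074371243522650096807876542460617609149115068390748232176525393402218636130683586148502016669169241294712515021126890739627269840881844224⟩,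
  ⟨1, 3, 5, 42,
   8229269816077826741046002602718546605852643849490247155283718436121259906584989229428905968291378235482586985646514255039729377644467596932069527320633168420959243102298202436336845264855964515243054295181163213777692485104584497007454618077448660635549348664509582138790120391024593522609862526359306240,
   638668899051110339730039268179849475955055857904048863612182863651057209176695843612953527549969381113676327061711686000771027383682715031758451816373544087676531837183878928697359309880052101888323079403160294072648215830624045876472469502974536824564414740995060821458029212233773025903771648,
   2743103890840491199709018373066338191222975477135998384340208802213727554811792643870369133270191049302489838605562231322131177493555333585947432986732952893891565394986622854351427403169053627037260446938812754273231526488161897779300671639115527240076357720597187853769126452739616504345570495399198720,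
   2743103890840491199709018373066338191222975477135998384340208802213727554811792643870369133270191049302489838605562231322131177493555333585947432986719545085961622797887048829353221557041574261216668053561089192829509762458088350802498797340948623812386325862410701462633005648989206471024529410329935872,
   638678644365121739763742460249275567396715749751625776970470758997168505299769966550279818085841580020107943331506170564624776511367151727207734133339986488437861963063354738727105095247214182671992518495977532704371505880804412489441651034124187068484267846227667965768217344542395481523748864⟩,
  ⟨1, 4, 5, 50,
   8229269816077826741046002602718546605852643726490845219200379135201973105444000024177959337868295362474742865564118132531709928658061000167982522720405269746700377894695558826694085064083577666509179528381032048201713762203349122838984448573991094543080147354045149374546686816629511048911089890586787840,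
   638668899051110339730039268171788341141584403339346413280815117579931494944154632474147196227670012827521115064377387916107359539190400211803453772663957461231920645483133517812260913522291251303073899261294949370478640941802332956364584699223960606804405535458971742179871863482878163018579968,
   2743103890840491199709018373066338191222975477137875292186313895746283296032669003322012906822627687975202709580872342323968499978484414044646750189687543409467344930753112337204319856083455117618339548369644234076699873614335624285347954201065167944446781033183096200014458235868786088100815288758435840,
   2743103890840491199709018373066338191222975477137875292186313895746283296032669003322012906822627687975202709580872342323968499978484414044646750189674135601537402333653538312206114009955975751797747154991920672632978109584261961516456842586702840945771740487088756879176038712492800060570373722327744512,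
   638678644365121739763742460241214309581965479896382850662323423913694363901668635891245828321329900784396958348367639600087610885846308092692572933092631402623225581643672904764409088886910256534760573437615338201704845521541736005381439645910643158667035454016810619209686447858433946271350784⟩,
  ⟨2, 3, 4, 28,
   8229269816077816995731993471727200135806228261388359362222208352397591902997056331864990594211598232119607026400349244205889048616963099308974095209484222302870221776646809960783757614771004049639835889952990434870590735742334556846939454222493618226152186717966820288059425994856431592341526082842787840,
   148701690847778306287867384628461510577828470497307191976750279256307539700768063216869376693633911204785749339755323915346673825243325799740466510996154562907902594133248041991963926994829918623550039648905731217436436245874434101187815203763612759345877055375137794377475891384025088,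
   2743103890840491199709018373066338191222975477137875292185876894084293901644893520513727064818064837098679804011918714246364069876578224840690974693592491245930086862784824571832600747882075804991302332661619514359519805756262294794405372269443320510285741171798213569863720635631388722815433038375157760,
   2743103890840491199709018373066338191222975477137875292185876894084293901644893520513727064818064837098679804011918714246364069876578224840690974693592491245930086862784824571832600747882075804991302332661619514359519805756262179002316134953247896939300732483890359959596688074128885783410073619767754752,
   148703959890135028310877887966356730157131120068307508440757460767095057010921937599870025817223008159029289185603814917605779595182923171786532486174617343573545040069016248729391811551009985246749009642594454966960902881065972536720302012998091624362007367228196923439896757958344704⟩,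
  ⟨2, 3, 5, 44,
   8229269816077816995731993471727200135806228261388359362222208352397591902997056331503511291760523684543377399917583016643306862827573583558381750716196696887297956882983655325945678360856190230696142218197297076274244153610890874173194415104624465429039021046117216022287768783063005262733396431171747840,
   148701690847778306287867384628461510577828470497307191976726589710221408277807415946842788214702379130549959901719144532442223584876407411701481091284369484417828596256493226412124586973303778931930157973017500205592142222715823825886872588197001859096023398677888885042439477608316928,
   2743103890840491199709018373066338191222975477137875292185876894084293901644893520513727064818066121331142225221594701975640427274284008896637319359467162683858169080961360791611702194179443578576291322396588180985371185153968159010652959627475964861673622789918546275137129410932918583095323343926067200,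
   2743103890840491199709018373066338191222975477137875292185876894084293901644893520513727064818066121331142225221594701975640427274284008896637319359453754875928226483861786766613496348051964212755698929018864619541649421123894612033851085329309061433983590931732059884001008607182508531327538189442220032,
   148703959890135028310877887966356730157131120068307508440733770859529623136885458540747221901711828265218889666356974473648547848883747479528261811199656225046889024218801616470220434334537647947945490930527972179153260921662417930061181093080791463182000389978831014534556120403410944⟩,
  ⟨2, 4, 5, 52,
   8229269816077816995731993471727200135806228138383326731240768687673552832895694155917494113819406772609123632168578879815647170047212983659809924887956073216570586476117045758781535749407357430379810999774899166882109035450963201600333190636305711209589987938521677837919684234416253863634039320126423040,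
   148701690847778306279806249814990056013126020165939445905600875477680197139001084624543419928547167133215661817055476687949908764921409367991894464839758292717083185371394830054363736388054598790064813270847925316770429302607939022136296370436992653559934319399731536291544614723125248,
   2743103890840491199709018373066338191222975477137875292186313895746283296032669003322018422559051680154813292223930450358759156312672407276984916259180463549398058147045929024487081605801427397986730840634194765181426605656741028401239007274218842955331840334482378275015710441973385302829375848521400320,
   2743103890840491199709018373066338191222975477137875292186313895746283296032669003322018422559051680154813292223930450358759156312672407276984916259167055741468115549946354999488875759673948032166138447256471203737704841626667365632347895659856515956656799788388038954177290918597399256852190212676124672,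
   148703959890135028302816630147852644610552010019027479691057876174723460854949309078151934720052118044643171808738444691424263607886006979209125786021177343672181107671270267768637341670869729334201832055725247198671464069680814852735122282419668631166960965434421647168392127173361664⟩,
  ⟨3, 4, 5, 56,
   8229269816077816995731991202684843413783217881055496773626093360862355870564338302012257121630717568664061874942926312235545049643781189966776633768347125835898825805071022105273634505272506902759130424793851169333958419649447682939883506150945596072676852414002689879931631381927665962222398855383613440,
   8061134813471454564702450331367746071173093324713473984727625862352545244018276145805876960736026610301215300688835433548296446394781976153961561813449068137823163702949487642236626079032862788989341579567416461381927240146504923549110620908257520932165189535531008,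
   2743103890840491199709018373066338191222975477137875292186313895746283296032669003322018422559052964387275713433606298851272940361931761369058392162188569851983785197351836261327027369465009126742701059514483871334936773744780392844939634590557602205518506538455718939591820796697480132570412220919316480,
   2743103890840491199709018373066338191222975477137875292186313895746283296032669003322018422559052964387275713433606298851272940361931761369058392162175162044053842600252262236328821523337529760922108666136760309891215009714706730076048522976195275206843465992361379278471034352383030641665363227015380992,
   8061257818504085547453113373258817525274240116519745511985362158032713856057378454776831215265713690746451433614591422265705789916368443103038649716057958945383309181148794141319241580640407646493493180931430715209949819448664904455487712576626737975032598363111424⟩]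

def gT2 : ℕ :=
  10972373706918308195441009575751181605006193235188339434829656593566748095142906158542469272662512796755657419764493648013547316904456312051520953711671881619905525862949222530076792648175903537367011849756990878911089653896549671948914434220330832857037556333014841052378388803612656521834191398520225792

def gT3 : ℕ :=
  8229269816077816995731991202684843413783217758050464142643342697820464800662755247521159785252439320830884261592335737278211896226241871959788050891859406029737511938303343704253645485005086088861646737924648147570543757816685464648116163830630089707064092605383771962456301830025808843078458224746168320

def gT4 : ℕ :=
  5486165925237325796022972829618505750854773416577835231435717643733865408154265599636836630849989893907255635547006447859683390553433874330874055579681682445700852129122799925764483061208417175923073462605712166016901459881000110621963331465497133731888473904895399974948039562139400209812912192480083968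

def vT0 : ℕ :=
  2743062035035513240827780156206044519889359001323035768325102880382507928174878248954206010968309429392320386279274714497570218701519031653462508895399767232737774936535805319343588217890554164094624903156065345095154454049922083842148178595712369403440903050747222893918027543402797130671443194870300672

def vT1 : ℕ :=
  2743103890201812555343896633302595730981761167555909812289931045083959872118998329327904189068995630765847451278604513182278247635384649408302286821075660923656743875562971531082406768911958939523615542393295451702504207508858877614844649765347044740557644431044030941826279851088542217803350768281976832

def vT2 : ℕ :=
  2743103890840491199560314413176203162920158846990022647575761885727255816341634817054860395578140134368246582629065569555584028095109802067400663444868067157401675924750653143619422065441042321378671041786287358015371177739649284169497027847766401971839538374303712661557079858104587383827751370491953152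

def vT3 : ℕ :=
  2743103890840491199709018373066338191214914219319371206638860782373024478507418453113064110921106649753290645912412006130477936787101241252225427425155695319516550021467276517868456050723418087713865512036586505515274104390812852609076253369193304609833825678049453506882060039407464998394676779566497792

def vT4 : ℕ :=
  2743103890840491199709018373066338191222975477137875292186313895746283296032645313414452988685013916863228067098743213117291112721496567795144905465580037550915464178814891864993922790514917075236327641175467592553721677223337938105834948778542585774588493940980010352146224948920855233740700784443523072

def vT5 : ℕ :=
  2743103890840491199709018373066338191222975477137875292186313895746283296032669003322018422559052964387275713433606368469654227036154980125014838340420753963072556091893925165213660202874799216297966923929070390558887723515349550742762436998039659270007214780693188551978277137172456006077140610299461632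

inductive DTree where
  | l (c : ℕ) : DTree
  | p (c : ℕ) : DTree
  | n (a b : DTree) : DTree

/-- Leaf check: decode the header and start `go`. -/
def leafCk (am bm c : ℕ) : Bool :=
  go am bm (c % 32)
    (2 * (c / 32 % 256) + 3 * (c / 8192 % 256) +
        4 * (18 * (c % 32) - c / 32 % 256 - c / 8192 % 256) +
      (c / 2097152 % 128 + c / 268435456 % 128 + c / 34359738368 % 128 +
        c / 4398046511104 % 128 + c / 562949953421312 % 128 + c / 72057594037927936 % 128))
    rows (c / 9223372036854775808)
    ((c / 2097152 % 128) * vT0 + (c / 268435456 % 128) * vT1 + (c / 34359738368 % 128) * vT2 +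
      (c / 4398046511104 % 128) * vT3 + (c / 562949953421312 % 128) * vT4 +
      (c / 72057594037927936 % 128) * vT5)
    ((c / 32 % 256) * gT2 + (c / 8192 % 256) * gT3 +
      (18 * (c % 32) - c / 32 % 256 - c / 8192 % 256) * gT4)
    0
    (4 * (c / 32 % 256 + c / 8192 % 256 + (18 * (c % 32) - c / 32 % 256 - c / 8192 % 256)) +
      (c / 2097152 % 128 + c / 268435456 % 128 + c / 34359738368 % 128 +
        c / 4398046511104 % 128 + c / 562949953421312 % 128 + c / 72057594037927936 % 128))
  && (Nat.ble (c / 32 % 256 + c / 8192 % 256) (18 * (c % 32)) && Nat.ble 1 (c % 32))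

/-- Image of a voter under the permutation with octal code `c`. -/
def im (c i : ℕ) : ℕ := c / 8 ^ i % 8

def permOk (c : ℕ) : Bool :=
  Nat.blt (im c 0) 6 && Nat.blt (im c 1) 6 && Nat.blt (im c 2) 6 && Nat.blt (im c 3) 6 &&
  Nat.blt (im c 4) 6 && Nat.blt (im c 5) 6 &&
  Nat.beq (2 ^ im c 0 ||| 2 ^ im c 1 ||| 2 ^ im c 2 ||| 2 ^ im c 3 ||| 2 ^ im c 4 ||| 2 ^ im c 5) 63

/-- Lexicographic comparison of the permuted pattern with the pattern. -/
def pr (am bm c : ℕ) : List Row → Bool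
  | [] => false
  | w :: ws =>
    bif Nat.testBit am (2 ^ im c w.i.val + 2 ^ im c w.j.val + 2 ^ im c w.k.val) then
      bif Nat.testBit am w.key then pr am bm c ws else Nat.testBit bm w.key
    else
      Nat.testBit bm (2 ^ im c w.i.val + 2 ^ im c w.j.val + 2 ^ im c w.k.val) &&
        (Nat.testBit bm w.key && pr am bm c ws)

def ck : DTree → List Row → ℕ → ℕ → Bool
  | .l c, _, am, bm => leafCk am bm c
  | .p c, _, am, bm => permOk c && pr am bm c rows
  | .n _ _, [], _, _ => false
  | .n a b, w :: ws, am, bm =>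
      ck a ws (am ||| 2 ^ w.key) bm && ck b ws am (bm ||| 2 ^ w.key)

def tr0 : DTree := .n (.n (.n (.n (.n (.n (.n (.n (.l 11984324855245318176214575665329135711338847860392771)
 (.n (.l 340614673919884692431963666350275265347)
 (.l 374510508189890225769634767526532539029908449567202)))
 (.n (.p 178312)
 (.n (.n (.p 181840)
 (.l 81844117130380627949467968826428530213213478643561))
 (.n (.l 35087457278504164816699717663336949135114898776739)
 (.l 397551649279385339863372651941283816680908254273954)))))
 (.n (.p 153224)
 (.n (.p 178312)
 (.n (.p 181840)
 (.n (.p 153224)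
 (.l 1157543550710700064639057503444218777515837282902499))))))
 (.n (.n (.p 181448)
 (.n (.p 178312)
 (.n (.n (.p 181840)
 (.n (.p 178312)
 (.n (.p 181448)
 (.l 377184014286036162522466401572625134690333139491))))
 (.n (.n (.l 365375410013633154985461433729665539968038257090)
 (.l 376793740004756868073860536949158646551842840994))
 (.n (.p 178312)
 (.l 36183973769544344366035448058814598529328953500067))))))
 (.n (.n (.n (.p 181840)
 (.n (.p 152776)
 (.l 35110293251456012276283963117220073311276403786435)))
 (.n (.p 181840)
 (.n (.p 152776)
 (.l 23407230482012050349335123023925908148639561367874))))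
 (.n (.p 178312)
 (.n (.p 181840)
 (.n (.p 181840)
 (.l 1157543908219862828640214952478380975115312638009763)))))))
 (.n (.p 153224)
 (.n (.p 181448)
 (.n (.p 153224)
 (.n (.n (.p 181840)
 (.n (.p 153224)
 (.l 23406862868516334511981492061516684582279587274978)))
 (.n (.p 181840)
 (.n (.p 153224)
 (.l 58884371678332750457238619984766138543955692298757))))))))
 (.n (.p 178312)
 (.n (.p 153224)
 (.n (.p 181448)
 (.n (.p 153224)
 (.n (.p 178312)
 (.n (.p 181840)
 (.n (.p 153224)
 (.l 1965811414068612445918729939280034314975895612277320)))))))))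
 (.n (.n (.n (.n (.n (.n (.p 181889)
 (.n (.n (.l 374144419156711147060143317184813403859290266083617)
 (.l 1158640780825585558708962056017155589651274769097443))
 (.l 26215687818337168013231750504814292647853334163096966)))
 (.n (.n (.n (.p 181840)
 (.l 772415401273219616029496289376089976064983351607746))
 (.l 748654581695939831671107975387522552862467808239970))
 (.n (.n (.p 181840)
 (.l 1157510401731998156945495814717534221821144226660803))
 (.n (.l 24114799328274697480814402691718842779709785448802)
 (.l 1157544622224485119375423024686343202592972641477027)))))
 (.n (.p 153224)
 (.n (.n (.p 181840)
 (.l 50556264674092407403905561757489545711505224053245063))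
 (.n (.p 181840)
 (.n (.p 153224)
 (.l 1158617209994169111998380555440439277795245050650979))))))
 (.n (.n (.p 181448)
 (.n (.n (.n (.p 181840)
 (.l 11704144725834584563866754160035840141668632445250))
 (.l 23957688425910600913535985967478738521207099231527202))
 (.n (.n (.p 181840)
 (.l 772050751716833512419506235013392448059818601955715))
 (.n (.l 1157908960639308226956295089476942657261686090949091)
 (.l 1158275373033303671259974751772394053762385847869795)))))
 (.n (.n (.n (.p 181840)
 (.l 23969724048912353637665632050809828287137057048142371))
 (.n (.p 181840)
 (.l 37041393656924128041270657020463434637497080849187203)))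
 (.n (.n (.p 181840)
 (.l 1146583359585196405527322423863514042279951279145347))
 (.n (.p 181840)
 (.l 37075407801275602906639153626008391146393242878435683))))))
 (.n (.p 153224)
 (.n (.p 181448)
 (.n (.p 153224)
 (.n (.n (.p 181840)
 (.l 36701960938616548270970047303132391383040141029654787))
 (.n (.p 181840)
 (.l 37076505009439202548797678842625856561609344796737667)))))))
 (.n (.n (.n (.n (.n (.l 11984324855245318176214575665329135783963824257925634)
 (.n (.n (.l 433026949966988227913083964689358998296920838219173)
 (.n (.l 730751537682757377052611692720001256480259097026)
 (.l 368311085534156243016103288809103471096717537)))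
 (.n (.p 153224)
 (.l 35111364732934492112908616158075251680069825077923))))
 (.n (.n (.n (.p 181840)
 (.l 70199534577729618151043198003197730311573997110470))
 (.l 374510519351152525390414261583156114708699589828994))
 (.n (.n (.p 181840)
 (.n (.p 181840)
 (.l 12057756829965152796859416645999612626820900429985)))
 (.n (.l 36206453280073516110252099026563955131206416515587)
 (.l 35111007943481250926721569276938750448973210009987)))))
 (.n (.p 153224)
 (.n (.n (.p 181840)
 (.n (.p 153224)
 (.l 1157543919718376160557319919116536653239829242634723)))
 (.n (.p 181840)
 (.n (.p 153224)
 (.l 3894320978273282292364397127976439986488242588829197))))))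
 (.n (.n (.p 181448)
 (.n (.n (.n (.p 181840)
 (.l 23407932628846281533952084050496987576524310233668))
 (.n (.l 1070785240517867748561037934490531161683853763)
 (.l 35111363676676758191420174230647102014287903998435)))
 (.n (.n (.p 181840)
 (.n (.p 181840)
 (.l 23761555883690084140693945443506950727488336281794)))
 (.l 124302647466669025983664193027102641881831893705656301))))
 (.n (.n (.l 23968649710513116942326088261814921245147917090964164)
 (.n (.p 181840)
 (.l 61736023589783240008418141391335451238803384776221222)))
 (.n (.n (.p 181840)
 (.l 50136484701285950275052968170843087728300672233882406))
 (.n (.p 181840)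
 (.l 37076470744691643936945466323517819485039963645731203))))))
 (.n (.p 153224)
 (.n (.p 181448)
 (.n (.p 153224)
 (.n (.n (.p 181840)
 (.l 1123530488663065386485915772376898565319154492317987))
 (.n (.p 181840)
 (.l 111229412256397441456263005378363135510124957912932905)))))))))
 (.n (.p 178312)
 (.n (.n (.n (.n (.n (.p 181889)
 (.n (.p 178312)
 (.n (.n (.p 181840)
 (.n (.p 178312)
 (.l 12069174811495834679919328488113515644685071286337)))
 (.n (.l 398259218495534597915506812253636522487433272713506)
 (.l 1157544655676622768030901348065794289721239184752771)))))
 (.n (.n (.p 153217)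
 (.n (.p 181840)
 (.n (.p 153217)
 (.l 771696437095630158150246213882015449983160575820034))))
 (.n (.p 178312)
 (.n (.p 181840)
 (.n (.p 181840)
 (.l 1157544655675942224045647583025059408184933026775171))))))
 (.n (.n (.n (.p 181441)
 (.n (.n (.l 374509794914843933042282511017428660051725596590273)
 (.l 1157887183939183828650374341718798961519195513536771))
 (.l 12358834650160162109256858176034887966776579451904097)))
 (.n (.p 178312)
 (.n (.n (.p 181840)
 (.n (.p 178312)
 (.l 12069174811506468503885607815105969473238799097889)))
 (.l 98868850324321746569798240280008648852981140887175688))))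
 (.n (.n (.n (.p 181840)
 (.l 37076138552802735228012947151512279429373947281744291))
 (.n (.p 181840)
 (.l 37075407801984069776908787467507308573971278572421315)))
 (.n (.p 178312)
 (.n (.p 181840)
 (.l 12358469274761718429653370693251627051586957860806689))))))
 (.n (.n (.n (.n (.p 152769)
 (.n (.n (.l 397539863335909456079584539975047776478224156107202)
 (.l 35842126342623397917940334298157070373624670904739))
 (.n (.p 152769)
 (.l 397917025397185611479772111103763041412175733440706))))
 (.n (.n (.n (.p 181840)
 (.n (.l 11692024249371071433662679757488305563126902915265)
 (.l 12068817651134148276416248876632305393869124649089)))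
 (.l 74082788739702107684112272870842562613449359478072294))
 (.n (.n (.p 181840)
 (.n (.p 181840)
 (.l 12069174811506468503885607815096746101201944313921)))
 (.n (.l 2315065404899981427455605373929619111136284696519334)
 (.l 1157544655676622788780440207572973662610824406384771)))))
 (.n (.n (.n (.p 181840)
 (.n (.l 1157543584173727735867137763177068171221229105365475)
 (.l 1157544297808463124264030088639425873418931541491971)))
 (.n (.p 181840)
 (.n (.l 70951406327503071106125362361660521576119289979494)
 (.l 1157909674273724268651718323695927366700255527960771))))
 (.n (.n (.p 181840)
 (.l 37040663976889659330737386040385081900419515653931267))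
 (.n (.p 181840)
 (.n (.p 181840)
 (.l 771696437117759498910401078504222676711942272598082))))))
 (.n (.n (.n (.p 88257)
 (.n (.n (.l 34266141057440693300848757629627536153499738531)
 (.l 36584641501991828274618693542568654000487685161220))
 (.n (.l 748677072705621423339480481953845392323168251912418)
 (.l 410351932440847319481591978586293001544527262392419))))
 (.n (.n (.n (.p 181840)
 (.n (.l 11692381061293926000910802821842168094100683858081)
 (.l 11703799053724599046986700562085858814786493612097)))
 (.l 74152952951990137690493981859752735731029082777436870))
 (.n (.n (.p 181840)
 (.n (.p 181840)
 (.l 23772974213680211278220294422014420880176531619938)))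
 (.l 37076493602967381327170439736638504512649671710498915))))
 (.n (.n (.n (.p 181840)
 (.l 37041428268029134941427783449623997644958819309412643))
 (.n (.p 181840)
 (.l 37076504307325076611454530961278152754488144132726883)))
 (.n (.n (.p 181840)
 (.l 37076504296174704012189218790883087087636635051221187))
 (.n (.p 181840)
 (.l 37076504307325076611484953956732500299555712258138243)))))))
 (.n (.p 178312)
 (.n (.n (.n (.n (.n (.n (.l 34253966753930710973316637647293621244266824323)
 (.n (.p 178312)
 (.l 376815691959854306163903177171443351268494639362)))
 (.n (.n (.l 376793391214655775520654796961004325591937360290)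
 (.l 36184319778532824615208570796082881769600163553763))
 (.l 1929239987490207892886438920829854776029555471188677)))
 (.n (.n (.l 844933424442198497479499030303953215377757718570)
 (.l 397551995638535362270423924705891221206340653539490))
 (.n (.l 783399522874309460721547756741323831819981396697507)
 (.l 1157544276553098254687861633140301305673363073925315))))
 (.n (.p 178312)
 (.n (.n (.p 181840)
 (.n (.p 178312)
 (.l 12069174811506468503885607815096746101202210668545)))
 (.n (.l 1929228961156360367974490047268648971463784531452549)
 (.l 1157544655676654669503136905737429533035385315565571)))))
 (.n (.n (.n (.p 181840)
 (.n (.n (.l 730773120091214723567189726010860480007378272514)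
 (.l 36184320128013449591487302238064350433169495146755))
 (.l 1157543584184616770979220209111571619743095117447363)))
 (.n (.p 181840)
 (.n (.l 70951406327503071106759187652329903324321956004102)
 (.l 1157909317462141042231811565343543506526178818482435))))
 (.n (.p 178312)
 (.n (.p 181840)
 (.n (.p 181840)
 (.l 1158640781556203702964095050435032838912364840878179))))))
 (.n (.n (.n (.n (.n (.l 783399132250897828472368741041991903150414846231235)
 (.n (.p 178312)
 (.l 742883143091361404626128259428754047228405080226)))
 (.n (.l 1157543584195505806375571435575234758948177496564195)
 (.l 1544123601359620700722455296742452443765602290950660)))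
 (.n (.n (.l 771707130652114462888069584049247313606927655895651)
 (.l 1906222430801634315428772859004793828971123579552357))
 (.n (.l 1158640425092697767745570378186130262394684712477059)
 (.l 772061790226346673043283992094945314873727441453122))))
 (.n (.p 178312)
 (.n (.n (.p 181840)
 (.n (.p 178312)
 (.l 36207524434519405511022998145176194525928649818115)))
 (.n (.l 1158640781904620944884577440598911134074969086296323)
 (.l 772061812527102505397873103472637068141340955795458)))))
 (.n (.n (.n (.p 181840)
 (.n (.l 1157543584892435995301552227386362678303493777031651)
 (.l 772061801376708638149969544418381555857824908853314)))
 (.n (.p 181840)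
 (.n (.l 1158640781904620944864295649946389497407266579874051)
 (.l 1158640759603875746668331957385923332350833427120195))))
 (.n (.p 178312)
 (.n (.p 181840)
 (.n (.p 181840)
 (.l 1158640770754248345943784732955894299927934434426883))))))))))

def tr1 : DTree := .n (.n (.n (.n (.p 181889)
 (.n (.p 181889)
 (.n (.n (.n (.n (.p 180762)
 (.n (.p 178312)
 (.l 1131127247587946000265951588394806761794878857827)))
 (.n (.p 152776)
 (.n (.p 178312)
 (.l 24503724683195361930700671967456006968569023971971))))
 (.n (.n (.p 180762)
 (.n (.p 176674)
 (.l 12446336501886494510659533889782685765453618577666)))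
 (.n (.p 152776)
 (.l 1942771401257083865777198225634844626359989339571014))))
 (.n (.p 178312)
 (.n (.n (.p 180762)
 (.n (.p 178312)
 (.l 48653860957132250337152028528024117555163359109605)))
 (.n (.l 3113847067162783536220972008920994371296783535949322)
 (.l 1544854364721095568008691105410317271214732230508868)))))))
 (.n (.n (.n (.p 152776)
 (.l 766998619512252203106574609577474826905768118019449963))
 (.n (.p 152776)
 (.n (.n (.l 1134490647045239920994461275914193994377856475816291)
 (.n (.n (.l 11703431439527393184791529195487238872413144997985)
 (.l 377150562476354425911193568301305434959442477121))
 (.l 748312399769401586044476872911922840101347328753858)))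
 (.n (.l 772038597450649676967324151240999564405115118149794)
 (.l 37075762852136775108408880499074024103148081442586819)))))
 (.n (.n (.p 152776)
 (.p 152776))
 (.n (.p 152776)
 (.n (.n (.n (.l 818509783762509767411384399477281982395952294077254)
 (.n (.l 742169170434667424634659642026546633256967856290)
 (.l 12057756829614246990565925898846203828512749649985)))
 (.n (.p 152776)
 (.l 433028791575159718788739429067546855658928009281733)))
 (.n (.n (.l 3089340432613458624431596802061224879318933091222376)
 (.l 1158640781555151649155253282479634341505241547415715))
 (.n (.p 152776)
 (.l 1158640781892712089448129883504540078776400679887107))))))))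
 (.n (.p 178312)
 (.n (.n (.n (.p 152776)
 (.l 12271938777003028595673831374360290422911026952164491525))
 (.n (.p 152776)
 (.n (.p 178312)
 (.l 1186074016251207803864664129137547686998744932337213539))))
 (.n (.n (.p 152776)
 (.p 152776))
 (.n (.p 152776)
 (.n (.p 178312)
 (.l 4745792642680739383002573327093667500632214822031262220)))))))
 (.n (.n (.n (.p 181889)
 (.n (.p 181889)
 (.n (.n (.p 181889)
 (.n (.n (.p 180762)
 (.n (.p 176674)
 (.n (.l 11786292286899792889097586017052665553621221441)
 (.l 377161701630259356557406443310393446019664846881))))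
 (.n (.p 152776)
 (.l 1158640781903952011220218163780439019184871346405539))))
 (.n (.n (.n (.p 180762)
 (.n (.p 178305)
 (.l 24138348925413492149590510327966879647796149092482)))
 (.n (.l 48253505424948891724575005883538585479288300421572)
 (.l 36207523388120233042567295677134903292155727798531)))
 (.n (.n (.p 180762)
 (.n (.p 176674)
 (.l 36207524433499565685140560329605423529595941314563)))
 (.n (.l 1158640781892711415453220443776907127501865370419267)
 (.l 784496362746911246750648330150723208750864238215299)))))))
 (.n (.n (.n (.p 152776)
 (.l 63984390863379749882073799730422333617783569241454010855))
 (.n (.p 152776)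
 (.n (.n (.l 1157544265064112799808409542593535612696650372743363)
 (.l 37075374640427479534333630073083283965705289705332899))
 (.n (.l 12358469263610995236109752842003392032533398172065857)
 (.l 37076105391593913575191124035468355558883526999195651)))))
 (.n (.n (.p 152776)
 (.p 152776))
 (.n (.p 152776)
 (.n (.n (.n (.l 1158639678016713767743202102848285273957112907972739)
 (.l 760369799079315625130297418609159248579565648592994))
 (.l 49434951816209629827111555646111391287927913583280132))
 (.n (.n (.l 1158639678016713767744182551359399512996465254760451)
 (.l 2317281563110303964872903547098445728817573607964838))
 (.l 74153010041895742487915690228708650964332518985973766)))))))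
 (.n (.n (.n (.n (.n (.p 120961)
 (.p 120961))
 (.n (.p 120961)
 (.p 120961)))
 (.n (.n (.p 120961)
 (.n (.n (.n (.p 176674)
 (.l 12069163301785387928577133175703532330627853549697))
 (.l 36196094953103266266674048102103782316223102337155))
 (.n (.n (.p 117377)
 (.l 12069174811495834679919328488122524532824302829569))
 (.l 397917382219997823732119047374544714673331783327810))))
 (.n (.p 120961)
 (.n (.n (.l 24115156498855488401871296662928184558258336522434)
 (.l 386202175986325383676583537305645238454020779163649))
 (.l 25103883607933114537394338303412097857308970797408291)))))
 (.n (.n (.p 152776)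
 (.n (.p 177409)
 (.n (.n (.l 422419657702556082575526971350272368576434797043876)
 (.n (.l 11692381420281511211090939930467455585852261023745)
 (.l 12069174811166518433515711134052032633799471931393)))
 (.l 37076505020947903114264875810129899568827651536019619))))
 (.n (.n (.n (.n (.l 46813724364312957600803416958584915677692708831877)
 (.n (.l 12058135582944765458892533715359545700552041398595)
 (.l 12068817650783574787263199000238211488146432065601)))
 (.n (.p 152776)
 (.l 1181317628146346928452393477156027325860595401941669)))
 (.n (.n (.n (.l 742169518883790382181503386961389840405448892514)
 (.n (.p 152776)
 (.l 753955462721546458814237909810318470274026234050)))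
 (.n (.l 36172913666030498580314372650555110438512529670211)
 (.n (.l 365743720088611667357831833423757920256831619169)
 (.l 377161712519295098027437274138380888234560430145))))
 (.n (.p 152776)
 (.l 1158640781903952031989405597919749532748339116138499))))
 (.n (.n (.n (.l 795422288461667187315317673588111567074279993795076)
 (.n (.l 24481256344848056285952967581838869552057410683235)
 (.l 24515510289483633136606556729390907207274346111235)))
 (.n (.l 783765611231336853275674640659249903595545577169187)
 (.l 1158640781903601115799151305988616399302770435710979)))
 (.n (.n (.n (.l 36172177382100434300432377721702492028992728883555)
 (.l 1120066807567093858202142020595582611259037999107))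
 (.n (.l 36173270488842710812735116564284918135134867562499)
 (.l 36207524433499555311638467460002928662143434088451)))
 (.n (.l 1158640781184924756872290254010833234813952253550787)
 (.l 1158640781903601115809639104987812982228154757513251)))))))
 (.n (.n (.n (.p 152776)
 (.l 62510238810693597555596649894014947247032926140430434565))
 (.n (.p 152776)
 (.n (.n (.l 12358469274761367835050545868774491045508858209501249)
 (.l 74127799138651794994437060080522781901124199791657318))
 (.n (.l 37075408894371423891868063045129763587315432650342467)
 (.l 37076505020947881846617864278855421121017952040509475)))))
 (.n (.n (.p 152776)
 (.p 152776))
 (.n (.p 152776)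
 (.n (.n (.l 74153010040850394994385469613798435773031725642088582)
 (.l 74141306610467104421200121028332892012915954327101798))
 (.n (.n (.l 1158640781544262583234518093731466351695776127975587)
 (.l 1158640781903611064219986540698470340908667367718915))
 (.l 111229435136973162386964931286849669058808066002231305))))))))

def tr2 : DTree := .n (.n (.p 181448)
 (.n (.p 178312)
 (.n (.n (.n (.p 181889)
 (.n (.n (.p 181448)
 (.n (.p 178312)
 (.n (.n (.l 1158639678016744672324557426192612046141046728835203)
 (.n (.p 178312)
 (.n (.p 181448)
 (.l 377161712859245157949439180040157955544114634817))))
 (.n (.l 1158640068279785646610462403077744444898269414735875)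
 (.l 1158640781904312574708839154830698325130768831389731)))))
 (.n (.n (.n (.n (.l 375274810479738769027131192825849043685784806539747)
 (.n (.p 178312)
 (.l 11703799042495280938586137232489963010449414946881)))
 (.l 49809850155570415923184513674895290365703392575677029))
 (.n (.n (.l 1158639677984077565100137740581257724727501550559651)
 (.n (.l 11692381409402776986578338677349412978158106452001)
 (.l 12069174800277482702186885105049880407956246347841)))
 (.l 37076493602933693362460703760401983386321076259012739)))
 (.n (.p 178312)
 (.n (.n (.n (.p 180762)
 (.l 11703442589910283917136474753904574722221359120385))
 (.n (.p 178312)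
 (.l 12069174811166528828250642676930458460558123450401)))
 (.l 37076505020948242410115676346074514966784121191686147))))))
 (.n (.n (.p 181448)
 (.n (.n (.p 153217)
 (.n (.n (.n (.l 24845529261089033041061634513864782968098935661348)
 (.l 36206420514284406256185924740002496163697161240899))
 (.n (.l 754312263755022907040605194014870384244894695682)
 (.l 24138349611783618888922747854047889164391132930210)))
 (.n (.p 153217)
 (.l 2317281563774596891896441716819076688920811676631270))))
 (.n (.n (.n (.n (.l 24114788885009188984528827570368738874194982519138)
 (.l 12069163660782953037545614464409758347252365115489))
 (.l 434456026375607197661811608604335511424864681984613))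
 (.n (.l 386213593619417555635959525492548234557127057866817)
 (.l 36207512238427191226413067978674629321968836829283)))
 (.n (.n (.n (.l 24114777386187114009378955324313334434245336318242)
 (.l 12068817999232375822711212812554606147465897943137))
 (.l 1158640781903600098089031217756415504555564983533699))
 (.n (.l 1158640424743259679353406377068508520766635956904067)
 (.l 1158640781903610763066778648292364506199423248113667))))))
 (.n (.p 181448)
 (.n (.p 181448)
 (.n (.n (.n (.n (.l 35076776298579662398439677545492645646060608676067)
 (.l 11703442589910283917126580602756098268165153374209))
 (.n (.l 12057756481175394720427012217515199641153022574657)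
 (.l 12069174462717052794210400376466035399730628001793)))
 (.l 37076505020251003829899928328565734844698271001518083))
 (.n (.n (.n (.l 11692024608368636238078104643889093858101548949537)
 (.l 11703442589910283917126570931358765281720785838081))
 (.n (.l 12069174811166186136657660222194967899896344092673)
 (.l 12069174811166196521251386962961634535761451810817)))
 (.n (.l 1158640424394810556405377426258111258331364737826819)
 (.l 1158640781903632030744185011856095131834663127310371))))))))
 (.n (.p 178312)
 (.n (.n (.p 181448)
 (.n (.n (.p 144705)
 (.n (.n (.n (.l 1130381239759257687700346347191115931063740080547)
 (.l 36206788487469217763395908031508515945361254506723))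
 (.n (.l 754323414127642941856213266231684786918470729794)
 (.l 24138349611783618888922747854047889164356773150882)))
 (.n (.n (.l 754323403259874848318431604360408407278312685794)
 (.l 36207524412060769273959578407989281814102650814467))
 (.l 2317281563774596891906582921620616599630600928583718))))
 (.n (.p 178312)
 (.n (.n (.n (.l 36207524074128476475695344156752032305963954635203)
 (.l 36207524433487924585986894930884630275686905725219))
 (.n (.p 178312)
 (.l 36207524433498558410586999529647848039070547959811)))
 (.n (.l 1158640781555182855853527749962427069497565946118371)
 (.l 1158640781555182855854161575234225359433421702938627))))))
 (.n (.p 181448)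
 (.n (.p 181448)
 (.n (.p 178312)
 (.n (.n (.n (.l 12069174811166186136647757013547577860412797993025)
 (.l 12069174811166186136657660533576008422699844091937))
 (.n (.p 178312)
 (.l 24138349622332372273315320755770976890046998896642)))
 (.n (.l 1158640781206733712136320959048033050062707084369923)
 (.l 1158640781555182855863362255100649075548454050398275)))))))))))
 (.n (tr1)
 (.n (.p 178312)
 (.n (.n (.n (.p 181889)
 (.n (.p 181889)
 (.n (.p 181889)
 (.n (.p 178312)
 (.n (.n (.p 180762)
 (.n (.p 178312)
 (.l 12069174811166528828250642676930458460558123450369)))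
 (.n (.l 1158629363922090372680541900072551567878386786656259)
 (.l 1158640781903632996511400409200986916628283884167171)))))))
 (.n (.n (.n (.p 153217)
 (.p 153217))
 (.n (.p 153217)
 (.n (.p 153217)
 (.n (.n (.p 180762)
 (.l 1158640781903600773087622828219035778817127939948643))
 (.l 37076505020947871223168380232038651963398636240789507)))))
 (.n (.n (.p 181441)
 (.n (.p 181441)
 (.n (.n (.n (.p 180762)
 (.l 23407241991743744324243214079301512385540187701346))
 (.l 1158640781903633027666131689382908395518174389649539))
 (.l 74153008971460035390642231139629043705760484558553158))))
 (.n (.n (.p 152769)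
 (.n (.n (.n (.p 180762)
 (.l 36206799626942147483552650422994267702734197375267))
 (.l 1158640781870965556980605679778761620562172682059779))
 (.n (.p 152769)
 (.l 1158640781882535500147836456800793955604179490045955))))
 (.n (.n (.n (.n (.p 180762)
 (.l 35476059294077832692852675994668746558932041154691))
 (.n (.l 24126930944232729881865360489713843784800885022722)
 (.l 35842148327268240994119468752892362732565155905539)))
 (.n (.l 1158640781555513501307001352307510593131616426926083)
 (.l 1158640781207074015272400578539319724526094793424899)))
 (.n (.n (.n (.p 180762)
 (.l 36206799659609254707645830265421244160419761053699))
 (.n (.l 12069174811166186136974573174483480716877500628993)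
 (.l 12069174811166196521568609098028513794154039451649)))
 (.l 37076505020947903135045155196702353531391579177426979)))))))
 (.n (.p 178312)
 (.n (.n (.n (.n (.p 88257)
 (.p 88257))
 (.n (.p 178312)
 (.n (.l 111229515007091747651018422230748000541844342968435209)
 (.l 37076504664135947371040606181096742184796489972580355))))
 (.n (.n (.p 144705)
 (.n (.n (.l 1158640391618781726994230144404625540177169264033923)
 (.l 3475922345678135273047859833126617673913820230336521))
 (.n (.l 1158640781903601105394592382108457833947690376192131)
 (.l 1158640781903952010876367938468854541122816256065603))))
 (.n (.p 178312)
 (.n (.n (.n (.l 12057388867318128544008330249270827356899235733537)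
 (.l 12069174811155884619997336565303635241232905666561))
 (.l 1158640781903600108483756237042620029280711237558275))
 (.n (.l 1158640781903973278848837929395476321785749443051523)
 (.l 1158640781904642555559732975665428533811169401856003))))))
 (.n (.n (.n (.p 88257)
 (.p 88257))
 (.n (.p 178312)
 (.n (.n (.n (.l 11703799401833460407423651975749070302795400331297)
 (.l 11703799401822826583457682133480513844788527751169))
 (.l 1498086323476920439405002936928720835359969143914500))
 (.n (.l 1158640781903951014309391940671642917166864916635651)
 (.l 1158640781904652846691166076429764975190440268849155)))))
 (.n (.n (.n (.n (.n (.l 11703787892112047514965441337191684792887619428513)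
 (.l 23407598782229131353691125836895780395080715772130))
 (.n (.p 178312)
 (.l 24138349611443678889095745414213725653107164315650)))
 (.n (.n (.l 12069174463046701327014260685251177755744290300033)
 (.l 12069174463047023249419489844564147205068608856161))
 (.n (.p 178312)
 (.l 36207524412741998611687882575615526462694887784675))))
 (.n (.n (.n (.l 48275628776196205043009824145838785194903791313348)
 (.l 23407598782207864050876124241488666423370988052642))
 (.n (.l 36207524433466656918713688935676264250878401495171)
 (.l 12069174811166186136657969707204789807983475400737)))
 (.n (.n (.l 36207524433477623049678924163015904582961170096131)
 (.l 24138349622662353113742058442785131908180419518466))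
 (.l 1158640781903621365767377516319218815731875793174531))))
 (.n (.p 178312)
 (.n (.n (.n (.l 12069174811166186136964669663604635210786973786145)
 (.l 36207524433466656939014997392743198118489604022339))
 (.n (.p 178312)
 (.l 24138349622332372273632543192774163146917795815426)))
 (.n (.l 2317281563807210830062875992942867494240903567695878)
 (.l 1544854375872530179889234994871994014156018848022532)))))))))))

def tr3 : DTree := .n (.n (.n (.n (.p 181889)
 (.n (.p 181889)
 (.n (.n (.n (.p 181840)
 (.n (.p 152643)
 (.n (.p 178312)
 (.l 36207490612122339040730351824809713745648050028995))))
 (.n (.p 181840)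
 (.n (.p 152643)
 (.n (.l 12434896230488684377444841013360824708557233660162)
 (.l 36196073000808239213985154992679696660670076739875)))))
 (.n (.p 178312)
 (.n (.p 181840)
 (.n (.p 181840)
 (.n (.p 178312)
 (.l 72414981964763576709897564659153968290738259837286))))))))
 (.n (.n (.n (.p 181441)
 (.n (.n (.l 374510151432413941446612103160642641321252971184581)
 (.l 749019589513205024930799664295147064239472995836195))
 (.l 1186447759937123670005956183922429402063121575569670275)))
 (.n (.n (.n (.p 181840)
 (.n (.p 151761)
 (.l 760004400998999851187773055456442542916730261586114)))
 (.n (.p 181840)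
 (.n (.p 152643)
 (.l 36207524433807966376715751810376912528092359467043))))
 (.n (.n (.p 181840)
 (.n (.p 181840)
 (.l 374521569718847219443652125938633109516736880844833)))
 (.n (.p 181840)
 (.l 49434928958294250476626011598592791953283107133104228)))))
 (.n (.n (.p 181441)
 (.n (.n (.n (.p 181840)
 (.n (.l 356811923519181572841364372727712797048307777)
 (.l 23407587653273738939987557197619052562427905597474)))
 (.n (.l 12080224481952965557952516275845436016680308539618)
 (.l 36207523736569396554790913041090284696896073506979)))
 (.n (.n (.p 181840)
 (.l 1123564709156881940048870510405159223679919898132547))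
 (.n (.l 1123563638373003549217888311052412964356707515236547)
 (.l 1135256722256230996424360175025832716715404716056611)))))
 (.n (.n (.n (.p 181840)
 (.n (.p 152643)
 (.n (.l 23772951890455794245151766982272209026826910236930)
 (.l 754323425017342647980349540077070743562231234626))))
 (.n (.p 181840)
 (.n (.p 152643)
 (.l 72414981966401185286646020758611792524718679867462))))
 (.n (.n (.p 181840)
 (.n (.p 181840)
 (.l 2317280816732238101225620307935318480054375655694630)))
 (.n (.p 181840)
 (.n (.p 181840)
 (.l 2317281496904998558216521384692753740219013372010790))))))))
 (.n (.p 178312)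
 (.n (.n (.n (.n (.l 12113062585977027270521835555533110780712433946568044)
 (.l 443057201452136286616192470773375096224484473072034022))
 (.n (.p 178312)
 (.l 778243798708838251305292282888086685798680676440244226)))
 (.n (.n (.n (.p 181840)
 (.n (.n (.l 1028075412772694453347379257605972291)
 (.l 11703787903001415563434418396692751403189824266273))
 (.l 374521569707958183377663850934388145141824962568225)))
 (.n (.p 181840)
 (.n (.n (.p 181840)
 (.l 11703799401823168940380692820702742802926827356161))
 (.l 374521569718847219119133872093809647720168360640545))))
 (.n (.p 178312)
 (.l 1594289714451254560039230589574148264401557950277820453))))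
 (.n (.n (.n (.n (.l 59911749451219507231039171270713662086329155155730981)
 (.n (.l 11703442241451191414665318518066105923895080214754)
 (.l 398271350797481288720343441696991263678680940167234)))
 (.n (.l 35954048537218946424914527242300274471247601931272323)
 (.l 1158640770372122908796507366661131874264402511683683)))
 (.n (.p 178312)
 (.l 1162502916740448114272608313815977737555963563961917475)))
 (.n (.n (.n (.p 181840)
 (.n (.n (.l 12422763917313702879826871637179870565366688399843)
 (.l 12069163312334151687413242665758993796793215590497))
 (.n (.p 178312)
 (.l 754323425017342647980349237845615281352225325058))))
 (.n (.p 181840)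
 (.n (.n (.p 181840)
 (.l 12069163660783295414444016246930487419621852962849))
 (.l 1544123602752057516970862223384486536485122639134788))))
 (.n (.p 178312)
 (.n (.p 181840)
 (.n (.p 181840)
 (.l 772061790225996441891117548450396214291273450012674)))))))))
 (.n (.n (.n (.p 181889)
 (.n (.p 181889)
 (.n (.n (.p 181889)
 (.n (.p 181840)
 (.n (.p 152643)
 (.n (.l 36207524422929534308786203322172339907981709058051)
 (.l 36207524412370167859482884616587066462697343492259)))))
 (.n (.n (.p 181840)
 (.n (.p 181840)
 (.n (.p 178305)
 (.l 36207490285823762812185719221138562783571723231395))))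
 (.n (.p 181840)
 (.n (.p 181840)
 (.n (.p 181840)
 (.l 36207490982381788669485235514925444386060732063747))))))))
 (.n (.n (.n (.p 181441)
 (.n (.p 181441)
 (.l 1581930833750044003614988087951480078012619934724014244)))
 (.n (.n (.p 151761)
 (.n (.p 181840)
 (.n (.p 151761)
 (.l 1158640781903941377397202641747334598716126598160387))))
 (.n (.n (.p 181840)
 (.l 37076470755852873670481329564690110037507749634736323))
 (.n (.p 181840)
 (.l 148305985829847200190525768847648831852360524914860044)))))
 (.n (.n (.p 181441)
 (.n (.n (.n (.p 181840)
 (.l 749043150239639162072893377067037190921959007092738))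
 (.n (.l 772061432716855942783091156522133494448455462150242)
 (.l 386213582469055932885899888513644273598502929563649)))
 (.n (.n (.p 181840)
 (.l 1123564709156573559801935088784077740908843813445699))
 (.n (.l 1135255651819780871066826352297416322967063786602499)
 (.l 1123564720307967006168643300242441117458146580045923)))))
 (.n (.n (.n (.p 181840)
 (.n (.p 152643)
 (.l 1544854331271360157908432661987809394039293940711844)))
 (.n (.p 181840)
 (.n (.p 152643)
 (.l 2317281563808563361026086929724709711507072326762694))))
 (.n (.n (.p 181840)
 (.n (.p 181840)
 (.l 1158640748452493962191841113779402480177736623456259)))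
 (.n (.p 181840)
 (.n (.p 181840)
 (.l 1158640770753579443089384884614695372727567608299523))))))))
 (.n (.n (.n (.n (.n (.p 177409)
 (.p 177409))
 (.n (.p 177409)
 (.p 177409)))
 (.n (.n (.p 119057)
 (.n (.p 181840)
 (.n (.n (.p 181840)
 (.n (.p 140099)
 (.l 377161712848954025882832290867631807158074605569)))
 (.l 1158640748453163529671341020338421552319381062983683))))
 (.n (.p 119057)
 (.n (.p 181840)
 (.n (.p 181840)
 (.l 1158640770753249773797525499849437540741814493233155))))))
 (.n (.n (.n (.p 177409)
 (.n (.n (.n (.p 181840)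
 (.n (.p 140099)
 (.p 140099)))
 (.n (.p 176898)
 (.n (.p 173825)
 (.l 754323414489857581185847113288393442593968701538))))
 (.n (.n (.l 12788508334289625485717299039091491122059663507651)
 (.n (.p 140099)
 (.l 377161701630259356557406452755054912682735042561)))
 (.l 3859212880543308326323392169432302858744408648753162))))
 (.n (.p 177409)
 (.n (.n (.p 181840)
 (.n (.p 181840)
 (.n (.l 23572606702808028812116791072242363676703850498)
 (.l 377161712859587839717810638875350758706538201089))))
 (.n (.n (.l 11692370269908922320231881137660171050165844672609)
 (.n (.l 11775152803336269057151995966624840327035494401)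
 (.l 377150562486988584547125516425671384328568946689)))
 (.n (.l 11692370270259828136983499603121277672939124260929)
 (.l 12069163661134211920035409047441508778575210332161))))))
 (.n (.n (.n (.p 181840)
 (.n (.n (.n (.p 140099)
 (.l 377150562146706217299680065064807433364666654881))
 (.n (.p 140099)
 (.l 377150562486656277221681961521780044722981699585)))
 (.n (.l 12446313526371996869735369379681664488482285994178)
 (.l 12069163661134211929850107154451797110623425364033))))
 (.n (.p 181840)
 (.n (.n (.p 181840)
 (.n (.p 140099)
 (.l 377161712848954025882522805857881961097121095681)))
 (.n (.l 24138327321587848741898426270222035378219556012034)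
 (.l 36207502132733109912392237785889903799664013328387)))))
 (.n (.n (.p 181840)
 (.n (.p 181840)
 (.n (.l 12069174811166528828567245842272770322210893160513)
 (.l 36207490982381778295032723246477983994459495694339))))
 (.n (.p 181840)
 (.n (.p 181840)
 (.l 2317281508055403058993980038508092106139773616890054)))))))
 (.n (.n (.n (.n (.p 86297)
 (.n (.l 36293139039418952813162801104846135934460689650172035)
 (.l 37076470755820206562283364710662297698330442193084419)))
 (.n (.l 2336943310346725793633048892331220928880866051192848518)
 (.l 2372896250625066005431568652977385098153902084667015174)))
 (.n (.n (.n (.p 181840)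
 (.n (.n (.n (.p 140099)
 (.l 742893944653931867193815577697501968975421243522))
 (.n (.p 140099)
 (.l 377150214027200648936557857708054229757590626337)))
 (.l 784496328599894709820884525693426474424651089313859)))
 (.n (.p 181840)
 (.n (.n (.p 181840)
 (.n (.p 140099)
 (.l 377161712859577465255394548195605202647658889249)))
 (.l 1158640748453514778159075766541260086019509738405891))))
 (.n (.n (.p 181840)
 (.l 74152941522856119960997148230767112335912151196270950))
 (.n (.p 181840)
 (.l 74152941534006832832254938131250929004592509039140870)))))
 (.n (.n (.n (.n (.n (.l 748677406497761824005557959935955762494652301951170)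
 (.l 374521569718847209059068622176542779220734588878881))
 (.n (.l 3026869790326562105668387067570725495077983921065)
 (.l 1135256755706338549140681049302157416979684127047683)))
 (.n (.n (.l 1532430139364517584829134824461893959035820444188996)
 (.l 1146583359944535249609861973661459637148272317333507))
 (.n (.l 1158640425080788902573893646517154989204037341454339)
 (.l 1158640759603228090702502433906626860884549597249539))))
 (.n (.n (.n (.p 181840)
 (.l 748312387922481595395523424429150975501795697360930))
 (.n (.l 1496990163450005313143699226406901481393594739212292)
 (.l 374521569719198125249638617832217725556377402859521)))
 (.n (.l 111229513892054586451061221705721023880995251661529097)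
 (.l 74153009974993910946439569837034198430762441105965062))))
 (.n (.n (.n (.p 181840)
 (.n (.n (.n (.p 140099)
 (.l 377161712848943631147910410236953915079946027009))
 (.n (.p 140099)
 (.l 377161712848943631147910410236953915079945977921)))
 (.l 1158640759602855906884281999351817363387425808064515)))
 (.n (.p 181840)
 (.n (.n (.p 181840)
 (.n (.p 140099)
 (.l 754323425697887272446610004801333894272828784674)))
 (.l 1158640759603196189251202937815280810615367474176003))))
 (.n (.n (.p 181840)
 (.n (.p 181840)
 (.l 1158640748452504585631213985219204520236463828590627)))
 (.n (.p 181840)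
 (.n (.p 181840)
 (.l 1158640770753919694302207759219126695429610368491523)))))))))

def tr4 : DTree := .n (.n (.p 181448)
 (.n (.p 178312)
 (.n (.n (.n (.p 181889)
 (.n (.n (.p 181448)
 (.n (.p 178312)
 (.n (.n (.p 181840)
 (.n (.p 178312)
 (.n (.p 181448)
 (.l 1131473987865539225434641975935167105855400591363))))
 (.n (.n (.l 48229600070805790562148701153532721917700176576772)
 (.n (.p 181448)
 (.l 377161712859577465265288699639371992619748016161)))
 (.n (.p 178312)
 (.n (.p 181448)
 (.l 754323425378550640887197303093117454957943169026)))))))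
 (.n (.n (.n (.p 181840)
 (.n (.n (.l 12057388507990583233806756823301748486877554524289)
 (.l 12068806489532230913172135760828477828184607408225))
 (.n (.p 178312)
 (.l 12069163301455407403152304154866722263081985105985))))
 (.n (.p 181840)
 (.n (.n (.p 181840)
 (.n (.l 11418330001425564715800458182653048251792605249)
 (.l 377150562146695833032789139419046700823880015873)))
 (.n (.l 11692370259030177721593903245722728841774501044289)
 (.l 48276676900704028108959168313673606056730964779012)))))
 (.n (.p 178312)
 (.n (.p 181840)
 (.n (.p 181840)
 (.n (.p 178312)
 (.n (.l 377161712519305482621164327180753449924266409985)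
 (.l 377150562146706217309593559312465811266068389889)))))))))
 (.n (.n (.p 181448)
 (.n (.n (.n (.p 181840)
 (.n (.n (.l 2192252456018288638956067213934435315768711848806)
 (.n (.p 181448)
 (.l 377150551246693950446424128267885577309119422561)))
 (.n (.l 12423477541169662278592110081804227976150244384930)
 (.n (.p 181448)
 (.l 377150562146363515882734588310630432859813453825)))))
 (.n (.p 181840)
 (.n (.n (.p 181840)
 (.n (.p 181448)
 (.l 377150562146363526033833239044335885187043966977)))
 (.n (.n (.l 357160382954365823210110760073114072192778305)
 (.l 742883142729822109660561237399092629260388818946))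
 (.n (.p 181448)
 (.l 377150562135729702067563583476813660181284118529))))))
 (.n (.n (.p 181840)
 (.n (.p 181840)
 (.n (.n (.l 356822812212556275771382515423570912027459649)
 (.l 754312274665990931376839552842265533508772659298))
 (.l 36207489937713894167708881875147217235920028049411))))
 (.n (.p 181840)
 (.n (.p 181840)
 (.n (.p 181840)
 (.l 48276654643174357871247003358988337547368961884164)))))))
 (.n (.p 181448)
 (.n (.p 181448)
 (.n (.n (.p 181840)
 (.n (.p 181840)
 (.n (.n (.l 356822822846390076246683813241325130877108225)
 (.l 754312274666011700563964216587691276130563883010))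
 (.l 48276664748540140629355499040626184235202027896836))))
 (.n (.p 181840)
 (.n (.p 181840)
 (.n (.p 181840)
 (.l 72414981964761552382493420371939490286901232541702)))))))))
 (.n (.p 178312)
 (.n (.n (.p 181448)
 (.n (.n (.n (.p 181840)
 (.n (.n (.l 1461501637394707537540293330863386350133143708585)
 (.n (.p 181448)
 (.l 753944301810506034872496209404466164664035934306)))
 (.n (.p 178312)
 (.n (.p 181448)
 (.l 1131450989540802454680231578642191578769335394307)))))
 (.n (.p 181840)
 (.n (.n (.p 181840)
 (.n (.p 181448)
 (.l 1131462836812053304193187266338629470505325052067)))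
 (.n (.l 36184654997519393773933143473494927666479997673763)
 (.l 36207490960602689132039989854339599093941626249347)))))
 (.n (.p 178312)
 (.n (.p 181840)
 (.n (.p 181840)
 (.n (.p 178312)
 (.l 12069163660793586871663321572476232248535938080769)))))))
 (.n (.p 181448)
 (.n (.p 181448)
 (.n (.p 178312)
 (.n (.p 181840)
 (.n (.p 181840)
 (.n (.p 178312)
 (.l 108622472947142281842751186435804429963762793807881))))))))))))
 (.n (tr3)
 (.n (.p 178312)
 (.n (.n (.n (.p 181889)
 (.n (.p 181889)
 (.n (.p 181889)
 (.n (.p 178312)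
 (.n (.p 181840)
 (.n (.p 181840)
 (.n (.p 178312)
 (.l 36207513284147834320203173589264042589021731635203))))))))
 (.n (.n (.n (.p 181441)
 (.p 181441))
 (.n (.p 151761)
 (.n (.n (.p 181840)
 (.n (.p 181840)
 (.l 4634505948504395912255906124857831251639020981428620)))
 (.n (.p 181840)
 (.n (.p 181840)
 (.l 2317247309862576250122762982270390336093177881780230))))))
 (.n (.n (.p 181441)
 (.n (.p 181441)
 (.n (.n (.p 181840)
 (.n (.p 181840)
 (.n (.p 181441)
 (.l 377161712859587849859015440701186538028163768321))))
 (.n (.n (.l 12068817999583634705200997724465651578648557355073)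
 (.l 36206788509588267401981278951920511607756260966499))
 (.n (.l 12069174811506811195488484431024893210859866791937)
 (.l 36207524434520101279466526406624492234712461647875))))))
 (.n (.n (.n (.p 181840)
 (.n (.n (.l 84461308922019376103116394569753345661318059720903)
 (.l 36207501425647598338934614149227203134968302026755))
 (.n (.l 72414981945027137758184567661526997996423302897670)
 (.l 36207490634953471293351611299110309304101962637315))))
 (.n (.p 181840)
 (.n (.n (.p 181840)
 (.l 36207513272918163136556744559776496779867592155139))
 (.n (.l 12069163661134201535442001463091150036101874417697)
 (.l 36207513284147834320836998888787862592116607967299)))))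
 (.n (.n (.p 181840)
 (.n (.p 181840)
 (.n (.l 36207524085050421988503391091935888740902817325059)
 (.l 12069163661134211929860010684515255894820788477953))))
 (.n (.p 181840)
 (.n (.p 181840)
 (.n (.p 181840)
 (.l 48276688095314030841454870349206906864938019848196)))))))))
 (.n (.p 178312)
 (.n (.n (.n (.n (.p 86297)
 (.n (.n (.l 1158605424061198801475891676830137710385928455200931)
 (.l 386202164835952794795866002773311693786347540185089))
 (.n (.l 2703446910069274768743466869478941596938830064099335)
 (.l 3475887991414186139477816337593133292605228457271305))))
 (.n (.p 178312)
 (.n (.n (.p 181840)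
 (.l 1158606494508878536694137440999813985310542903230467))
 (.n (.l 1158616842054310050583524683277257055484932711104547)
 (.l 386202164836293067102711777825546610740884708376577)))))
 (.n (.n (.n (.p 181840)
 (.n (.n (.l 72403563253592730394737585867875357630018806719046)
 (.l 36207133126099763156305284672621633172629728174083))
 (.n (.p 178312)
 (.l 36207489938043542375974071970942606569636157063171))))
 (.n (.p 181840)
 (.n (.n (.p 181840)
 (.l 12069174811155895004591372489143815660704754663457))
 (.l 3475888036016354080289123670937535772779078883377513))))
 (.n (.p 178312)
 (.n (.p 181840)
 (.n (.p 181840)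
 (.l 1158617934790825100536888110378713947513469448568835))))))
 (.n (.n (.n (.p 86297)
 (.n (.n (.n (.p 181840)
 (.l 11703431428638014762187271976575933690401341448193))
 (.n (.l 11703788251460861142112400364306312240716773974017)
 (.l 12069163661133879623177977105308939383852226428929)))
 (.n (.n (.l 11703442579021247851148209119129788217067225309281)
 (.l 23772260578264257173951195577380749899393507983458))
 (.n (.l 11703788251460861142112400354861651332605610672129)
 (.l 12069163661133879623177977105308939383852226412545)))))
 (.n (.p 178312)
 (.n (.n (.p 181840)
 (.n (.p 178312)
 (.l 12069174811506468503895830803807967119567942172673)))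
 (.n (.n (.l 12069174811506478888489538202056667259094796697633)
 (.l 12069174811506478888489547873463223617610647175169))
 (.n (.p 178312)
 (.l 36207502133774206980113612925534527014735471468547))))))
 (.n (.n (.n (.p 181840)
 (.n (.n (.n (.l 742883131862042962219458172339081092157640130914)
 (.l 377150562146706207168388757495782476719841157249))
 (.l 12069163661134201221054749086175902806574610112513))
 (.n (.p 178312)
 (.l 36207513283466906125581199223517851380384193134595))))
 (.n (.p 181840)
 (.n (.n (.p 181840)
 (.l 72415048869039142680029547568385987213254772506630))
 (.n (.l 36207524434179123144132728647846339429910461087747)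
 (.l 24138349623013279699067412256182360464468853571586)))))
 (.n (.p 178312)
 (.n (.p 181840)
 (.n (.p 181840)
 (.n (.p 178312)
 (.l 48276699246025874014949497915108603602140018368516))))))))))))

def tr5 : DTree := .n (.n (.p 181448)
 (.n (.p 153168)
 (.n (.n (.n (.p 181889)
 (.n (.p 153168)
 (.n (.p 181441)
 (.n (.n (.n (.n (.p 153168)
 (.l 23396158500272286762843655125417188306732238249986))
 (.n (.p 153168)
 (.n (.l 11703788240912118151830208584549212603920546897985)
 (.l 12069163650234542354589504542640130841269785182241))))
 (.n (.l 12733355851906154176131307112446432560591349938937858)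
 (.n (.p 153168)
 (.l 1158640748453504175174513618394178673204841951911939))))
 (.n (.n (.n (.p 153168)
 (.p 153168))
 (.n (.p 153168)
 (.n (.l 12069174811495845064513055229479484740443251515457)
 (.l 12069174800606809323043333883366171864051990249505))))
 (.n (.n (.p 153168)
 (.p 153168))
 (.n (.p 153168)
 (.l 1158640748431736072901541934846597381161215204860003))))))))
 (.n (.n (.n (.p 178305)
 (.n (.n (.p 178305)
 (.l 1186424752704285602685394831678866128549689206598180899))
 (.n (.p 178305)
 (.n (.l 12358469263600446160822939724976308758513207426039809)
 (.l 74082857594603148640748361293628300116148438654664966)))))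
 (.n (.p 177409)
 (.n (.n (.n (.l 23945996413159711323182882542867490261306769504739426)
 (.n (.l 748311674625646284859702138070620123423386160586850)
 (.l 748312410898697946552790574833539107174709834530850)))
 (.l 1186448159934408276203198835578794597988657788208201731))
 (.n (.n (.l 26192372242188671153117085105873614512410079368323270)
 (.n (.n (.p 106828)
 (.l 12446314223599932542253128892922592890164626014306))
 (.n (.p 106828)
 (.l 12069163661123578106200430992524953419701498789889))))
 (.n (.l 37076139612066694399636694281852505924208154160570371)
 (.n (.l 1158640748442625440300339340390992010526326127935619)
 (.l 772061801376709323219411019255280000760702310793218)))))))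
 (.n (.p 153168)
 (.n (.n (.n (.p 174273)
 (.n (.l 35954071729994972747296995574792147504256606160723971)
 (.l 37076470766971630944708420686548430251516420086448131)))
 (.n (.n (.n (.p 153168)
 (.l 385871756636104122595900396481624219274805181325315))
 (.n (.n (.l 742169149007512153191041554570773646729355231234)
 (.l 377150551597620211559913652092289929227112939521))
 (.n (.l 12057756818724878952564969509320081862883148963841)
 (.l 12069163650244843881707945962804619965883119411233))))
 (.n (.l 27421165071356772970960481912423694512462989062537225)
 (.n (.l 2317281496841705039153092653094897458775072856138150)
 (.l 1158640748420867971851978012830330115624337358036995)))))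
 (.n (.n (.n (.l 11984314140434510140508562110386682867906390723420162)
 (.n (.p 153168)
 (.l 760723734533723110209650754319615995934769642995714)))
 (.l 1186447064187292968333282882399579932737360033527193699))
 (.n (.n (.l 12721641715782281693721781864582961319651951998369858)
 (.n (.p 153168)
 (.l 1543758238483610691274537649359161866096937684836548)))
 (.n (.l 37076504998615511353828920101763546013703060437958691)
 (.n (.p 153168)
 (.l 1158640748431736405208540242761847334257092286799939)))))))))
 (.n (.n (.p 181889)
 (.n (.p 153168)
 (.n (.p 181441)
 (.n (.n (.p 181441)
 (.n (.l 37076492855859740089566085848649093251936294950805507)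
 (.n (.p 153168)
 (.l 386213593968217958255631810966123571742609424621569))))
 (.n (.n (.n (.p 153168)
 (.p 153168))
 (.n (.p 153168)
 (.l 1158275395334058849406106900493361290372390016335875)))
 (.n (.n (.p 153168)
 (.p 153168))
 (.n (.p 153168)
 (.l 1158640770743392239759777102853730724400535290839043))))))))
 (.n (.n (.n (.p 178305)
 (.n (.n (.p 178305)
 (.p 178305))
 (.n (.p 178305)
 (.n (.n (.p 153168)
 (.p 153168))
 (.n (.p 153168)
 (.l 1158640781893742906763485037792225503817175321116675))))))
 (.n (.p 177409)
 (.n (.n (.p 177409)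
 (.n (.l 37076138541620035803271533234553559548525308251897859)
 (.l 74106230214688014202202876481950845325832514838405126)))
 (.n (.n (.n (.l 1157509297812475302359676023042688770523174443335683)
 (.l 1157544621855310684571356364042980895407691494981635))
 (.n (.l 1929239307994355517451977490286254512602122333700357)
 (.l 1157544655317317175417188251240503144973334007308291)))
 (.n (.n (.l 796564065666709295992927765783457176491594300751972)
 (.l 2316185370679073914443744493511478637089362264449030))
 (.n (.l 1158640068248140082254564768566914592746656399433795)
 (.l 1158640781904653874765924879171193270333684364664835)))))))
 (.n (.p 153168)
 (.n (.n (.n (.p 174273)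
 (.p 174273))
 (.n (.n (.n (.p 153168)
 (.n (.l 24126920491078087019355134565235959758892799590498)
 (.l 12446325373993446703215114117971390578637477740546)))
 (.n (.n (.l 36184676602036567093495489169571683889523689144323)
 (.l 12069163661134211605658369373618840096600217436225))
 (.l 1157544655676655676808104497504882511625016639315971)))
 (.n (.n (.p 153168)
 (.l 1158640781904653853996746410397426889755592512323587))
 (.n (.n (.p 153168)
 (.l 24138327300490352377413775335786804920359655252002))
 (.l 4634562993814144287113060946523162235475562473881612)))))
 (.n (.n (.n (.l 37076503917029358227454327062572284459581914571243523)
 (.n (.p 153168)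
 (.l 1158640781882864484056521355718277460616747338268675)))
 (.n (.l 74153007834058706174840018015915934320204242865602566)
 (.l 74152987205923875259346847624255655389677242504773798)))
 (.n (.n (.l 74152964303047667041225697468575865209866258909651078)
 (.n (.p 153168)
 (.l 1158640770754259000548060747738874575272555007205411)))
 (.n (.n (.p 153168)
 (.p 153168))
 (.n (.p 153168)
 (.l 1158640781882875803283925661601355794501719011123203))))))))))))
 (.n (.p 181448)
 (.n (.p 181448)
 (.n (.n (.n (.p 181889)
 (.n (.p 181889)
 (.n (.p 181448)
 (.n (.p 181448)
 (.n (.n (.n (.p 180762)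
 (.n (.n (.p 107052)
 (.l 365732580945008598172906491283035920473885097985))
 (.n (.p 181448)
 (.l 377161712859255542543156561380754204809389760545))))
 (.n (.n (.n (.p 107052)
 (.l 377161712508339351646035250905647079566201716737))
 (.n (.p 181448)
 (.l 754323403930470382650677747486585072439955472482)))
 (.n (.l 36207513284114935918096912609087408408784644964355)
 (.l 754323425708541864976411967173934100430780063746))))
 (.n (.n (.p 180762)
 (.n (.l 12069163649904561189951232008374313615916976406561)
 (.l 12069174811506478563654081564684291574503047266305)))
 (.n (.n (.l 36196106430488248217784563071167258155942177677539)
 (.l 36207524412709463710629743977193424498836141056003))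
 (.l 2317281519152989022820585188410319745438631991058438))))))))
 (.n (.n (.p 178305)
 (.n (.p 178305)
 (.n (.n (.p 178305)
 (.l 2372896319913427943226202407179842153040148072017739878))
 (.n (.p 178305)
 (.n (.l 37076504987497124632115373417494188568963812029743107)
 (.n (.l 1158640770753919392205225010820052712882075930550275)
 (.l 1158640759603876773789867055079603842673895427842051)))))))
 (.n (.n (.p 181448)
 (.n (.n (.n (.l 1135245303195631708122334015037114463681960437399620)
 (.n (.n (.p 18061)
 (.l 12446314201821861373700639369061081814536120688674))
 (.l 1158640748419815555586335421920514540139384517582851)))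
 (.l 2372894470557219880435061681518743886775720309932408998))
 (.n (.n (.l 37040332821940826058551233661839991253150678764642307)
 (.n (.n (.l 12068806849200068984712666241145920163035496947777)
 (.l 12446336502566727597334428409474431123761066663938))
 (.l 784496362747569546622406114957913824411732091969539)))
 (.n (.l 37076139612087419722517529533920150937331815590256643)
 (.l 37076504998637267493050584301217490979248448936927267)))))
 (.n (.p 181448)
 (.n (.p 181448)
 (.n (.n (.n (.l 1158275015513251901708031837988718069980925148831875)
 (.n (.l 11703788240901484003662288551427838554405932744705)
 (.l 754323425378560701269688991340077772562260746242)))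
 (.n (.n (.l 36206420536711503518716485656416648279477708923075)
 (.l 24138338450851653194619978886370384806613671436290))
 (.n (.l 12069174811495845064513364714489306085546336018465)
 (.l 12069174800617775453701550319019658420178370256897))))
 (.n (.l 37076504987497124964422372373404008013303740331515907)
 (.n (.l 1158640748431736404883101309718206579682168321409027)
 (.l 1158640748442635410159691767575161383163826798886915)))))))))
 (.n (.n (.p 181889)
 (.n (.p 181889)
 (.n (.p 181448)
 (.n (.p 181448)
 (.n (.p 181889)
 (.n (.n (.p 180762)
 (.n (.p 180762)
 (.l 36207524434520101279466226593021227811075178881027)))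
 (.n (.n (.p 152090)
 (.l 36207524434519768972467589849062825456178647293955))
 (.n (.l 12069163661134211929860010684515256453372695371777)
 (.l 36207513284147834321153911539435288940776110940163)))))))))
 (.n (.n (.p 178305)
 (.n (.p 178305)
 (.n (.n (.p 178305)
 (.p 178305))
 (.n (.p 178305)
 (.n (.n (.n (.p 35610)
 (.l 12069174811166528828250633317504461253053922779137))
 (.n (.p 178305)
 (.l 60345874056853480857422003780280207224890104160261)))
 (.n (.n (.l 36207524433499586484751899952513382637659907932291)
 (.l 12069174811506811195488494102431450695241264349185))
 (.n (.p 178305)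
 (.l 36207524434520433585831657007180308325568744767491))))))))
 (.n (.n (.p 181448)
 (.n (.n (.n (.l 37076504987115636166162121678692640075620241256136707)
 (.n (.n (.p 18061)
 (.l 36207501066639077768172280898238873533220544462851))
 (.l 1158640759571220269855176611288779014812634301472771)))
 (.n (.l 74153008904492741727688482011305069253043985685692422)
 (.n (.n (.l 24138349612103308596688348579170859700245074518018)
 (.l 12069174800607141619901075320248444028915942531073))
 (.l 1158640781882854504472080650466356671126553321873411))))
 (.n (.n (.n (.n (.p 35610)
 (.l 36207513272206049986729604728291348960094349279235))
 (.l 1158640759254405766246375475974426792209225976438883))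
 (.n (.n (.l 36207513283774642172764303051009513406266941480963)
 (.l 36207512587249193760451421102353487444092819709955))
 (.l 1158640759254767658932529323285403480218562168430595)))
 (.n (.n (.n (.p 35610)
 (.l 12069174800266859263131245481156786135916097937409))
 (.l 1158640781903622040755838753945921563188066372599811))
 (.n (.n (.l 36207524434169485582618771268288219248510986682371)
 (.l 12069174811506800800753572230950286923267208986657))
 (.l 1158640770753940972355334285660940634180279001694211))))))
 (.n (.p 181448)
 (.n (.p 181448)
 (.n (.n (.n (.n (.p 35610)
 (.l 11703799401833460407423661647155699844770837897281))
 (.l 1158640759254437688477003321176683750283410225307651))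
 (.n (.l 2317281541507199427693143361602945075300725030502406)
 (.l 1158640759603227436493370475083724236892485535932419)))
 (.n (.n (.n (.p 35610)
 (.l 12069174811506478888172635223406166830152065048577))
 (.n (.l 36207524433839837698208628871287714722139976482819)
 (.l 36207524434519405510736754461252800797827068583939)))
 (.n (.n (.l 12069163661133879622861064455547029943021358637057)
 (.l 12069174811506811195488494102431451258225577508865))
 (.n (.l 36207490983401618100346187692491927538998108717059)
 (.l 36207524434520402432050505798214538818349303054339)))))))))))))

def tr6 : DTree := .n (.n (.n (.n (.n (tr0)
 (.n (.p 153224)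
 (.n (.p 178312)
 (.n (.n (.n (.n (.p 181889)
 (.n (.p 153224)
 (.n (.p 178312)
 (.n (.p 181840)
 (.n (.p 153224)
 (.l 1158263988513746571811588549806482217087361939324931))))))
 (.n (.n (.p 181441)
 (.n (.p 178312)
 (.n (.n (.p 181840)
 (.l 1544842913289838417514553301212555913554880012738820))
 (.n (.l 1157908960639318196196687090761511265119691931525283)
 (.l 386213593968217947870710958569671443586495197356033)))))
 (.n (.n (.n (.p 181840)
 (.l 148188985750332358640145981219437460594938661804770764))
 (.n (.p 181840)
 (.l 86488381096811713422872726096994213188048785991623047)))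
 (.n (.p 178312)
 (.n (.p 181840)
 (.l 49433877099035304097368983431109738105175922327461988))))))
 (.n (.p 153224)
 (.n (.n (.n (.p 181441)
 (.n (.n (.n (.p 181840)
 (.l 12068806837970740815939824521413818299958608126049))
 (.l 1158640748442624745485537061427089950824093033316483))
 (.n (.p 153224)
 (.l 1158640770743370286707762459994504713283117846478915))))
 (.n (.n (.n (.p 181840)
 (.l 397552017601720453130160487815098592086142459584610))
 (.l 86453361433800654485301196293315338435873910381371911))
 (.n (.n (.p 181840)
 (.l 1544123602753460144572438934867862732233739784994820))
 (.n (.l 1158640068259028432602717862014180955162691934527523)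
 (.l 1158640781904631610196984648919331637087190653476867)))))
 (.n (.p 153224)
 (.n (.n (.p 181840)
 (.l 37041417563671100361303033512821310070209251610370051))
 (.n (.p 181840)
 (.l 37076505020948923961375750119751119134552677773885443)))))))
 (.n (.p 178312)
 (.n (.p 153224)
 (.n (.n (.n (.n (.n (.l 1134159893195058307638387712794777868381540548133379)
 (.l 1929252821603778449031109584052307771695432681071206))
 (.n (.p 153224)
 (.l 6945998313431614844225585910137899572063423417706610)))
 (.n (.n (.l 6879497349724798995458079645966815494615707319814706)
 (.l 1158640781904620944884587653585354995902863731220579))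
 (.n (.p 153224)
 (.l 1158640425092697768080250253162576622419008268173315))))
 (.n (.p 178312)
 (.n (.n (.p 181840)
 (.n (.p 178312)
 (.l 24138349622991669359858464016855454393449056550946)))
 (.n (.l 1158640781904620945199271702087269913447151830392995)
 (.l 1158640781904620945219554121361747212473863248429059)))))
 (.n (.p 153224)
 (.n (.p 178312)
 (.n (.p 181840)
 (.n (.p 153224)
 (.l 1158640781904631911351153172217803633970494719787011))))))))))))
 (tr2))
 (.n (.p 153224)
 (.n (.p 181448)
 (.n (.p 153224)
 (.n (.n (.n (.p 181889)
 (.n (.p 153224)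
 (.n (.p 181448)
 (.n (.p 153224)
 (.n (.n (.n (.n (.l 1107901369912166198700908402029172923062594765283)
 (.n (.p 181448)
 (.l 754311915657147808186618162605620840201053274114)))
 (.n (.n (.p 109320)
 (.l 377161701970219801062912413543107027466518134785))
 (.n (.p 181448)
 (.l 377161364069829448580921714726548437794046435393))))
 (.n (.p 153224)
 (.n (.p 109320)
 (.l 754323414819506123506370841273419353135167766594))))
 (.n (.n (.n (.l 108529754713289266147894814257586674273174577881097)
 (.n (.p 181448)
 (.l 377161712508671324311720033281197873206782943265)))
 (.n (.l 753966602225733471400839415662569817807316500578)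
 (.l 36207524433498588915668701541113336999808061464579)))
 (.n (.p 153224)
 (.l 1158640781870933021399789741030493511470343371669571))))))))
 (.n (.n (.p 178305)
 (.n (.p 178305)
 (.n (.n (.p 109320)
 (.l 1186448160670343087192172194279593450288845304524857347))
 (.n (.p 109320)
 (.n (.n (.l 1158640781870933021075270849505320734003626970054659)
 (.l 1158640781903610762123330008832812211458751901016131))
 (.l 37041428981652269855323835215579099838880543200854019))))))
 (.n (.p 153224)
 (.n (.p 181448)
 (.n (.p 153224)
 (.n (.p 109320)
 (.n (.n (.l 1158640781870933021075271159292276158335356437348355)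
 (.l 1544854375860588435815404593843989585579995887476740))
 (.l 111229503644765089614187874224088789468335452697026633))))))))
 (.n (.n (.p 181889)
 (.n (.p 153224)
 (.n (.p 181448)
 (.n (.p 153224)
 (.n (.p 181889)
 (.n (.n (.n (.p 180762)
 (.n (.p 181448)
 (.l 754323425368249114095572062753854128965634138114)))
 (.n (.l 12069174811506468503895511637946855887259224334369)
 (.l 12069174811506811195488494092691570382908346687489)))
 (.n (.p 153224)
 (.l 1158640425092730365969925912612900521738753418739715))))))))
 (.n (.n (.p 178305)
 (.n (.p 178305)
 (.n (.n (.p 178305)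
 (.p 178305))
 (.n (.p 178305)
 (.n (.n (.n (.l 36183974825131120306879289367776061789561130639523)
 (.l 24138349611783618898766238371193889446165387345986))
 (.l 2317281563807605278468723672372211273532052949581830))
 (.l 37076505020948923296772556977949506144780294860103715))))))
 (.n (.p 153224)
 (.n (.p 181448)
 (.n (.p 153224)
 (.n (.n (.n (.n (.n (.l 1508645434459332753116479039663286368000291667972)
 (.l 754322717229666396533968826129187477495310696450))
 (.n (.p 181448)
 (.l 377161364399467282423310434809976433756388564993)))
 (.n (.l 36207524085729978748068373252690413035151471927523)
 (.l 36207523388471138868835259680750868939011208216803)))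
 (.n (.p 153224)
 (.l 3475922343939016883631555001137327069592389491286025)))
 (.n (.n (.n (.n (.l 377161712508660949859517250765896593311323504641)
 (.l 754323414138587988959860315760924522564118822946))
 (.n (.p 181448)
 (.l 377161712508328967378824866326128643725448011777)))
 (.n (.l 24138349623002302859306499784938164739331112222754)
 (.l 12069174800277482702503498244030204653318382379009)))
 (.n (.p 153224)
 (.l 1158640781904631911351183821529447994178462762147843))))))))))))))
 (.n (.p 178312)
 (.n (.p 153224)
 (.n (.p 181448)
 (.n (.p 153224)
 (.n (.p 178312)
 (.n (.p 181889)
 (.n (.p 178312)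
 (.n (.p 153224)
 (.n (.p 181448)
 (.n (.p 153224)
 (.n (.p 178312)
 (.n (.n (.n (.l 48276699235115923377828105415411899309473885749252)
 (.l 48276699245314425499363016444395141739915556257796))
 (.l 2317281563798067423106705426719537219765495627513862))
 (.n (.p 153224)
 (.l 386213593968217958255631811277799831678464859127809)))))))))))))))
 (.n (.n (.n (.p 181840)
 (tr4))
 (tr5))
 (.n (.p 178312)
 (.n (.n (.p 181448)
 (.n (.n (.n (.p 181889)
 (.n (.p 178312)
 (.n (.n (.p 181448)
 (.n (.n (.n (.l 681250117978900191516265472850624315396)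
 (.n (.p 50856)
 (.l 374144787119347547873939073745203749037183053471745)))
 (.n (.l 11984313783622906622562742080296962473521540283793410)
 (.n (.p 50856)
 (.l 1135233919363127968905586893932782808435367675854851))))
 (.n (.p 178312)
 (.n (.l 36667284529045121464787184918743051319756590907031555)
 (.n (.p 50856)
 (.l 1544854375861982463635408063101841275061355825086468))))))
 (.n (.p 181448)
 (.n (.p 181448)
 (.n (.p 178312)
 (.n (.l 37053120960930284531838518483403231331099132400394243)
 (.n (.p 50856)
 (.l 2317281563112366924774239684293991931674654367563782)))))))))
 (.n (.p 181889)
 (.n (.p 181889)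
 (.n (.n (.p 181448)
 (.n (.n (.p 181889)
 (.n (.n (.n (.p 143914)
 (.p 143914))
 (.l 386213582806956312864246579115505011864099686055937))
 (.n (.n (.p 143914)
 (.p 143914))
 (.n (.p 115242)
 (.l 12069174811496166986928488034386190650969256214529)))))
 (.n (.n (.l 37052366303037624741753059721291516843735962674929667)
 (.n (.n (.p 143914)
 (.p 143914))
 (.l 374521580521121580788216210841092368241256860606465)))
 (.n (.l 37076492855859719154205206546312014053998532783095811)
 (.n (.n (.p 143914)
 (.p 143914))
 (.l 1158640781904653843582690657640854864788112992968707))))))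
 (.n (.p 181448)
 (.n (.p 181448)
 (.n (.l 4745792641607542009984907817892156070129148198309494796)
 (.n (.l 37076504987476006855582462265159388148391156038066179)
 (.n (.n (.p 50709)
 (.l 12069174800607131245458457203558275266314573553665))
 (.l 1158640781556183452987025925260319074299323164721155))))))))))
 (.n (.p 178312)
 (.n (.p 181889)
 (.n (.p 178312)
 (.n (.n (.p 181889)
 (.n (.p 181889)
 (.n (.p 178312)
 (.n (.n (.l 1158275015154244347908474369935826395777915743969283)
 (.l 386213582806955980557257546380489152274266633371649))
 (.n (.n (.p 143914)
 (.p 143914))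
 (.l 1158640781556204731039854436668802615109082574757891))))))
 (.n (.p 181441)
 (.n (.n (.p 181441)
 (.n (.l 37076504987138456685673677876988916828763031416938499)
 (.l 37076505020938034925645392767489980004117739636826115)))
 (.n (.p 178312)
 (.n (.n (.l 1158640747734859686879196894015723542488143379087363)
 (.l 1158640781904653874765933854236478016152820284391427))
 (.n (.n (.l 36207523726732767689169706380479680120290468438019)
 (.l 12069174800617775454018453600196834845781559173121))
 (.l 1158640781904653532075302460747534807263951785820163))))))))))))
 (.n (.p 181448)
 (.n (.p 181448)
 (.n (.p 178312)
 (.n (.p 181889)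
 (.n (.p 178312)
 (.n (.p 181889)
 (.n (.p 181448)
 (.n (.p 181448)
 (.n (.p 178312)
 (.n (.n (.n (.l 24138349622672997332146154636302605901618873540610)
 (.l 12069174811166528828250642988911018170121680134145))
 (.n (.p 178312)
 (.l 72415048866999141815722677710280738023053061464070)))
 (.n (.n (.l 48276688095653960132188790131558711127902538465348)
 (.l 12069174811506811195171581452374393344935808016385))
 (.n (.p 178312)
 (.l 36207524434520412816327300546406181053451198480387))))))))))))))))

def tr7 : DTree := .n (.n (tr6)
 (.n (.p 153224)
 (.n (.n (.p 181840)
 (.n (.p 153224)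
 (.n (.p 181448)
 (.n (.p 153224)
 (.n (.n (.n (.p 181889)
 (.n (.p 153224)
 (.n (.p 181448)
 (.n (.p 153224)
 (.n (.n (.p 181840)
 (.n (.p 153224)
 (.n (.p 107052)
 (.l 754323414489525284001299187771155330296287772674))))
 (.n (.p 181840)
 (.n (.p 153224)
 (.n (.p 181840)
 (.l 12069174800617775454018463262158658234160072712193)))))))))
 (.n (.n (.p 178193)
 (.n (.n (.p 181448)
 (.n (.p 165537)
 (.n (.l 37076504987497124632115373417503338154019974199795715)
 (.l 37076504987496784682379969978937009613581366480707587))))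
 (.n (.n (.n (.p 181840)
 (.n (.p 152776)
 (.l 1158640781870933022047846400459880394877931710890083)))
 (.n (.p 181840)
 (.l 37076482184952822340810262943887327221350278046785539)))
 (.n (.n (.p 181840)
 (.n (.p 181840)
 (.l 1158640781893742574456158975550975924709055424405571)))
 (.n (.p 181840)
 (.l 37076505009798551393274391244197333692888510064017411))))))
 (.n (.p 153224)
 (.n (.p 181448)
 (.n (.p 153224)
 (.n (.n (.p 181840)
 (.n (.p 153224)
 (.l 1590573447231111361156314065317927053228144765648904)))
 (.n (.p 181840)
 (.l 37076505020948923992529541513301662498251234108276739))))))))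
 (.n (.n (.p 181889)
 (.n (.p 153224)
 (.n (.p 181448)
 (.n (.p 153224)
 (.n (.p 181889)
 (.n (.p 181840)
 (.n (.p 153224)
 (.l 2317281206997043958369583496258363558417160708055046))))))))
 (.n (.n (.p 178193)
 (.n (.n (.p 181448)
 (.n (.p 165537)
 (.n (.n (.p 181840)
 (.l 2317281552658935150267844804243439397083283081224262))
 (.n (.l 1158640068280807521786003228613807646487418256031747)
 (.l 1158640770754281244347168267586440971965280148561923)))))
 (.n (.n (.n (.p 181840)
 (.n (.p 152776)
 (.l 2317279723997828870756064522758796682645567831523590)))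
 (.n (.p 181840)
 (.n (.p 152776)
 (.l 1158640781904653864382301716452067978016419364487171))))
 (.n (.n (.p 181840)
 (.n (.p 181840)
 (.l 2317280459910840177584043746281721409704625680457734)))
 (.n (.p 181840)
 (.n (.p 181840)
 (.l 1158640781893764828640831685914026856077486815698947)))))))
 (.n (.p 153224)
 (.n (.p 181448)
 (.n (.p 153224)
 (.n (.n (.p 181840)
 (.n (.p 153224)
 (.l 1158640402781085809411678282796269801404205977821187)))
 (.n (.p 181840)
 (.n (.p 153224)
 (.l 2317281563808956833342576833677646917167406899462150))))))))))))))
 (.n (.n (.p 178256)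
 (.n (.n (.p 181448)
 (.n (.p 178256)
 (.n (.p 181889)
 (.n (.p 178256)
 (.n (.n (.p 181448)
 (.n (.n (.p 153217)
 (.n (.p 178256)
 (.n (.p 153217)
 (.n (.l 25646996474450603024002742759584953983148860645382)
 (.l 36207167621916017353910612957170912641451861196995)))))
 (.n (.n (.p 178256)
 (.n (.l 796564465729201499023943126364313452024138689880132)
 (.l 1158640770753940629673863019216819838294238704197763)))
 (.n (.p 178256)
 (.n (.n (.p 178256)
 (.p 178256))
 (.n (.p 178256)
 (.l 12069174811166528828567555629523342000637333307393)))))))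
 (.n (.p 181448)
 (.n (.p 181448)
 (.n (.n (.p 178256)
 (.n (.l 1158639676971397594219938716931067672000763670142979)
 (.l 1158640748453536045816535222228176815575889831329795)))
 (.n (.p 178256)
 (.n (.l 1158640781903632363052134706642259875250271341035523)
 (.l 1158640770753940640058476544233798385871294415798275)))))))))))
 (.n (.n (.n (.p 181889)
 (.n (.p 178256)
 (.n (.n (.n (.p 152776)
 (.l 62893712678451294416461049009778504516670443423697371141))
 (.n (.p 152776)
 (.n (.n (.p 178256)
 (.n (.l 748311674646733490072204213049183412653167212724258)
 (.l 748677785632208624234314925043071032687960239857698)))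
 (.n (.p 178256)
 (.l 74106171340742438243204820045944988130106748005195782)))))
 (.n (.n (.p 152776)
 (.p 152776))
 (.n (.p 152776)
 (.n (.n (.p 178256)
 (.n (.p 152776)
 (.l 386213593968207324421207105004479009103306677133313)))
 (.l 2446299576760935152190472416301685489940429187476324364)))))))
 (.n (.p 181889)
 (.n (.p 178242)
 (.n (.n (.n (.p 152776)
 (.l 189831600376229976093695125235630664746492273388188205071))
 (.n (.p 152776)
 (.n (.l 3558220584394357715527572480894464569915011343382970601)
 (.n (.l 37076469662419460675795901990753747376067713968734211)
 (.l 37076470767004288405284807262347497008409688366456835)))))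
 (.n (.n (.p 152776)
 (.p 152776))
 (.n (.p 152776)
 (.n (.l 3559344479867087346082816885874768637328291947474804745)
 (.n (.n (.l 386213226005922182175831412608614976642038049636353)
 (.l 1158640781904653874765944666850119255509115074797571))
 (.l 74152975776802850411300551031903889339342751158280198)))))))))
 (.n (.p 178256)
 (.n (.p 181889)
 (.n (.p 178256)
 (.n (.n (.n (.p 153217)
 (.p 153217))
 (.n (.p 153217)
 (.n (.p 153217)
 (.n (.p 178256)
 (.n (.p 153217)
 (.l 386213593968217958255631811277799831678396680732673))))))
 (.n (.n (.p 181441)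
 (.n (.p 181441)
 (.n (.n (.l 1158640770753940993134662615117067231403149753606147)
 (.l 2282171270568740419922156681354981838448211484262406))
 (.n (.l 1158640748453536076970960721529822155833223007174659)
 (.l 1158640748453536066586050091800665179964023555489795)))))
 (.n (.n (.p 152769)
 (.n (.p 178256)
 (.n (.p 152769)
 (.n (.l 12069174811506800810894767351924831693916241756161)
 (.l 12069174811506800810894777023331388610983999127553)))))
 (.n (.n (.p 178256)
 (.l 74153010008446356009604559598564055199832821834752006))
 (.n (.p 178256)
 (.n (.l 1158640781903632996512351467234043670930789939544067)
 (.l 1158640781904313260092975549131523232437584089309187)))))))))))))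
 (.n (.p 153224)
 (.n (.p 181448)
 (.n (.p 153224)
 (.n (.n (.p 181889)
 (.n (.p 181889)
 (.n (.p 153224)
 (.n (.p 181448)
 (.n (.p 153224)
 (.n (.n (.l 99186635497375345971618794572386983768216242620284937)
 (.n (.p 153224)
 (.l 1158640781904653874766895432898370495703976048320515)))
 (.n (.l 37076505020948923992205012747242374575757724261556227)
 (.l 37076505020948923992529541822777227586072080353058819))))))))
 (.n (.p 181889)
 (.n (.p 181889)
 (.n (.p 153224)
 (.n (.p 181448)
 (.n (.p 153224)
 (.n (.p 181889)
 (.n (.n (.l 1158640781904653532075302751173073503711845253611523)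
 (.l 1158640781904653532075302760853924793612347568791555))
 (.n (.p 153224)
 (.l 1158640781904642908635920304747689022614640290652163)))))))))))))))))
 (.n (.p 178312)
 (.n (.p 153224)
 (.n (.p 181840)
 (.n (.p 178312)
 (.n (.p 153224)
 (.n (.n (.p 172824)
 (.n (.p 178312)
 (.n (.p 181889)
 (.n (.p 178312)
 (.n (.p 181889)
 (.n (.p 172824)
 (.n (.n (.p 153217)
 (.l 3559343384812309572609112983111361350683097198752505897))
 (.n (.p 178312)
 (.n (.p 181840)
 (.l 37076505020948923982156059527286282899304275809394691))))))))))
 (.n (.p 153224)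
 (.n (.p 178312)
 (.n (.p 181889)
 (.n (.p 178312)
 (.n (.p 153224)
 (.n (.p 181889)
 (.n (.p 153224)
 (.n (.p 178312)
 (.n (.p 181840)
 (.l 37076505020948913358716667796300863753977038035435523))))))))))))))))

def root : DTree := .n (tr7)
 (.n (.p 181448)
 (.n (.p 178312)
 (.n (.p 153224)
 (.n (.p 181840)
 (.n (.p 178312)
 (.n (.p 153224)
 (.n (.p 181448)
 (.n (.p 153224)
 (.n (.p 178312)
 (.n (.p 181889)
 (.n (.p 178312)
 (.n (.p 153224)
 (.n (.p 181448)
 (.n (.p 153224)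
 (.n (.p 178312)
 (.l 1989023781553724242736675283883093612865341109207228422))))))))))))))))


theorem rows_ok : rows.all Row.ok = true := by decide +kernel
theorem gv_ok : (gT2 == pk (fG 2) allPats && gT3 == pk (fG 3) allPats && gT4 == pk (fG 4) allPats &&
  vT0 == pk (fV 0) allPats && vT1 == pk (fV 1) allPats && vT2 == pk (fV 2) allPats &&
  vT3 == pk (fV 3) allPats && vT4 == pk (fV 4) allPats && vT5 == pk (fV 5) allPats) = true := by
  decide +kernel
theorem root_ok : ck root rows 0 0 = true := by decide +kernel

theorem pk_add (f g : Pat → ℕ) (L : List Pat) :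
    pk (fun S => f S + g S) L = pk f L + pk g L := by
  induction L with
  | nil => rfl
  | cons S t ih => simp only [pk, ih]; ring

theorem pk_smul (c : ℕ) (f : Pat → ℕ) (L : List Pat) :
    pk (fun S => c * f S) L = c * pk f L := by
  induction L with
  | nil => rfl
  | cons S t ih => simp only [pk, ih]; ring

theorem chk_sound (f g : Pat → ℕ) (hf : ∀ S, f S < 65536) (hg : ∀ S, g S < 65536) (L : List Pat) :
    chk L.length (pk f L) (pk g L) = true → ∀ S ∈ L, f S ≤ g S := by
  induction L with
  | nil => simp
  | cons S t ih =>
    intro h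
    have h1 := hf S
    have h2 := hg S
    simp only [List.length_cons, chk, pk, Bool.and_eq_true] at h
    obtain ⟨ha, hb⟩ := h
    have e1 : (f S + 65536 * pk f t) % 65536 = f S := by omega
    have e2 : (g S + 65536 * pk g t) % 65536 = g S := by omega
    have e3 : (f S + 65536 * pk f t) / 65536 = pk f t := by omega
    have e4 : (g S + 65536 * pk g t) / 65536 = pk g t := by omega
    rw [e1, e2] at ha
    rw [e3, e4] at hb
    intro S' hS'
    rcases List.mem_cons.1 hS' with rfl | h'
    · exact Nat.le_of_ble_eq_true ha
    · exact ih hb S' h'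

theorem mem_allPats (S : Pat) : S ∈ allPats := by
  refine List.mem_map.2 ⟨(S 0).toNat + 2 * (S 1).toNat + 4 * (S 2).toNat + 8 * (S 3).toNat +
    16 * (S 4).toNat + 32 * (S 5).toNat, ?_, ?_⟩
  · rw [List.mem_range]
    cases S 0 <;> cases S 1 <;> cases S 2 <;> cases S 3 <;> cases S 4 <;> cases S 5 <;> decide
  · funext i
    unfold bits
    fin_cases i <;> simp only [Fin.mk_one, Fin.zero_eta, Fin.reduceFinMk] <;>
      cases S 0 <;> cases S 1 <;> cases S 2 <;> cases S 3 <;> cases S 4 <;> cases S 5 <;> decide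

theorem toNat_le (b : Bool) : b.toNat ≤ 1 := by cases b <;> simp

theorem cnt_le (S : Pat) : cnt S ≤ 6 := by
  unfold cnt
  have := toNat_le (S 0); have := toNat_le (S 1); have := toNat_le (S 2)
  have := toNat_le (S 3); have := toNat_le (S 4); have := toNat_le (S 5)
  omega

theorem aa_le (i j k : Fin 6) (S : Pat) : aa i j k S ≤ 3 := by
  unfold aa
  have := toNat_le (S i); have := toNat_le (S j); have := toNat_le (S k)
  omega

theorem fVB_le (i j k : Fin 6) (S : Pat) : fVB i j k S ≤ 3 := by
  unfold fVB bb
  have := cnt_le S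
  split_ifs <;> omega

theorem fR_le (i j k : Fin 6) (S : Pat) : fR i j k S ≤ 1 := by unfold fR; split_ifs <;> omega
theorem fNA_le (i j k : Fin 6) (S : Pat) : fNA i j k S ≤ 1 := by unfold fNA; split_ifs <;> omega
theorem fT2_le (i j k : Fin 6) (S : Pat) : fT2 i j k S ≤ 1 := by unfold fT2; split_ifs <;> omega
theorem fE2_le (i j k : Fin 6) (S : Pat) : fE2 i j k S ≤ 1 := by unfold fE2; split_ifs <;> omega

/-- The voters of the triple with a given key. -/
def keySet (m : ℕ) : Finset (Fin 6) := Finset.univ.filter (fun i => Nat.testBit m i.val = true)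

/-- Abstract data extracted from a profile. -/
structure Data where
  J : (Pat → ℝ) →ₗ[ℝ] ℝ
  mono : ∀ F G : Pat → ℝ, (∀ S, F S ≤ G S) → J F ≤ J G
  J1 : ∀ i, J (fun S => (fV i S : ℝ)) = 1
  U : ℝ
  hU : ∀ θ : ℕ, U ≤ θ + J (fun S => (fG θ S : ℝ))
  W : Finset (Fin 6) → ℝ
  isB : Finset (Fin 6) → Bool
  hA : ∀ i j k : Fin 6, i ≠ j → i ≠ k → j ≠ k → isB {i, j, k} = false → ∀ D x : ℕ, x ≤ D →
    x + J (fun S => ((D * fVB i j k S + D * fR i j k S : ℕ) : ℝ)) ≤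
      D * W {i, j, k} + J (fun S => ((x * fNA i j k S : ℕ) : ℝ))
  hB : ∀ i j k : Fin 6, i ≠ j → i ≠ k → j ≠ k → isB {i, j, k} = true → ∀ D y : ℕ, y ≤ D →
    (2 * D + y) + J (fun S => ((D * fVB i j k S + y * fR i j k S : ℕ) : ℝ)) ≤
      D * W {i, j, k} + J (fun S => (((2 * D + y) * fT2 i j k S : ℕ) : ℝ))
  hC : ∀ i j k : Fin 6, i ≠ j → i ≠ k → j ≠ k → ∀ D x y g : ℕ, x ≤ D → y ≤ D →
    2 * D + y ≤ 3 * g + x →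
    x + J (fun S => ((D * fVB i j k S + y * fR i j k S : ℕ) : ℝ)) ≤
      D * W {i, j, k} + J (fun S => ((x * fNA i j k S + g * fE2 i j k S : ℕ) : ℝ))

def Row.tri (w : Row) : Finset (Fin 6) := {w.i, w.j, w.k}

namespace Data
variable (d : Data)

theorem J_add (f g : Pat → ℕ) : d.J (fun S => ((f S + g S : ℕ) : ℝ)) =
    d.J (fun S => (f S : ℝ)) + d.J (fun S => (g S : ℝ)) := by
  rw [← map_add]
  congr 1
  funext S
  simp

theorem J_smul (c : ℕ) (f : Pat → ℕ) : d.J (fun S => ((c * f S : ℕ) : ℝ)) =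
    c * d.J (fun S => (f S : ℝ)) := by
  rw [← smul_eq_mul, ← map_smul]
  congr 1
  funext S
  simp

def Cons (am bm : ℕ) : Prop :=
  (∀ m, Nat.testBit am m = true → d.isB (keySet m) = false) ∧
  (∀ m, Nat.testBit bm m = true → d.isB (keySet m) = true)

end Data

def distinct (w : Row) : Bool := w.i != w.j && w.i != w.k && w.j != w.k

theorem rows_distinct : rows.all distinct = true := by decide +kernel

structure RowGood (w : Row) : Prop where
  hij : w.i ≠ w.j
  hik : w.i ≠ w.k
  hjk : w.j ≠ w.k
  key : w.key = 2 ^ w.i.val + 2 ^ w.j.val + 2 ^ w.k.val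
  vb : w.vb = pk (fVB w.i w.j w.k) allPats
  r : w.r = pk (fR w.i w.j w.k) allPats
  na : w.na = pk (fNA w.i w.j w.k) allPats
  t2 : w.t2 = pk (fT2 w.i w.j w.k) allPats
  e2 : w.e2 = pk (fE2 w.i w.j w.k) allPats

theorem row_good : ∀ w ∈ rows, RowGood w := by
  intro w hw
  have h1 := List.all_eq_true.1 rows_ok w hw
  have h2 := List.all_eq_true.1 rows_distinct w hw
  simp only [Row.ok, distinct, Bool.and_eq_true, beq_iff_eq, bne_iff_ne] at h1 h2
  obtain ⟨⟨⟨⟨⟨a, b⟩, c⟩, d⟩, e⟩, f⟩ := h1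
  obtain ⟨⟨g, h⟩, i⟩ := h2
  exact ⟨g, h, i, a, b, c, d, e, f⟩

theorem keySet_key : ∀ i j k : Fin 6, i ≠ j → i ≠ k → j ≠ k →
    keySet (2 ^ i.val + 2 ^ j.val + 2 ^ k.val) = {i, j, k} := by decide +kernel

theorem bound1 {D x u v : ℕ} (hu : u ≤ 3) (hv : v ≤ 1) (hx : x ≤ D) : D * u + x * v ≤ 4 * D := by
  have h1 := Nat.mul_le_mul (le_refl D) hu
  have h2 := Nat.mul_le_mul hx hv
  omega

theorem bound2 {D x v : ℕ} (hx : x ≤ 4 * D) (hv : v ≤ 1) : x * v ≤ 4 * D := by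
  have h2 := Nat.mul_le_mul hx hv
  omega

theorem go_sound (d : Data) (am bm D tot : ℕ) (hc : d.Cons am bm) (ws : List Row) :
    (∀ w ∈ ws, RowGood w) → ∀ (c pos neg k sm : ℕ) (fp fn : Pat → ℕ) (acc : ℝ),
    go am bm D tot ws c pos neg k sm = true →
    pos = pk fp allPats → neg = pk fn allPats → (∀ S, fp S ≤ sm) → (∀ S, fn S ≤ sm) →
    18 * D * d.U + d.J (fun S => (fp S : ℝ)) + k ≤ tot + d.J (fun S => (fn S : ℝ)) + acc →
    18 * D * d.U ≤ 48 * D + acc + D * (ws.map (fun w => d.W w.tri)).sum := by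
  induction ws with
  | nil =>
    intro _ c pos neg k sm fp fn acc h hp hn hfp hfn hI
    simp only [go, Bool.and_eq_true] at h
    obtain ⟨h1, h2, h3⟩ := h
    have h1 := Nat.le_of_ble_eq_true h1
    have h2 : sm < 65536 := Nat.le_of_ble_eq_true h2
    rw [hp, hn] at h3
    have h4 := chk_sound fn fp (fun S => lt_of_le_of_lt (hfn S) h2)
      (fun S => lt_of_le_of_lt (hfp S) h2) allPats h3
    have h5 := d.mono (fun S => (fn S : ℝ)) (fun S => (fp S : ℝ))
      (fun S => by exact_mod_cast h4 S (mem_allPats S))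
    have h6 : (tot : ℝ) ≤ 48 * D + k := by exact_mod_cast h1
    simp
    linarith
  | cons w ws ih =>
    intro hw c pos neg k sm fp fn acc h hp hn hfp hfn hI
    have g := hw w (by simp)
    have hws : ∀ w ∈ ws, RowGood w := fun w' hw' => hw w' (by simp [hw'])
    have hk : keySet w.key = {w.i, w.j, w.k} := by
      rw [g.key]; exact keySet_key _ _ _ g.hij g.hik g.hjk
    rw [List.map_cons, List.sum_cons]
    have key : ∀ (c' k' : ℕ) (gp gn : Pat → ℕ), (∀ S, gp S ≤ 4 * D) → (∀ S, gn S ≤ 4 * D) →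
        k' + d.J (fun S => (gp S : ℝ)) ≤ D * d.W w.tri + d.J (fun S => (gn S : ℝ)) →
        go am bm D tot ws c' (pos + pk gp allPats) (neg + pk gn allPats) (k + k') (sm + 4 * D)
          = true →
        18 * D * d.U ≤ 48 * D + acc + D * (d.W w.tri + (ws.map (fun w => d.W w.tri)).sum) := by
      intro c' k' gp gn h1 h2 h3 h4
      have := ih hws c' _ _ _ _ (fun S => fp S + gp S) (fun S => fn S + gn S)
        (acc + D * d.W w.tri) h4 (by rw [hp, pk_add]) (by rw [hn, pk_add])
        (fun S => add_le_add (hfp S) (h1 S)) (fun S => add_le_add (hfn S) (h2 S))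
        (by rw [d.J_add, d.J_add]; push_cast; linarith)
      linarith
    rw [go] at h
    cases ha : Nat.testBit am w.key with
    | true =>
      have hs := hc.1 _ ha
      rw [hk] at hs
      rw [ha] at h
      simp only [cond_true, Bool.and_eq_true] at h
      obtain ⟨hx, h⟩ := h
      have hx := Nat.le_of_ble_eq_true hx
      refine key (c / 32) (c % 32) (fun S => D * fVB w.i w.j w.k S + D * fR w.i w.j w.k S)
        (fun S => (c % 32) * fNA w.i w.j w.k S) ?_ ?_
        (d.hA w.i w.j w.k g.hij g.hik g.hjk hs D _ hx) ?_
      · intro S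
        exact bound1 (fVB_le w.i w.j w.k S) (fR_le w.i w.j w.k S) le_rfl
      · intro S
        exact bound2 (by omega) (fNA_le w.i w.j w.k S)
      · rw [pk_add, pk_smul, pk_smul, pk_smul, ← g.vb, ← g.r, ← g.na]
        exact h
    | false =>
      rw [ha] at h
      cases hb : Nat.testBit bm w.key with
      | true =>
        have hs := hc.2 _ hb
        rw [hk] at hs
        rw [hb] at h
        simp only [cond_true, cond_false, Bool.and_eq_true] at h
        obtain ⟨hx, h⟩ := h
        have hx := Nat.le_of_ble_eq_true hx
        refine key (c / 32) (2 * D + c % 32)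
          (fun S => D * fVB w.i w.j w.k S + (c % 32) * fR w.i w.j w.k S)
          (fun S => (2 * D + c % 32) * fT2 w.i w.j w.k S) ?_ ?_
          (by have := d.hB w.i w.j w.k g.hij g.hik g.hjk hs D _ hx
              rw [Row.tri]; push_cast at this ⊢; exact this) ?_
        · intro S
          exact bound1 (fVB_le w.i w.j w.k S) (fR_le w.i w.j w.k S) hx
        · intro S
          exact bound2 (by omega) (fT2_le w.i w.j w.k S)
        · rw [pk_add, pk_smul, pk_smul, pk_smul, ← g.vb, ← g.r, ← g.t2]
          exact h
      | false =>
        rw [hb] at h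
        simp only [cond_false, Bool.and_eq_true] at h
        obtain ⟨hx, hy, h⟩ := h
        have hx := Nat.le_of_ble_eq_true hx
        have hy := Nat.le_of_ble_eq_true hy
        refine key (c / 1024) (c % 32)
          (fun S => D * fVB w.i w.j w.k S + (c / 32 % 32) * fR w.i w.j w.k S)
          (fun S => (c % 32) * fNA w.i w.j w.k S +
            ((2 * D + c / 32 % 32 - c % 32 + 2) / 3) * fE2 w.i w.j w.k S) ?_ ?_
          (d.hC w.i w.j w.k g.hij g.hik g.hjk D _ _ _ hx hy (by omega)) ?_
        · intro S
          exact bound1 (fVB_le w.i w.j w.k S) (fR_le w.i w.j w.k S) hy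
        · intro S
          have h1 := fNA_le w.i w.j w.k S
          have h2 := fE2_le w.i w.j w.k S
          have h3 : (2 * D + c / 32 % 32 - c % 32 + 2) / 3 ≤ 2 * D := by omega
          have h4 := Nat.mul_le_mul hx h1
          have h5 := Nat.mul_le_mul h3 h2
          omega
        · rw [pk_add, pk_add, pk_smul, pk_smul, pk_smul, pk_smul, ← g.vb, ← g.r, ← g.na, ← g.e2]
          exact h

theorem leaf_sound (d : Data) (am bm c : ℕ) (hc : d.Cons am bm) (h : leafCk am bm c = true) :
    18 * d.U ≤ 48 + (rows.map (fun w => d.W w.tri)).sum := by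
  unfold leafCk at h
  generalize c / 9223372036854775808 = c' at h
  generalize c / 2097152 % 128 = l0 at h
  generalize c / 268435456 % 128 = l1 at h
  generalize c / 34359738368 % 128 = l2 at h
  generalize c / 4398046511104 % 128 = l3 at h
  generalize c / 562949953421312 % 128 = l4 at h
  generalize c / 72057594037927936 % 128 = l5 at h
  generalize c / 32 % 256 = g2 at h
  generalize c / 8192 % 256 = g3 at h
  generalize c % 32 = D at h
  rw [Bool.and_eq_true, Bool.and_eq_true] at h
  obtain ⟨h, hg, hD⟩ := h
  have hg := Nat.le_of_ble_eq_true hg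
  have hD := Nat.le_of_ble_eq_true hD
  obtain ⟨g4, hg4⟩ := Nat.exists_eq_add_of_le hg
  have e4 : 18 * D - g2 - g3 = g4 := by omega
  rw [e4] at h
  have ht := gv_ok
  simp only [Bool.and_eq_true, beq_iff_eq] at ht
  obtain ⟨⟨⟨⟨⟨⟨⟨⟨t2, t3⟩, t4⟩, v0⟩, v1⟩, v2⟩, v3⟩, v4⟩, v5⟩ := ht
  have hmain := go_sound d am bm D _ hc rows row_good _ _ _ _ _
    (fun S => l0 * fV 0 S + l1 * fV 1 S + l2 * fV 2 S + l3 * fV 3 S + l4 * fV 4 S + l5 * fV 5 S)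
    (fun S => g2 * fG 2 S + g3 * fG 3 S + g4 * fG 4 S) 0 h
    (by simp only [pk_add, pk_smul]; rw [v0, v1, v2, v3, v4, v5])
    (by simp only [pk_add, pk_smul]; rw [t2, t3, t4])
    (by
      intro S
      have h0 := Nat.mul_le_mul (le_refl l0) (toNat_le (S 0))
      have h1 := Nat.mul_le_mul (le_refl l1) (toNat_le (S 1))
      have h2 := Nat.mul_le_mul (le_refl l2) (toNat_le (S 2))
      have h3 := Nat.mul_le_mul (le_refl l3) (toNat_le (S 3))
      have h4 := Nat.mul_le_mul (le_refl l4) (toNat_le (S 4))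
      have h5 := Nat.mul_le_mul (le_refl l5) (toNat_le (S 5))
      unfold fV
      omega)
    (by
      intro S
      have hS := cnt_le S
      have h2 := Nat.mul_le_mul (le_refl g2) (show fG 2 S ≤ 4 by unfold fG; omega)
      have h3 := Nat.mul_le_mul (le_refl g3) (show fG 3 S ≤ 4 by unfold fG; omega)
      have h4 := Nat.mul_le_mul (le_refl g4) (show fG 4 S ≤ 4 by unfold fG; omega)
      omega)
    (by
      simp only [d.J_add, d.J_smul, d.J1]
      have u2 := mul_le_mul_of_nonneg_left (d.hU 2) (Nat.cast_nonneg (α := ℝ) g2)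
      have u3 := mul_le_mul_of_nonneg_left (d.hU 3) (Nat.cast_nonneg (α := ℝ) g3)
      have u4 := mul_le_mul_of_nonneg_left (d.hU 4) (Nat.cast_nonneg (α := ℝ) g4)
      have e : (18 * D : ℝ) = g2 + g3 + g4 := by exact_mod_cast hg4
      rw [e]
      push_cast at u2 u3 u4 ⊢
      linarith)
  have hDr : (1 : ℝ) ≤ D := by exact_mod_cast hD
  have : (D : ℝ) * (18 * d.U) ≤ D * (48 + (rows.map (fun w => d.W w.tri)).sum) := by linarith
  exact le_of_mul_le_mul_left this (by linarith)

theorem pr_sound (d : Data) (am bm c : ℕ) (hc : d.Cons am bm) (ws : List Row)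
    (h : pr am bm c ws = true) :
    ws.map (fun w => d.isB (keySet (2 ^ im c w.i.val + 2 ^ im c w.j.val + 2 ^ im c w.k.val))) <
      ws.map (fun w => d.isB (keySet w.key)) := by
  induction ws with
  | nil => simp [pr] at h
  | cons w ws ih =>
    rw [List.map_cons, List.map_cons, List.cons_lt_cons_iff]
    rw [pr] at h
    generalize 2 ^ im c w.i.val + 2 ^ im c w.j.val + 2 ^ im c w.k.val = m at h ⊢
    cases ha : Nat.testBit am m with
    | true =>
      rw [ha] at h
      rw [hc.1 _ ha]
      cases hb : Nat.testBit am w.key with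
      | true =>
        rw [hb] at h
        rw [hc.1 _ hb]
        exact Or.inr ⟨rfl, ih h⟩
      | false =>
        rw [hb] at h
        simp only [cond_true, cond_false] at h
        rw [hc.2 _ h]
        left; decide
    | false =>
      rw [ha] at h
      simp only [cond_false, Bool.and_eq_true] at h
      rw [hc.2 _ h.1, hc.2 _ h.2.1]
      exact Or.inr ⟨rfl, ih h.2.2⟩

theorem lor_surj : ∀ f : Fin 6 → Fin 6,
    (2 ^ (f 0).val ||| 2 ^ (f 1).val ||| 2 ^ (f 2).val ||| 2 ^ (f 3).val ||| 2 ^ (f 4).val |||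
      2 ^ (f 5).val) = 63 → Function.Surjective f := by
  intro f h i
  have h1 : Nat.testBit 63 i.val = true := by revert i; decide
  rw [← h] at h1
  simp only [Nat.testBit_or, Nat.testBit_two_pow, Bool.or_eq_true, decide_eq_true_eq] at h1
  rcases h1 with ((((h1 | h1) | h1) | h1) | h1) | h1 <;> exact ⟨_, Fin.ext h1⟩

def Lexmin (d : Data) : Prop := ∀ σ : Equiv.Perm (Fin 6),
  ¬ (rows.map (fun w => d.isB {σ w.i, σ w.j, σ w.k}) < rows.map (fun w => d.isB w.tri))

theorem prune_sound (d : Data) (am bm c : ℕ) (hc : d.Cons am bm) (hl : Lexmin d)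
    (h1 : permOk c = true) (h2 : pr am bm c rows = true) : False := by
  simp only [permOk, Bool.and_eq_true] at h1
  obtain ⟨⟨⟨⟨⟨⟨b0, b1⟩, b2⟩, b3⟩, b4⟩, b5⟩, hs⟩ := h1
  have b0 : im c 0 < 6 := Nat.le_of_ble_eq_true b0
  have b1 : im c 1 < 6 := Nat.le_of_ble_eq_true b1
  have b2 : im c 2 < 6 := Nat.le_of_ble_eq_true b2
  have b3 : im c 3 < 6 := Nat.le_of_ble_eq_true b3
  have b4 : im c 4 < 6 := Nat.le_of_ble_eq_true b4
  have b5 : im c 5 < 6 := Nat.le_of_ble_eq_true b5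
  have hs := Nat.eq_of_beq_eq_true hs
  have hb : ∀ i : Fin 6, im c i.val < 6 := by
    intro i; fin_cases i <;> assumption
  have hsur := lor_surj (fun i => ⟨im c i.val, hb i⟩) hs
  have hbij : Function.Bijective (fun i : Fin 6 => (⟨im c i.val, hb i⟩ : Fin 6)) :=
    Finite.surjective_iff_bijective.1 hsur
  refine hl (Equiv.ofBijective _ hbij) ?_
  have h3 := pr_sound d am bm c hc rows h2
  have e1 : rows.map (fun w => d.isB (keySet w.key)) = rows.map (fun w => d.isB w.tri) := by
    apply List.map_congr_left
    intro w hw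
    have g := row_good w hw
    rw [g.key, keySet_key _ _ _ g.hij g.hik g.hjk]; rfl
  rw [← e1]
  convert h3 using 1
  apply List.map_congr_left
  intro w hw
  have g := row_good w hw
  have hi := hbij.1
  exact congrArg d.isB (keySet_key _ _ _ (fun h => g.hij (hi h)) (fun h => g.hik (hi h))
    (fun h => g.hjk (hi h))).symm

theorem ck_sound (d : Data) (hl : Lexmin d) (t : DTree) : ∀ (ws : List Row) (am bm : ℕ),
    d.Cons am bm → ck t ws am bm = true →
    18 * d.U ≤ 48 + (rows.map (fun w => d.W w.tri)).sum := by
  induction t with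
  | l c => intro ws am bm hc h; exact leaf_sound d am bm c hc (by simpa [ck] using h)
  | p c =>
    intro ws am bm hc h
    rw [ck, Bool.and_eq_true] at h
    exact (prune_sound d am bm c hc hl h.1 h.2).elim
  | n a b iha ihb =>
    intro ws am bm hc h
    cases ws with
    | nil => simp [ck] at h
    | cons w ws =>
      rw [ck, Bool.and_eq_true] at h
      cases hw : d.isB (keySet w.key) with
      | false =>
        refine iha ws _ _ ⟨?_, hc.2⟩ h.1
        intro m hm
        rw [Nat.testBit_or, Bool.or_eq_true, Nat.testBit_two_pow, decide_eq_true_eq] at hm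
        rcases hm with hm | hm
        · exact hc.1 m hm
        · rw [← hm]; exact hw
      | true =>
        refine ihb ws _ _ ⟨hc.1, ?_⟩ h.2
        intro m hm
        rw [Nat.testBit_or, Bool.or_eq_true, Nat.testBit_two_pow, decide_eq_true_eq] at hm
        rcases hm with hm | hm
        · exact hc.2 m hm
        · rw [← hm]; exact hw

theorem lp_bound (d : Data) (hl : Lexmin d) :
    18 * d.U ≤ 48 + (rows.map (fun w => d.W w.tri)).sum :=
  ck_sound d hl root rows 0 0 ⟨by simp, by simp⟩ root_ok


open MeasureTheory

section Real

variable {m : ℕ}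

/-- Approval pattern for project `j` at level `t`. -/
noncomputable def pat (P : Fin 6 → Fin m → ℝ) (j : Fin m) (t : ℝ) : Pat :=
  fun i => decide (t ≤ P i j)

theorem meas_dec (c : ℝ) : Measurable (fun t : ℝ => decide (t ≤ c)) := by
  apply measurable_to_bool
  have : (fun t : ℝ => decide (t ≤ c)) ⁻¹' {true} = Set.Iic c := by
    ext t; simp
  rw [this]
  exact measurableSet_Iic

theorem integ (P : Fin 6 → Fin m → ℝ) (j : Fin m) (c : ℝ) (F : Pat → Bool → ℝ) :
    IntegrableOn (fun t => F (pat P j t) (decide (t ≤ c))) (Set.Ioc (0 : ℝ) 1) := by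
  have hm : Measurable (fun t => F (pat P j t) (decide (t ≤ c))) := by
    have h1 : Measurable (fun t : ℝ => ((pat P j t, decide (t ≤ c)) : Pat × Bool)) := by
      refine Measurable.prodMk ?_ (meas_dec c)
      exact measurable_pi_iff.2 (fun i => meas_dec _)
    have h2 : Measurable (fun q : Pat × Bool => F q.1 q.2) := Measurable.of_discrete
    exact h2.comp h1
  obtain ⟨C, hC⟩ := (Set.finite_range (fun q : Pat × Bool => ‖F q.1 q.2‖)).bddAbove
  refine Measure.integrableOn_of_bounded (M := C) (by simp) hm.aestronglyMeasurable ?_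
  exact Filter.Eventually.of_forall (fun t => hC ⟨(pat P j t, decide (t ≤ c)), rfl⟩)

/-- Sum over projects of the integral over levels. -/
noncomputable def K (P : Fin 6 → Fin m → ℝ) (z : Fin m → ℝ) : (Pat → Bool → ℝ) →ₗ[ℝ] ℝ where
  toFun F := ∑ j, ∫ t in Set.Ioc (0 : ℝ) 1, F (pat P j t) (decide (t ≤ z j))
  map_add' F G := by
    rw [← Finset.sum_add_distrib]
    refine Finset.sum_congr rfl (fun j _ => ?_)
    exact integral_add (integ P j (z j) F) (integ P j (z j) G)
  map_smul' c F := by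
    rw [RingHom.id_apply, smul_eq_mul, Finset.mul_sum]
    refine Finset.sum_congr rfl (fun j _ => ?_)
    exact integral_const_mul c _

theorem K_apply (P : Fin 6 → Fin m → ℝ) (z : Fin m → ℝ) (F : Pat → Bool → ℝ) :
    K P z F = ∑ j, ∫ t in Set.Ioc (0 : ℝ) 1, F (pat P j t) (decide (t ≤ z j)) := rfl

theorem K_mono' (P : Fin 6 → Fin m → ℝ) (z : Fin m → ℝ) (F G : Pat → Bool → ℝ)
    (h : ∀ j, ∀ t, F (pat P j t) (decide (t ≤ z j)) ≤ G (pat P j t) (decide (t ≤ z j))) :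
    K P z F ≤ K P z G := by
  rw [K_apply, K_apply]
  exact Finset.sum_le_sum (fun j _ =>
    integral_mono (integ P j (z j) F) (integ P j (z j) G) (fun t => h j t))

theorem K_mono (P : Fin 6 → Fin m → ℝ) (z : Fin m → ℝ) (F G : Pat → Bool → ℝ)
    (h : ∀ S b, F S b ≤ G S b) : K P z F ≤ K P z G :=
  K_mono' P z F G (fun _ _ => h _ _)

noncomputable def JJ (P : Fin 6 → Fin m → ℝ) : (Pat → ℝ) →ₗ[ℝ] ℝ where
  toFun F := K P 0 (fun S _ => F S)
  map_add' F G := (K P 0).map_add (fun S _ => F S) (fun S _ => G S)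
  map_smul' c F := (K P 0).map_smul c (fun S _ => F S)

theorem JJ_apply (P : Fin 6 → Fin m → ℝ) (F : Pat → ℝ) :
    JJ P F = ∑ j, ∫ t in Set.Ioc (0 : ℝ) 1, F (pat P j t) := rfl

theorem K_eq_JJ (P : Fin 6 → Fin m → ℝ) (z : Fin m → ℝ) (F : Pat → ℝ) :
    K P z (fun S _ => F S) = JJ P F := rfl

theorem JJ_mono (P : Fin 6 → Fin m → ℝ) (F G : Pat → ℝ) (h : ∀ S, F S ≤ G S) :
    JJ P F ≤ JJ P G := K_mono P 0 _ _ (fun S _ => h S)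

theorem int_le (c : ℝ) (h0 : 0 ≤ c) (h1 : c ≤ 1) :
    ∫ t in Set.Ioc (0 : ℝ) 1, (if t ≤ c then (1 : ℝ) else 0) = c := by
  have h : (fun t : ℝ => if t ≤ c then (1 : ℝ) else 0) = (Set.Iic c).indicator (fun _ => 1) := by
    funext t; simp [Set.indicator]
  rw [h, setIntegral_indicator measurableSet_Iic]
  have : Set.Ioc (0 : ℝ) 1 ∩ Set.Iic c = Set.Ioc 0 c := by
    ext t; simp only [Set.mem_inter_iff, Set.mem_Ioc, Set.mem_Iic]
    constructor
    · rintro ⟨⟨a, b⟩, e⟩; exact ⟨a, e⟩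
    · rintro ⟨a, e⟩; exact ⟨⟨a, e.trans h1⟩, e⟩
  rw [this]
  simp [h0]

theorem bud_le {b : Fin m → ℝ} (hb : IsBudget b) (j : Fin m) : b j ≤ 1 := by
  rw [← hb.2]
  exact Finset.single_le_sum (fun i _ => hb.1 i) (Finset.mem_univ j)

theorem K_z (P : Fin 6 → Fin m → ℝ) {z : Fin m → ℝ} (hz : IsBudget z) :
    K P z (fun _ b => if b then (1 : ℝ) else 0) = 1 := by
  rw [K_apply]
  refine Eq.trans ?_ hz.2
  refine Finset.sum_congr rfl (fun j _ => ?_)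
  simp only [decide_eq_true_eq]
  exact int_le _ (hz.1 j) (bud_le hz j)

theorem K_util {P : Fin 6 → Fin m → ℝ} (hP : ∀ i, IsBudget (P i)) {z : Fin m → ℝ}
    (hz : IsBudget z) (i : Fin 6) :
    util z (P i) = K P z (fun S b => if b then ((S i).toNat : ℝ) else 0) := by
  rw [K_apply, util]
  refine Finset.sum_congr rfl (fun j _ => ?_)
  rw [← int_le (min (z j) (P i j)) (le_min (hz.1 j) ((hP i).1 j))
    ((min_le_left _ _).trans (bud_le hz j))]
  refine integral_congr_ae (Filter.Eventually.of_forall (fun t => ?_))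
  by_cases h1 : t ≤ z j <;> by_cases h2 : t ≤ P i j <;> simp [h1, h2, pat]

theorem JJ_one {P : Fin 6 → Fin m → ℝ} (hP : ∀ i, IsBudget (P i)) (i : Fin 6) :
    JJ P (fun S => (fV i S : ℝ)) = 1 := by
  rw [JJ_apply]
  refine Eq.trans ?_ (hP i).2
  refine Finset.sum_congr rfl (fun j _ => ?_)
  rw [← int_le (P i j) ((hP i).1 j) (bud_le (hP i) j)]
  refine integral_congr_ae (Filter.Eventually.of_forall (fun t => ?_))
  by_cases h2 : t ≤ P i j <;> simp [h2, pat, fV]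

theorem exists_between (L H : Fin m → ℝ) (h0 : ∀ j, 0 ≤ L j) (h : ∀ j, L j ≤ H j)
    (hL : ∑ j, L j ≤ 1) (hH : 1 ≤ ∑ j, H j) :
    ∃ z, IsBudget z ∧ ∀ j, L j ≤ z j ∧ z j ≤ H j := by
  by_cases he : ∑ j, L j = 1
  · exact ⟨L, ⟨h0, he⟩, fun j => ⟨le_rfl, h j⟩⟩
  have hlt : ∑ j, L j < 1 := lt_of_le_of_ne hL he
  have hd : 0 < ∑ j, H j - ∑ j, L j := by linarith
  obtain ⟨c, hc⟩ : ∃ c, c = (1 - ∑ j, L j) / (∑ j, H j - ∑ j, L j) := ⟨_, rfl⟩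
  have hc0 : 0 ≤ c := by rw [hc]; exact div_nonneg (by linarith) hd.le
  have hc1 : c ≤ 1 := by rw [hc, div_le_one hd]; linarith
  have hc2 : c * (∑ j, H j - ∑ j, L j) = 1 - ∑ j, L j := by rw [hc]; field_simp
  have hb : ∀ j, L j ≤ L j + c * (H j - L j) ∧ L j + c * (H j - L j) ≤ H j := by
    intro j
    have h1 : 0 ≤ H j - L j := by linarith [h j]
    have h2 := mul_nonneg hc0 h1
    have h3 := mul_nonneg (sub_nonneg.2 hc1) h1
    constructor <;> linarith
  refine ⟨fun j => L j + c * (H j - L j), ⟨fun j => (h0 j).trans (hb j).1, ?_⟩, hb⟩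
  rw [Finset.sum_add_distrib, ← Finset.mul_sum, Finset.sum_sub_distrib, hc2]
  ring

theorem sum_three {i j k : Fin 6} (hij : i ≠ j) (hik : i ≠ k) (hjk : j ≠ k) (f : Fin 6 → ℝ) :
    ∑ r ∈ ({i, j, k} : Finset (Fin 6)), f r = f i + (f j + f k) := by
  rw [Finset.sum_insert (by simp [hij, hik]), Finset.sum_insert (by simp [hjk]),
    Finset.sum_singleton]

theorem util_three {P : Fin 6 → Fin m → ℝ} (hP : ∀ i, IsBudget (P i)) {z : Fin m → ℝ}
    (hz : IsBudget z) {i j k : Fin 6} (hij : i ≠ j) (hik : i ≠ k) (hjk : j ≠ k) :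
    ∑ r ∈ ({i, j, k} : Finset (Fin 6)), util z (P r) =
      K P z (fun S b => if b then (aa i j k S : ℝ) else 0) := by
  rw [sum_three hij hik hjk, K_util hP hz, K_util hP hz, K_util hP hz, ← map_add, ← map_add]
  congr 1
  funext S b
  cases b <;> simp [aa]

theorem cnt_sum (S : Pat) : (cnt S : ℝ) = ∑ i, ((S i).toNat : ℝ) := by
  rw [Fin.sum_univ_six]
  unfold cnt
  push_cast
  ring

theorem aa_add (i j k : Fin 6) (hij : i ≠ j) (hik : i ≠ k) (hjk : j ≠ k) (S : Pat) :
    (∑ r ∈ ({i, j, k} : Finset (Fin 6))ᶜ, (S r).toNat) + aa i j k S = cnt S := by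
  have h1 : aa i j k S = ∑ r ∈ ({i, j, k} : Finset (Fin 6)), (S r).toNat := by
    rw [Finset.sum_insert (by simp [hij, hik]), Finset.sum_insert (by simp [hjk]),
      Finset.sum_singleton]
    rfl
  rw [h1, Finset.sum_compl_add_sum, Fin.sum_univ_six]
  unfold cnt
  omega

theorem bb_eq {i j k : Fin 6} (hij : i ≠ j) (hik : i ≠ k) (hjk : j ≠ k) (S : Pat) :
    bb i j k S = ∑ r ∈ ({i, j, k} : Finset (Fin 6))ᶜ, (S r).toNat := by
  have := aa_add i j k hij hik hjk S
  unfold bb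
  omega

theorem bb_le {i j k : Fin 6} (hij : i ≠ j) (hik : i ≠ k) (hjk : j ≠ k) (S : Pat) :
    bb i j k S ≤ 3 := by
  rw [bb_eq hij hik hjk]
  refine (Finset.sum_le_card_nsmul _ _ 1 (fun r _ => toNat_le _)).trans ?_
  rw [Finset.card_compl, Finset.card_eq_three.2 ⟨i, j, k, hij, hik, hjk, rfl⟩]
  simp

theorem util_compl {P : Fin 6 → Fin m → ℝ} (hP : ∀ i, IsBudget (P i)) {z : Fin m → ℝ}
    (hz : IsBudget z) {i j k : Fin 6} (hij : i ≠ j) (hik : i ≠ k) (hjk : j ≠ k) :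
    ∑ r ∈ ({i, j, k} : Finset (Fin 6))ᶜ, util z (P r) =
      K P z (fun S b => if b then (bb i j k S : ℝ) else 0) := by
  rw [Finset.sum_congr rfl (fun r _ => K_util hP hz r), ← map_sum]
  congr 1
  funext S b
  rw [bb_eq hij hik hjk]
  cases b <;> simp [Finset.sum_apply]

theorem util_all {P : Fin 6 → Fin m → ℝ} (hP : ∀ i, IsBudget (P i)) {z : Fin m → ℝ}
    (hz : IsBudget z) :
    ∑ r, util z (P r) = K P z (fun S b => if b then (cnt S : ℝ) else 0) := by
  rw [Finset.sum_congr rfl (fun r _ => K_util hP hz r), ← map_sum]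
  congr 1
  funext S b
  rw [cnt_sum]
  cases b <;> simp [Finset.sum_apply]

/-- Loss of an outcome at a level. -/
def slack (i j k : Fin 6) (p : ℕ) (S : Pat) (b : Bool) : ℝ :=
  ((aa i j k S - p : ℕ) : ℝ) - if b then (aa i j k S : ℝ) - p else 0

theorem slack_le {P : Fin 6 → Fin m → ℝ} (hP : ∀ i, IsBudget (P i)) {z : Fin m → ℝ}
    {i j k : Fin 6} (hij : i ≠ j) (hik : i ≠ k) (hjk : j ≠ k)
    (hz : MedianOutcomeOn P {i, j, k} z) (p : ℕ) (L H : Fin m → ℝ)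
    (h0 : ∀ j, 0 ≤ L j) (h : ∀ j, L j ≤ H j)
    (hL : ∑ j, L j ≤ 1) (hH : 1 ≤ ∑ j, H j)
    (hl : ∀ q t, p + 1 ≤ aa i j k (pat P q t) → t ≤ L q)
    (hh : ∀ q t, t ≤ H q → p ≤ aa i j k (pat P q t)) :
    K P z (slack i j k p) ≤ 0 := by
  obtain ⟨z', hz', hb⟩ := exists_between L H h0 h hL hH
  have h1 := hz.2 z' hz'
  rw [util_three hP hz' hij hik hjk, util_three hP hz.1 hij hik hjk] at h1
  have h2 : K P z' ((fun S _ => ((aa i j k S - p : ℕ) : ℝ)) +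
      (p : ℝ) • (fun _ b => if b then (1 : ℝ) else 0)) ≤
      K P z' (fun S b => if b then (aa i j k S : ℝ) else 0) := by
    apply K_mono'
    intro q t
    simp only [Pi.add_apply, Pi.smul_apply, smul_eq_mul, decide_eq_true_eq]
    by_cases ht : t ≤ z' q
    · have := hh q t (ht.trans (hb q).2)
      simp only [ht, if_true]
      rw [Nat.cast_sub this]
      linarith
    · have : ¬ (p + 1 ≤ aa i j k (pat P q t)) := fun h' => ht ((hl q t h').trans (hb q).1)
      have e : aa i j k (pat P q t) - p = 0 := by omega
      simp [ht, e]
  rw [map_add, map_smul, K_z P hz', K_eq_JJ, ← K_eq_JJ P z] at h2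
  have h3 : slack i j k p = (fun S _ => ((aa i j k S - p : ℕ) : ℝ)) -
      ((fun S b => if b then (aa i j k S : ℝ) else 0) -
      (p : ℝ) • (fun _ b => if b then (1 : ℝ) else 0)) := by
    funext S b
    cases b <;> simp [slack]
  rw [h3, map_sub, map_sub, map_smul, K_z P hz.1]
  linarith

theorem aa_pat (P : Fin 6 → Fin m → ℝ) (i j k : Fin 6) (q : Fin m) (t : ℝ) :
    (1 ≤ aa i j k (pat P q t) ↔ t ≤ max (P i q) (max (P j q) (P k q))) ∧
    (2 ≤ aa i j k (pat P q t) ↔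
      t ≤ max (min (P i q) (P j q)) (max (min (P i q) (P k q)) (min (P j q) (P k q)))) ∧
    (3 ≤ aa i j k (pat P q t) ↔ t ≤ min (P i q) (min (P j q) (P k q))) := by
  simp only [le_max_iff, le_min_iff, aa, pat]
  by_cases h1 : t ≤ P i q <;> by_cases h2 : t ≤ P j q <;> by_cases h3 : t ≤ P k q <;>
    simp [h1, h2, h3]

theorem JJ_T2 {P : Fin 6 → Fin m → ℝ} (hP : ∀ i, IsBudget (P i)) (i j k : Fin 6) :
    JJ P (fun S => (fT2 i j k S : ℝ)) = ∑ q,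
      max (min (P i q) (P j q)) (max (min (P i q) (P k q)) (min (P j q) (P k q))) := by
  rw [JJ_apply]
  refine Finset.sum_congr rfl (fun q _ => ?_)
  have g0 : ∀ r, 0 ≤ P r q := fun r => (hP r).1 q
  have g1 : ∀ r, P r q ≤ 1 := fun r => bud_le (hP r) q
  rw [← int_le (max (min (P i q) (P j q)) (max (min (P i q) (P k q)) (min (P j q) (P k q))))
    (le_max_of_le_left (le_min (g0 _) (g0 _)))
    (max_le ((min_le_left _ _).trans (g1 _)) (max_le ((min_le_left _ _).trans (g1 _))
      ((min_le_left _ _).trans (g1 _))))]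
  refine integral_congr_ae (Filter.Eventually.of_forall (fun t => ?_))
  simp only [fT2, (aa_pat P i j k q t).2.1]
  split_ifs <;> simp

theorem slackA {P : Fin 6 → Fin m → ℝ} (hP : ∀ i, IsBudget (P i)) {z : Fin m → ℝ}
    {i j k : Fin 6} (hij : i ≠ j) (hik : i ≠ k) (hjk : j ≠ k)
    (hz : MedianOutcomeOn P {i, j, k} z) (ht : JJ P (fun S => (fT2 i j k S : ℝ)) ≤ 1) :
    K P z (slack i j k 1) ≤ 0 := by
  rw [JJ_T2 hP] at ht
  have g0 : ∀ r q, 0 ≤ P r q := fun r q => (hP r).1 q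
  refine slack_le hP hij hik hjk hz 1 _ (fun q => max (P i q) (max (P j q) (P k q)))
    (fun q => le_max_of_le_left (le_min (g0 _ _) (g0 _ _))) ?_ ht ?_ ?_ ?_
  · intro q
    refine max_le ?_ (max_le ?_ ?_)
    · exact (min_le_left _ _).trans (le_max_left _ _)
    · exact (min_le_left _ _).trans (le_max_left _ _)
    · exact (min_le_left _ _).trans (le_max_of_le_right (le_max_left _ _))
  · rw [← (hP i).2]
    exact Finset.sum_le_sum (fun q _ => le_max_left _ _)
  · intro q t; exact (aa_pat P i j k q t).2.1.1
  · intro q t; exact (aa_pat P i j k q t).1.2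

theorem slackB {P : Fin 6 → Fin m → ℝ} (hP : ∀ i, IsBudget (P i)) {z : Fin m → ℝ}
    {i j k : Fin 6} (hij : i ≠ j) (hik : i ≠ k) (hjk : j ≠ k)
    (hz : MedianOutcomeOn P {i, j, k} z) (ht : 1 ≤ JJ P (fun S => (fT2 i j k S : ℝ))) :
    K P z (slack i j k 2) ≤ 0 := by
  rw [JJ_T2 hP] at ht
  have g0 : ∀ r q, 0 ≤ P r q := fun r q => (hP r).1 q
  refine slack_le hP hij hik hjk hz 2 (fun q => min (P i q) (min (P j q) (P k q))) _
    (fun q => le_min (g0 _ _) (le_min (g0 _ _) (g0 _ _))) ?_ ?_ ht ?_ ?_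
  · intro q
    exact le_max_of_le_left (le_min (min_le_left _ _) ((min_le_right _ _).trans (min_le_left _ _)))
  · rw [← (hP i).2]
    exact Finset.sum_le_sum (fun q _ => min_le_left _ _)
  · intro q t; exact (aa_pat P i j k q t).2.2.1
  · intro q t; exact (aa_pat P i j k q t).2.1.2

set_option maxHeartbeats 2000000 in
theorem boundA {P : Fin 6 → Fin m → ℝ} (hP : ∀ i, IsBudget (P i)) {z : Fin m → ℝ}
    {i j k : Fin 6} (hij : i ≠ j) (hik : i ≠ k) (hjk : j ≠ k)
    (hz : MedianOutcomeOn P {i, j, k} z) (ht : JJ P (fun S => (fT2 i j k S : ℝ)) ≤ 1)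
    (D x : ℕ) (hx : x ≤ D) :
    x + JJ P (fun S => ((D * fVB i j k S + D * fR i j k S : ℕ) : ℝ)) ≤
      D * (∑ r ∈ ({i, j, k} : Finset (Fin 6))ᶜ, util z (P r)) +
        JJ P (fun S => ((x * fNA i j k S : ℕ) : ℝ)) := by
  have hs := slackA hP hij hik hjk hz ht
  have h1 : K P z ((x : ℝ) • (fun _ b => if b then (1 : ℝ) else 0) +
      (fun S _ => ((D * fVB i j k S + D * fR i j k S : ℕ) : ℝ))) ≤
      K P z ((D : ℝ) • (fun S b => if b then (bb i j k S : ℝ) else 0) +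
        (fun S _ => ((x * fNA i j k S : ℕ) : ℝ)) + (3 * D : ℝ) • slack i j k 1) := by
    apply K_mono
    intro S b
    have ha := aa_le i j k S
    have hb := bb_le hij hik hjk S
    have hx' : (x : ℝ) ≤ D := by exact_mod_cast hx
    have hx0 : (0 : ℝ) ≤ x := Nat.cast_nonneg x
    simp only [Pi.add_apply, Pi.smul_apply, smul_eq_mul, slack, fVB, fR, fNA]
    generalize aa i j k S = a at ha ⊢
    generalize bb i j k S = c at hb ⊢
    interval_cases a <;> interval_cases c <;> cases b <;> norm_num <;> linarith
  rw [map_add, map_add, map_add, map_smul, map_smul, map_smul, K_z P hz.1, K_eq_JJ, K_eq_JJ,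
    ← util_compl hP hz.1 hij hik hjk] at h1
  simp only [smul_eq_mul, mul_one] at h1
  have h2 : (3 * D : ℝ) * K P z (slack i j k 1) ≤ 0 :=
    mul_nonpos_of_nonneg_of_nonpos (by positivity) hs
  linarith

set_option maxHeartbeats 2000000 in
theorem boundB {P : Fin 6 → Fin m → ℝ} (hP : ∀ i, IsBudget (P i)) {z : Fin m → ℝ}
    {i j k : Fin 6} (hij : i ≠ j) (hik : i ≠ k) (hjk : j ≠ k)
    (hz : MedianOutcomeOn P {i, j, k} z) (ht : 1 ≤ JJ P (fun S => (fT2 i j k S : ℝ)))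
    (D y : ℕ) (hy : y ≤ D) :
    (2 * D + y) + JJ P (fun S => ((D * fVB i j k S + y * fR i j k S : ℕ) : ℝ)) ≤
      D * (∑ r ∈ ({i, j, k} : Finset (Fin 6))ᶜ, util z (P r)) +
        JJ P (fun S => (((2 * D + y) * fT2 i j k S : ℕ) : ℝ)) := by
  have hs := slackB hP hij hik hjk hz ht
  have h1 : K P z ((2 * D + y : ℝ) • (fun _ b => if b then (1 : ℝ) else 0) +
      (fun S _ => ((D * fVB i j k S + y * fR i j k S : ℕ) : ℝ))) ≤
      K P z ((D : ℝ) • (fun S b => if b then (bb i j k S : ℝ) else 0) +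
        (fun S _ => (((2 * D + y) * fT2 i j k S : ℕ) : ℝ)) + (3 * D : ℝ) • slack i j k 2) := by
    apply K_mono
    intro S b
    have ha := aa_le i j k S
    have hb := bb_le hij hik hjk S
    have hx' : (y : ℝ) ≤ D := by exact_mod_cast hy
    have hx0 : (0 : ℝ) ≤ y := Nat.cast_nonneg y
    simp only [Pi.add_apply, Pi.smul_apply, smul_eq_mul, slack, fVB, fR, fT2]
    generalize aa i j k S = a at ha ⊢
    generalize bb i j k S = c at hb ⊢
    interval_cases a <;> interval_cases c <;> cases b <;> norm_num <;> linarith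
  rw [map_add, map_add, map_add, map_smul, map_smul, map_smul, K_z P hz.1, K_eq_JJ, K_eq_JJ,
    ← util_compl hP hz.1 hij hik hjk] at h1
  simp only [smul_eq_mul, mul_one] at h1
  have h2 : (3 * D : ℝ) * K P z (slack i j k 2) ≤ 0 :=
    mul_nonpos_of_nonneg_of_nonpos (by positivity) hs
  linarith

theorem JJ_add (P : Fin 6 → Fin m → ℝ) (f g : Pat → ℕ) : JJ P (fun S => ((f S + g S : ℕ) : ℝ)) =
    JJ P (fun S => (f S : ℝ)) + JJ P (fun S => (g S : ℝ)) := by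
  rw [← map_add]
  congr 1
  funext S
  simp

theorem JJ_smul (P : Fin 6 → Fin m → ℝ) (c : ℕ) (f : Pat → ℕ) :
    JJ P (fun S => ((c * f S : ℕ) : ℝ)) = c * JJ P (fun S => (f S : ℝ)) := by
  rw [← smul_eq_mul, ← map_smul]
  congr 1
  funext S
  simp

theorem boundC {P : Fin 6 → Fin m → ℝ} (hP : ∀ i, IsBudget (P i)) {z : Fin m → ℝ}
    {i j k : Fin 6} (hij : i ≠ j) (hik : i ≠ k) (hjk : j ≠ k)
    (hz : MedianOutcomeOn P {i, j, k} z)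
    (D x y g : ℕ) (hx : x ≤ D) (hy : y ≤ D) (hg : 2 * D + y ≤ 3 * g + x) :
    x + JJ P (fun S => ((D * fVB i j k S + y * fR i j k S : ℕ) : ℝ)) ≤
      D * (∑ r ∈ ({i, j, k} : Finset (Fin 6))ᶜ, util z (P r)) +
        JJ P (fun S => ((x * fNA i j k S + g * fE2 i j k S : ℕ) : ℝ)) := by
  have e0 : 0 ≤ JJ P (fun S => (fE2 i j k S : ℝ)) := by
    have := JJ_mono P 0 (fun S => (fE2 i j k S : ℝ)) (fun S => Nat.cast_nonneg _)
    rwa [map_zero] at this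
  have r0 : 0 ≤ JJ P (fun S => (fR i j k S : ℝ)) := by
    have := JJ_mono P 0 (fun S => (fR i j k S : ℝ)) (fun S => Nat.cast_nonneg _)
    rwa [map_zero] at this
  have n0 : JJ P (fun S => (fT2 i j k S : ℝ)) ≤ JJ P (fun S => (fNA i j k S : ℝ)) := by
    apply JJ_mono
    intro S
    unfold fT2 fNA
    split_ifs <;> simp_all
  have hxr : (x : ℝ) ≤ D := by exact_mod_cast hx
  have hyr : (y : ℝ) ≤ D := by exact_mod_cast hy
  have hgr : (2 * D + y : ℝ) ≤ 3 * g + x := by exact_mod_cast hg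
  have hx0 : (0 : ℝ) ≤ x := Nat.cast_nonneg x
  have hy0 : (0 : ℝ) ≤ y := Nat.cast_nonneg y
  have hg0 : (0 : ℝ) ≤ g := Nat.cast_nonneg g
  rcases le_total (JJ P (fun S => (fT2 i j k S : ℝ))) 1 with ht | ht
  · have h := boundA hP hij hik hjk hz ht D x hx
    simp only [JJ_add, JJ_smul] at h ⊢
    have h1 := mul_nonneg hg0 e0
    have h2 := mul_nonneg (sub_nonneg.2 hyr) r0
    linarith
  · have h := boundB hP hij hik hjk hz ht D y hy
    have h3 : 3 * JJ P (fun S => (fT2 i j k S : ℝ)) ≤ 3 + JJ P (fun S => (fE2 i j k S : ℝ)) := by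
      have h4 : JJ P (fun S => ((3 * fT2 i j k S : ℕ) : ℝ)) ≤
          JJ P (fun S => ((fV i S + (fV j S + fV k S) + fE2 i j k S : ℕ) : ℝ)) := by
        apply JJ_mono
        intro S
        have ha : aa i j k S = fV i S + (fV j S + fV k S) := rfl
        rw [← ha]
        unfold fT2 fE2
        have := aa_le i j k S
        norm_cast
        split_ifs <;> omega
      simp only [JJ_add, JJ_smul, JJ_one hP] at h4
      push_cast at h4
      linarith
    simp only [JJ_add, JJ_smul] at h ⊢
    push_cast at h
    have h5 := mul_le_mul_of_nonneg_left n0 hx0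
    have h6 : (0 : ℝ) ≤ 2 * D + y - x := by linarith
    have h7 := mul_le_mul_of_nonneg_left h3 h6
    have h8 := mul_le_mul_of_nonneg_right (show (2 * D + y - x : ℝ) ≤ 3 * g by linarith) e0
    nlinarith

theorem boundU {P : Fin 6 → Fin m → ℝ} (hP : ∀ i, IsBudget (P i)) {v : Fin m → ℝ}
    (hv : IsBudget v) (θ : ℕ) :
    ∑ i, util v (P i) ≤ θ + JJ P (fun S => (fG θ S : ℝ)) := by
  rw [util_all hP hv]
  have h : K P v (fun S b => if b then (cnt S : ℝ) else 0) ≤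
      K P v ((θ : ℝ) • (fun _ b => if b then (1 : ℝ) else 0) + (fun S _ => (fG θ S : ℝ))) := by
    apply K_mono
    intro S b
    simp only [Pi.add_apply, Pi.smul_apply, smul_eq_mul, fG]
    cases b
    · simp
    · simp only [if_true, mul_one]
      norm_cast
      omega
  rw [map_add, map_smul, K_z P hv, K_eq_JJ] at h
  simpa using h

/-- Total measure of levels approved by at least two voters of `Q`. -/
noncomputable def tt (P : Fin 6 → Fin m → ℝ) (Q : Finset (Fin 6)) : ℝ :=
  JJ P (fun S => if 2 ≤ (Q.filter (fun r => S r = true)).card then 1 else 0)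

theorem tt_three (P : Fin 6 → Fin m → ℝ) {i j k : Fin 6} (hij : i ≠ j) (hik : i ≠ k)
    (hjk : j ≠ k) : tt P {i, j, k} = JJ P (fun S => (fT2 i j k S : ℝ)) := by
  unfold tt
  congr 1
  funext S
  have : (({i, j, k} : Finset (Fin 6)).filter (fun r => S r = true)).card = aa i j k S := by
    rw [Finset.card_filter, Finset.sum_insert (by simp [hij, hik]),
      Finset.sum_insert (by simp [hjk]), Finset.sum_singleton]
    unfold aa
    cases S i <;> cases S j <;> cases S k <;> rfl
  rw [this]
  unfold fT2
  split_ifs <;> simp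

theorem tt_perm (P : Fin 6 → Fin m → ℝ) (σ : Equiv.Perm (Fin 6)) (Q : Finset (Fin 6)) :
    tt (fun i => P (σ i)) Q = tt P (Q.map σ.toEmbedding) := by
  rw [tt, tt, JJ_apply, JJ_apply]
  refine Finset.sum_congr rfl (fun j _ => ?_)
  refine integral_congr_ae (Filter.Eventually.of_forall (fun t => ?_))
  have : (Q.filter (fun r => pat (fun i => P (σ i)) j t r = true)).card =
      ((Q.map σ.toEmbedding).filter (fun r => pat P j t r = true)).card := by
    rw [Finset.filter_map, Finset.card_map]
    rfl
  simp only [this]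

noncomputable def mkData (P : Fin 6 → Fin m → ℝ) (hP : ∀ i, IsBudget (P i))
    (p : Finset (Fin 6) → (Fin m → ℝ))
    (hp : ∀ Q ∈ Finset.univ.powersetCard 3, MedianOutcomeOn P Q (p Q))
    (v : Fin m → ℝ) (hv : IsBudget v) : Data where
  J := JJ P
  mono := JJ_mono P
  J1 := JJ_one hP
  U := ∑ i, util v (P i)
  hU := boundU hP hv
  W := fun Q => ∑ r ∈ Qᶜ, util (p Q) (P r)
  isB := fun Q => decide (1 < tt P Q)
  hA := by
    intro i j k hij hik hjk hb D x hx
    rw [decide_eq_false_iff_not, not_lt, tt_three P hij hik hjk] at hb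
    exact boundA hP hij hik hjk (hp _ (Finset.mem_powersetCard_univ.2
      (Finset.card_eq_three.2 ⟨i, j, k, hij, hik, hjk, rfl⟩))) hb D x hx
  hB := by
    intro i j k hij hik hjk hb D x hx
    rw [decide_eq_true_eq, tt_three P hij hik hjk] at hb
    exact boundB hP hij hik hjk (hp _ (Finset.mem_powersetCard_univ.2
      (Finset.card_eq_three.2 ⟨i, j, k, hij, hik, hjk, rfl⟩))) hb.le D x hx
  hC := by
    intro i j k hij hik hjk D x y g hx hy hg
    exact boundC hP hij hik hjk (hp _ (Finset.mem_powersetCard_univ.2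
      (Finset.card_eq_three.2 ⟨i, j, k, hij, hik, hjk, rfl⟩))) D x y g hx hy hg

theorem rows_sum (f : Finset (Fin 6) → ℝ) :
    (rows.map (fun w => f w.tri)).sum = ∑ Q ∈ Finset.univ.powersetCard 3, f Q := by
  have h1 : (rows.map Row.tri).Nodup := by decide +kernel
  have h2 : (rows.map Row.tri).toFinset = Finset.univ.powersetCard 3 := by decide +kernel
  rw [← h2, List.sum_toFinset f h1, List.map_map]
  rfl

theorem map_three (σ : Equiv.Perm (Fin 6)) (i j k : Fin 6) :
    ({i, j, k} : Finset (Fin 6)).map σ.toEmbedding = {σ i, σ j, σ k} := by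
  simp [Finset.map_insert]

theorem util_bound (P : Fin 6 → Fin m → ℝ) (hP : ∀ i, IsBudget (P i))
    (p : Finset (Fin 6) → (Fin m → ℝ))
    (hp : ∀ Q ∈ Finset.univ.powersetCard 3, MedianOutcomeOn P Q (p Q))
    (v : Fin m → ℝ) (hv : IsBudget v) :
    18 * ∑ i, util v (P i) ≤
      48 + ∑ Q ∈ Finset.univ.powersetCard 3, ∑ r ∈ Qᶜ, util (p Q) (P r) := by
  obtain ⟨σ, -, hσ⟩ := Finset.exists_min_image (Finset.univ : Finset (Equiv.Perm (Fin 6)))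
    (fun σ => rows.map (fun w => decide (1 < tt P {σ w.i, σ w.j, σ w.k}))) ⟨1, Finset.mem_univ _⟩
  have hp' : ∀ Q ∈ Finset.univ.powersetCard 3,
      MedianOutcomeOn (fun i => P (σ i)) Q (p (Q.map σ.toEmbedding)) := by
    intro Q hQ
    have h := hp (Q.map σ.toEmbedding) (by
      rw [Finset.mem_powersetCard_univ] at hQ ⊢
      rw [Finset.card_map, hQ])
    refine ⟨h.1, fun z' hz' => ?_⟩
    have h2 := h.2 z' hz'
    rw [Finset.sum_map, Finset.sum_map] at h2
    exact h2
  have key := lp_bound (mkData (fun i => P (σ i)) (fun i => hP (σ i))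
    (fun Q => p (Q.map σ.toEmbedding)) hp' v hv) (by
      intro τ
      rw [not_lt]
      have h := hσ (σ * τ) (Finset.mem_univ _)
      convert h using 1
      · apply List.map_congr_left
        intro w _
        simp only [mkData, tt_perm, Row.tri, map_three]
      · apply List.map_congr_left
        intro w _
        simp only [mkData, tt_perm, map_three, Equiv.Perm.coe_mul, Function.comp]
        congr!)
  rw [rows_sum] at key
  simp only [mkData] at key
  rw [Equiv.sum_comp σ (fun i => util v (P i))] at key
  refine key.trans (le_of_eq ?_)
  congr 1
  refine Finset.sum_equiv σ.finsetCongr ?_ ?_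
  · intro Q
    simp
  · intro Q _
    rw [Equiv.finsetCongr_apply]
    have : (Q.map σ.toEmbedding)ᶜ = Qᶜ.map σ.toEmbedding := by
      ext r; simp [Finset.mem_map_equiv]
    rw [this, Finset.sum_map]
    rfl

theorem cost_eq {a b : Fin m → ℝ} (ha : IsBudget a) (hb : IsBudget b) :
    cost a b = 2 - 2 * util a b := by
  have : cost a b = ∑ j, a j + ∑ j, b j - 2 * util a b := by
    unfold cost util
    rw [Finset.mul_sum, ← Finset.sum_add_distrib, ← Finset.sum_sub_distrib]
    refine Finset.sum_congr rfl (fun j _ => ?_)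
    rcases le_total (a j) (b j) with h | h
    · rw [min_eq_left h, abs_of_nonpos (by linarith)]; ring
    · rw [min_eq_right h, abs_of_nonneg (by linarith)]; ring
  rw [this, ha.2, hb.2]
  norm_num

end Real

end PD

theorem pessimistic_distortion_median_le {m : ℕ} (hm : 1 ≤ m)
    (P : Fin 6 → Fin m → ℝ) (hP : ∀ i, IsBudget (P i))
    (p : Finset (Fin 6) → (Fin m → ℝ))
    (hp : ∀ Q ∈ Finset.univ.powersetCard 3, MedianOutcomeOn P Q (p Q))
    (vopt : Fin m → ℝ) (hvopt : IsBudget vopt)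
    (hmin : ∀ v : Fin m → ℝ, IsBudget v → ∑ i, cost vopt (P i) ≤ ∑ i, cost v (P i)) :
    (1 / 60 : ℝ) * ∑ Q ∈ Finset.univ.powersetCard 3, ∑ i ∈ Qᶜ, cost (p Q) (P i) ≤
      1.80 * ((1 / 6 : ℝ) * ∑ i, cost vopt (P i)) := by
  have h := PD.util_bound P hP p hp vopt hvopt
  have h1 : ∑ i, cost vopt (P i) = 12 - 2 * ∑ i, util vopt (P i) := by
    rw [Finset.sum_congr rfl (fun i _ => PD.cost_eq hvopt (hP i)), Finset.sum_sub_distrib,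
      ← Finset.mul_sum]
    norm_num
  have h2 : ∑ Q ∈ Finset.univ.powersetCard 3, ∑ i ∈ Qᶜ, cost (p Q) (P i) =
      120 - 2 * ∑ Q ∈ Finset.univ.powersetCard 3, ∑ i ∈ Qᶜ, util (p Q) (P i) := by
    have h3 : ∀ Q ∈ (Finset.univ : Finset (Fin 6)).powersetCard 3,
        ∑ i ∈ Qᶜ, cost (p Q) (P i) = 6 - 2 * ∑ i ∈ Qᶜ, util (p Q) (P i) := by
      intro Q hQ
      rw [Finset.sum_congr rfl (fun i _ => PD.cost_eq (hp Q hQ).1 (hP i)),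
        Finset.sum_sub_distrib, ← Finset.mul_sum, Finset.sum_const, Finset.card_compl,
        Finset.mem_powersetCard_univ.1 hQ]
      norm_num
    rw [Finset.sum_congr rfl h3, Finset.sum_sub_distrib, ← Finset.mul_sum, Finset.sum_const,
      Finset.card_powersetCard]
    norm_num [Nat.choose]
  rw [h1, h2]
  linarith
end

section
/- The distortion of the class of median schemes with three uniformly sampled voters is at most 1.80: for all m, n ≥ 1, every vote profile (v_1,…,v_n) of budgets on m projects, and every function h assigning to each ordered triple (i,j,k) ∈ [n]³ a median-scheme outcome h(i,j,k) for (v_i, v_j, v_k), one has (1/n⁴) Σ_{(i,j,k,l)∈[n]⁴} d(h(i,j,k), v_l) ≤ 1.80 · (1/n) · min_{p∈𝔹} Σ_{l=1}^n d(p, v_l). -/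
noncomputable def rB (b : Bool) : ℝ := if b then 1 else 0
noncomputable def rhoB (b : Bool) : ℝ := if b then 7/100 else 93/100
def majB (a b c : Bool) : Bool := (a && b) || (a && c) || (b && c)
noncomputable def lamB (a b c : Bool) : ℝ := if majB a b c then -(117/200) else -(43/200)
def okB (σ z a b c : Bool) : Prop :=
  if σ then ((a && b && c) = true → z = true) ∧ (z = true → majB a b c = true)
  else (majB a b c = true → z = true) ∧ (z = true → (a || b || c) = true)
noncomputable def cvB (F P N : ℝ) (σ a b c : Bool) : ℝ :=
  if σ then (if a && b && c then 1 - F - 7/100 else if majB a b c then N else 0)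
  else (if majB a b c then 7/100 - F else if a || b || c then P else 0)
noncomputable def gJ (F P N : ℝ) : ℕ → ℝ
  | 0 => 0
  | 1 => 3 * P - 43/200
  | 2 => 2 * N + 2 * P - 117/100
  | 3 => (1 - F - 7/100) + 3 * N - 351/200
  | _ => 4 * (1 - F - 7/100) - 117/50
noncomputable def gB (F P N : ℝ) (a b c d : Bool) : ℝ :=
  gJ F P N (a.toNat + b.toNat + c.toNat + d.toNat)

theorem tri_le (F P N : ℝ) (hP : 0 ≤ P) (hP' : 7/100 - F ≤ P) (hN : 0 ≤ N)
    (hN' : 1 - F - 7/100 ≤ N) (σ z a b c : Bool) (h : okB σ z a b c) :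
    rB z * (1 - F - rhoB σ) ≤ cvB F P N σ a b c := by
  revert h
  cases σ <;> cases z <;> cases a <;> cases b <;> cases c <;>
    simp [okB, rB, rhoB, cvB, majB] <;> linarith

set_option maxHeartbeats 4000000 in
theorem cv_le (F P N : ℝ) (hP : 0 ≤ P) (hP' : 7/100 - F ≤ P) (hN : 0 ≤ N)
    (hN' : 1 - F - 7/100 ≤ N) (σ0 σ1 σ2 σ3 a b c d : Bool) :
    cvB F P N σ0 a b c + cvB F P N σ1 a b d + cvB F P N σ2 a c d + cvB F P N σ3 b c d
    + (lamB σ0 σ1 σ2 * rB a + lamB σ0 σ1 σ3 * rB b + lamB σ0 σ2 σ3 * rB c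
      + lamB σ1 σ2 σ3 * rB d) ≤ gB F P N a b c d := by
  cases a <;> cases b <;> cases c <;> cases d <;>
  cases σ0 <;> cases σ1 <;> cases σ2 <;> cases σ3 <;>
    simp [rB, lamB, cvB, majB, gB, gJ] <;> linarith

theorem poly_le (x P N : ℝ) (h0 : 0 ≤ x) (h1 : x ≤ 1) (hP : P = max 0 (7/100 - x))
    (hN : N = max 0 (1 - x - 7/100)) :
    4*x*(1-x)^3*gJ x P N 1 + 6*x^2*(1-x)^2*gJ x P N 2 + 4*x^3*(1-x)*gJ x P N 3
     + x^4*gJ x P N 4 ≤ 0 := by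
  suffices h : 4*(1-x)^3*gJ x P N 1 + 6*x*(1-x)^2*gJ x P N 2 + 4*x^2*(1-x)*gJ x P N 3
     + x^3*gJ x P N 4 ≤ 0 by nlinarith [mul_nonneg h0 (neg_nonneg.2 h)]
  simp only [gJ]
  rcases le_total x (7/100) with hx | hx
  · rw [max_eq_right (by linarith)] at hP hN
    subst hP hN
    nlinarith [mul_nonneg h0 (sub_nonneg.2 hx), mul_nonneg h0 (sub_nonneg.2 h1), mul_nonneg (mul_nonneg h0 h0) (sub_nonneg.2 h1), mul_nonneg (mul_nonneg h0 h0) h0]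
  · rw [max_eq_left (by linarith)] at hP
    rcases le_total x (93/100) with hx' | hx'
    · rw [max_eq_right (by linarith)] at hN
      subst hP hN
      nlinarith [mul_nonneg (sq_nonneg (x - 272/1000)) (sub_nonneg.2 h1), sq_nonneg (x - 272/1000)]
    · rw [max_eq_left (by linarith)] at hN
      subst hP hN
      nlinarith [mul_nonneg h0 (sub_nonneg.2 h1), mul_nonneg (mul_nonneg h0 h0) (sub_nonneg.2 h1), mul_nonneg (mul_nonneg h0 h0) (sub_nonneg.2 hx')]

theorem sum_bool {n : ℕ} (s : Fin n → Bool) (f : Bool → ℝ) :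
    ∑ q, f (s q) = (n - ∑ q, rB (s q)) * f false + (∑ q, rB (s q)) * f true := by
  have : ∀ q, f (s q) = f false + rB (s q) * (f true - f false) := by
    intro q; cases s q <;> simp [rB]
  simp_rw [this, Finset.sum_add_distrib, ← Finset.sum_mul]
  simp; ring

theorem sum_g {n : ℕ} (hn : 1 ≤ n) (s : Fin n → Bool) (F : ℝ) (hF : ∑ q, rB (s q) = n * F)
    (P N : ℝ) :
    ∑ a, ∑ b, ∑ c, ∑ d, gB F P N (s a) (s b) (s c) (s d) = (n:ℝ)^4 * 
    (4*F*(1-F)^3*gJ F P N 1 + 6*F^2*(1-F)^2*gJ F P N 2 + 4*F^3*(1-F)*gJ F P N 3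
     + F^4*gJ F P N 4) := by
  have e1 : ∀ a b c, ∑ d, gB F P N a b c (s d) =
     (n - n*F) * gB F P N a b c false + (n*F) * gB F P N a b c true := by
    intro a b c; rw [sum_bool s (gB F P N a b c), hF]
  have e2 : ∀ a b, ∑ c, ∑ d, gB F P N a b (s c) (s d) =
     (n - n*F) * ∑ d, gB F P N a b false (s d) + (n*F) * ∑ d, gB F P N a b true (s d) := by
    intro a b; rw [sum_bool s (fun c => ∑ d, gB F P N a b c (s d)), hF]
  have e3 : ∀ a, ∑ b, ∑ c, ∑ d, gB F P N a (s b) (s c) (s d) =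
     (n - n*F) * ∑ c, ∑ d, gB F P N a false (s c) (s d)
      + (n*F) * ∑ c, ∑ d, gB F P N a true (s c) (s d) := by
    intro a; rw [sum_bool s (fun b => ∑ c, ∑ d, gB F P N a b (s c) (s d)), hF]
  rw [sum_bool s (fun a => ∑ b, ∑ c, ∑ d, gB F P N a (s b) (s c) (s d)), hF]
  rw [e3, e3, e2, e2, e2, e2]
  simp only [e1]
  simp [gB, gJ]
  ring

theorem ok_not (σ z a b c : Bool) (h : okB σ z a b c) : okB (!σ) (!z) (!a) (!b) (!c) := by
  revert h
  cases σ <;> cases z <;> cases a <;> cases b <;> cases c <;> simp [okB, majB]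


/-- The bracket at a quadruple of voters. -/
noncomputable def termB (F : ℝ) (β z0 z1 z2 z3 σ0 σ1 σ2 σ3 a b c d : Bool) : ℝ :=
  (rB z0 * (1 - F) - rhoB σ0 * (rB z0 - rB β)) + (rB z1 * (1 - F) - rhoB σ1 * (rB z1 - rB β))
  + (rB z2 * (1 - F) - rhoB σ2 * (rB z2 - rB β)) + (rB z3 * (1 - F) - rhoB σ3 * (rB z3 - rB β))
  + (lamB σ0 σ1 σ2 * (rB a - rB β) + lamB σ0 σ1 σ3 * (rB b - rB β)
    + lamB σ0 σ2 σ3 * (rB c - rB β) + lamB σ1 σ2 σ3 * (rB d - rB β))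
  - 36/5 * (rB β * (1 - F))

theorem rB_not (a : Bool) : rB (!a) = 1 - rB a := by cases a <;> simp [rB]
theorem rhoB_not (a : Bool) : rhoB (!a) = 1 - rhoB a := by cases a <;> norm_num [rhoB]
theorem lamB_not (a b c : Bool) : lamB (!a) (!b) (!c) = - 4/5 - lamB a b c := by
  cases a <;> cases b <;> cases c <;> norm_num [lamB, majB]

theorem term_false (F P N : ℝ) (hP : 0 ≤ P) (hP' : 7/100 - F ≤ P) (hN : 0 ≤ N)
    (hN' : 1 - F - 7/100 ≤ N) (z0 z1 z2 z3 σ0 σ1 σ2 σ3 a b c d : Bool)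
    (h0 : okB σ0 z0 a b c) (h1 : okB σ1 z1 a b d) (h2 : okB σ2 z2 a c d) (h3 : okB σ3 z3 b c d) :
    termB F false z0 z1 z2 z3 σ0 σ1 σ2 σ3 a b c d ≤ gB F P N a b c d := by
  have e0 := tri_le F P N hP hP' hN hN' _ _ _ _ _ h0
  have e1 := tri_le F P N hP hP' hN hN' _ _ _ _ _ h1
  have e2 := tri_le F P N hP hP' hN hN' _ _ _ _ _ h2
  have e3 := tri_le F P N hP hP' hN hN' _ _ _ _ _ h3
  have e4 := cv_le F P N hP hP' hN hN' σ0 σ1 σ2 σ3 a b c d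
  have e5 : rB false = 0 := by simp [rB]
  simp only [termB, e5]
  linarith

theorem term_true (F : ℝ) (z0 z1 z2 z3 σ0 σ1 σ2 σ3 a b c d : Bool) :
    termB F true z0 z1 z2 z3 σ0 σ1 σ2 σ3 a b c d =
    termB (1 - F) false (!z0) (!z1) (!z2) (!z3) (!σ0) (!σ1) (!σ2) (!σ3) (!a) (!b) (!c) (!d)
    + (4/5 * (rB (!a) + rB (!b) + rB (!c) + rB (!d)) - 16/5 * (1 - F)) := by
  have e5 : rB false = 0 := by simp [rB]
  have e6 : rB true = 1 := by simp [rB]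
  simp only [termB, e5, e6, rB_not, rhoB_not, lamB_not]
  ring

theorem pt_false {n : ℕ} (hn : 1 ≤ n) (s : Fin n → Bool) (z σ : Fin n → Fin n → Fin n → Bool)
    (F : ℝ) (hF : ∑ q, rB (s q) = n * F)
    (hok : ∀ a b c, okB (σ a b c) (z a b c) (s a) (s b) (s c)) :
    ∑ a, ∑ b, ∑ c, ∑ d, termB F false (z a b c) (z a b d) (z a c d) (z b c d)
      (σ a b c) (σ a b d) (σ a c d) (σ b c d) (s a) (s b) (s c) (s d) ≤ 0 := by
  have hn' : (0:ℝ) < n := by exact_mod_cast hn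
  have r0 : ∀ b, 0 ≤ rB b := by intro b; cases b <;> simp [rB]
  have r1 : ∀ b, rB b ≤ 1 := by intro b; cases b <;> simp [rB]
  have hF0 : 0 ≤ F := by
    have : 0 ≤ ∑ q, rB (s q) := Finset.sum_nonneg fun q _ => r0 _
    rw [hF] at this
    exact nonneg_of_mul_nonneg_right this hn'
  have hF1 : F ≤ 1 := by
    have : ∑ q, rB (s q) ≤ ∑ q : Fin n, (1:ℝ) := Finset.sum_le_sum fun q _ => r1 _
    rw [hF] at this
    simp at this
    nlinarith
  calc _ ≤ ∑ a, ∑ b, ∑ c, ∑ d, gB F (max 0 (7/100 - F)) (max 0 (1 - F - 7/100))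
            (s a) (s b) (s c) (s d) := by
        refine Finset.sum_le_sum fun a _ => Finset.sum_le_sum fun b _ =>
          Finset.sum_le_sum fun c _ => Finset.sum_le_sum fun d _ => ?_
        exact term_false F _ _ (le_max_left _ _) (le_max_right _ _) (le_max_left _ _)
          (le_max_right _ _) _ _ _ _ _ _ _ _ _ _ _ _ (hok _ _ _) (hok _ _ _) (hok _ _ _)
          (hok _ _ _)
    _ ≤ 0 := by
        rw [sum_g hn s F hF]
        exact mul_nonpos_of_nonneg_of_nonpos (by positivity) (poly_le F _ _ hF0 hF1 rfl rfl)

theorem pt {n : ℕ} (hn : 1 ≤ n) (s : Fin n → Bool) (z σ : Fin n → Fin n → Fin n → Bool)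
    (F : ℝ) (hF : ∑ q, rB (s q) = n * F)
    (hok : ∀ a b c, okB (σ a b c) (z a b c) (s a) (s b) (s c)) (β : Bool) :
    ∑ a, ∑ b, ∑ c, ∑ d, termB F β (z a b c) (z a b d) (z a c d) (z b c d)
      (σ a b c) (σ a b d) (σ a c d) (σ b c d) (s a) (s b) (s c) (s d) ≤ 0 := by
  cases β
  · exact pt_false hn s z σ F hF hok
  · have hF' : ∑ q, rB (!(s q)) = n * (1 - F) := by
      simp only [rB_not, Finset.sum_sub_distrib, hF]; simp; ring
    have := pt_false hn (fun q => !(s q)) (fun a b c => !(z a b c)) (fun a b c => !(σ a b c))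
      (1 - F) hF' (fun a b c => ok_not _ _ _ _ _ (hok a b c))
    simp only [term_true]
    simp only [Finset.sum_add_distrib, Finset.sum_sub_distrib, ← Finset.mul_sum]
    simp only [Finset.sum_const, Finset.card_univ, Fintype.card_fin, nsmul_eq_mul, hF',
      ← Finset.mul_sum]
    linarith

noncomputable def indB (x t : ℝ) : ℝ := rB (decide (t < x))

/-- `f` integrates to `x` on the unit interval. -/
def Lay (f : ℝ → ℝ) (x : ℝ) : Prop :=
  IntervalIntegrable f MeasureTheory.volume 0 1 ∧ ∫ t in (0:ℝ)..1, f t = x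

theorem Lay.add {f g : ℝ → ℝ} {x y : ℝ} (hf : Lay f x) (hg : Lay g y) :
    Lay (fun t => f t + g t) (x + y) :=
  ⟨hf.1.add hg.1, by rw [intervalIntegral.integral_add hf.1 hg.1, hf.2, hg.2]⟩

theorem Lay.sub {f g : ℝ → ℝ} {x y : ℝ} (hf : Lay f x) (hg : Lay g y) :
    Lay (fun t => f t - g t) (x - y) :=
  ⟨hf.1.sub hg.1, by rw [intervalIntegral.integral_sub hf.1 hg.1, hf.2, hg.2]⟩

theorem Lay.smul {f : ℝ → ℝ} {x : ℝ} (c : ℝ) (hf : Lay f x) :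
    Lay (fun t => c * f t) (c * x) :=
  ⟨hf.1.const_mul c, by rw [intervalIntegral.integral_const_mul, hf.2]⟩

theorem Lay.sum {ι : Type*} (S : Finset ι) {f : ι → ℝ → ℝ} {x : ι → ℝ}
    (hf : ∀ i, Lay (f i) (x i)) :
    Lay (fun t => ∑ i ∈ S, f i t) (∑ i ∈ S, x i) := by
  classical
  induction S using Finset.induction_on with
  | empty => simp [Lay]
  | insert a S ha ih =>
    simp only [Finset.sum_insert ha]
    exact (hf a).add ih

theorem Lay.ind {x : ℝ} (h0 : 0 ≤ x) (h1 : x ≤ 1) : Lay (indB x) x := by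
  have e : indB x = Set.indicator (Set.Iio x) (fun _ => (1:ℝ)) := by
    funext t
    by_cases h : t < x <;> simp [indB, rB, h]
  have i0 : IntervalIntegrable (indB x) MeasureTheory.volume 0 1 := by
    rw [e, intervalIntegrable_iff]
    exact (MeasureTheory.integrableOn_const (by simp)).indicator measurableSet_Iio
  refine ⟨i0, ?_⟩
  have i1 : IntervalIntegrable (indB x) MeasureTheory.volume 0 x :=
    i0.mono_set (by rw [Set.uIcc_of_le h0, Set.uIcc_of_le zero_le_one]; exact Set.Icc_subset_Icc_right h1)
  have i2 : IntervalIntegrable (indB x) MeasureTheory.volume x 1 :=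
    i0.mono_set (by rw [Set.uIcc_of_le h1, Set.uIcc_of_le zero_le_one]; exact Set.Icc_subset_Icc_left h0)
  rw [← intervalIntegral.integral_add_adjacent_intervals i1 i2]
  have a1 : ∫ t in (0:ℝ)..x, indB x t = ∫ t in (0:ℝ)..x, (1:ℝ) := by
    refine intervalIntegral.integral_congr_ae ?_
    have : ∀ᵐ t : ℝ ∂MeasureTheory.volume, t ≠ x := by
      simp [MeasureTheory.ae_iff]
    filter_upwards [this] with t ht ht'
    rw [Set.uIoc_of_le h0] at ht'
    have : t < x := lt_of_le_of_ne ht'.2 ht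
    simp [indB, rB, this]
  have a2 : ∫ t in x..1, indB x t = ∫ t in x..1, (0:ℝ) := by
    refine intervalIntegral.integral_congr fun t ht => ?_
    rw [Set.uIcc_of_le h1] at ht
    simp [indB, rB, ht.1]
  rw [a1, a2]
  simp

theorem Lay.nonpos {f : ℝ → ℝ} {x : ℝ} (hf : Lay f x) (h : ∀ t, f t ≤ 0) : x ≤ 0 := by
  have : ∫ t in (0:ℝ)..1, f t ≤ ∫ t in (0:ℝ)..1, (0:ℝ) :=
    intervalIntegral.integral_mono zero_le_one hf.1 (by simp) h
  rw [hf.2] at this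
  simpa using this

theorem ind_min (x y t : ℝ) : indB (min x y) t = indB x t * indB y t := by
  by_cases h : t < x <;> by_cases h' : t < y <;> simp [indB, rB, h, h']

/-- Real-valued bracket. -/
noncomputable def termR {n : ℕ} (v : Fin n → ℝ) (p z0 z1 z2 z3 : ℝ) (σ0 σ1 σ2 σ3 : Bool)
    (a b c d : ℝ) : ℝ :=
  ((1 / (n:ℝ)) * ∑ l, (z0 - min z0 (v l)) - rhoB σ0 * (z0 - p))
  + ((1 / (n:ℝ)) * ∑ l, (z1 - min z1 (v l)) - rhoB σ1 * (z1 - p))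
  + ((1 / (n:ℝ)) * ∑ l, (z2 - min z2 (v l)) - rhoB σ2 * (z2 - p))
  + ((1 / (n:ℝ)) * ∑ l, (z3 - min z3 (v l)) - rhoB σ3 * (z3 - p))
  + (lamB σ0 σ1 σ2 * (a - p) + lamB σ0 σ1 σ3 * (b - p)
    + lamB σ0 σ2 σ3 * (c - p) + lamB σ1 σ2 σ3 * (d - p))
  - 36/5 * ((1 / (n:ℝ)) * ∑ l, (p - min p (v l)))

def okR (σ : Bool) (z a b c : ℝ) : Prop :=
  if σ then min a (min b c) ≤ z ∧ z ≤ max a b ∧ z ≤ max a c ∧ z ≤ max b c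
  else min a b ≤ z ∧ min a c ≤ z ∧ min b c ≤ z ∧ z ≤ max a (max b c)

theorem okR_ok (σ : Bool) (z a b c t : ℝ) (h : okR σ z a b c) :
    okB σ (decide (t < z)) (decide (t < a)) (decide (t < b)) (decide (t < c)) := by
  cases σ
  · simp only [okR, okB, majB] at *
    simp at h ⊢
    grind
  · simp only [okR, okB, majB] at *
    simp at h ⊢
    grind

theorem coord {n : ℕ} (hn : 1 ≤ n) (v : Fin n → ℝ) (z : Fin n → Fin n → Fin n → ℝ)
    (σ : Fin n → Fin n → Fin n → Bool) (p : ℝ) (hv : ∀ l, 0 ≤ v l ∧ v l ≤ 1)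
    (hz : ∀ a b c, 0 ≤ z a b c ∧ z a b c ≤ 1) (hp : 0 ≤ p ∧ p ≤ 1)
    (hok : ∀ a b c, okR (σ a b c) (z a b c) (v a) (v b) (v c)) :
    ∑ a, ∑ b, ∑ c, ∑ d, termR v p (z a b c) (z a b d) (z a c d) (z b c d)
      (σ a b c) (σ a b d) (σ a c d) (σ b c d) (v a) (v b) (v c) (v d) ≤ 0 := by
  have hn' : (0:ℝ) < n := by exact_mod_cast hn
  have hmin : ∀ x, 0 ≤ x ∧ x ≤ 1 → Lay (fun t => (1 / (n:ℝ)) * ∑ l, (indB x t - indB (min x (v l)) t))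
      ((1 / (n:ℝ)) * ∑ l, (x - min x (v l))) := fun x hx =>
    Lay.smul _ (Lay.sum _ fun l => (Lay.ind hx.1 hx.2).sub
      (Lay.ind (le_min hx.1 (hv l).1) (min_le_of_left_le hx.2)))
  have hi : ∀ x, 0 ≤ x ∧ x ≤ 1 → Lay (indB x) x := fun x hx => Lay.ind hx.1 hx.2
  have hs : ∀ (k : ℝ) x, 0 ≤ x ∧ x ≤ 1 → Lay (fun t => k * (indB x t - indB p t)) (k * (x - p)) :=
    fun k x hx => ((hi x hx).sub (hi p hp)).smul k
  have main := Lay.sum Finset.univ fun a => Lay.sum Finset.univ fun b =>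
    Lay.sum Finset.univ fun c => Lay.sum Finset.univ fun d =>
      ((((((hmin _ (hz a b c)).sub (hs (rhoB (σ a b c)) _ (hz a b c))).add
      ((hmin _ (hz a b d)).sub (hs (rhoB (σ a b d)) _ (hz a b d)))).add
      ((hmin _ (hz a c d)).sub (hs (rhoB (σ a c d)) _ (hz a c d)))).add
      ((hmin _ (hz b c d)).sub (hs (rhoB (σ b c d)) _ (hz b c d)))).add
      ((((hs (lamB (σ a b c) (σ a b d) (σ a c d)) _ (hv a)).add
        (hs (lamB (σ a b c) (σ a b d) (σ b c d)) _ (hv b))).add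
        (hs (lamB (σ a b c) (σ a c d) (σ b c d)) _ (hv c))).add
        (hs (lamB (σ a b d) (σ a c d) (σ b c d)) _ (hv d)))).sub
      ((hmin p hp).smul (36/5))
  refine main.nonpos fun t => ?_
  have hF : ∑ q, rB (decide (t < v q)) = n * ((∑ q, rB (decide (t < v q))) / n) := by
    field_simp
  have key := pt hn (fun l => decide (t < v l)) (fun a b c => decide (t < z a b c)) σ _ hF
    (fun a b c => okR_ok _ _ _ _ _ t (hok a b c)) (decide (t < p))
  have e : ∀ x, (1 / (n:ℝ)) * ∑ l, (indB x t - indB (min x (v l)) t)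
      = rB (decide (t < x)) * (1 - (∑ q, rB (decide (t < v q))) / n) := by
    intro x
    simp only [ind_min, Finset.sum_sub_distrib, ← Finset.mul_sum]
    simp [indB]
    field_simp
  simp only [e]
  exact key

/-- middle of three -/
noncomputable def medR (a b c : ℝ) : ℝ := max (min a b) (max (min a c) (min b c))

noncomputable def phiR (a b c x : ℝ) : ℝ := min x a + min x b + min x c

theorem phi_up2 (a b c x δ : ℝ) (hδ : 0 ≤ δ) (h : x + δ ≤ medR a b c) :
    phiR a b c x + 2 * δ ≤ phiR a b c (x + δ) := by
  simp only [medR, phiR, min_def, max_def] at *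
  grind
theorem phi_down1 (a b c x δ : ℝ) (hδ : 0 ≤ δ) (h : medR a b c ≤ x - δ) :
    phiR a b c x - δ ≤ phiR a b c (x - δ) := by
  simp only [medR, phiR, min_def, max_def] at *
  grind
theorem phi_up1 (a b c x δ : ℝ) (hδ : 0 ≤ δ) (h : x + δ ≤ a) :
    phiR a b c x + δ ≤ phiR a b c (x + δ) := by
  simp only [phiR, min_def] at *
  grind
theorem phi_down0 (a b c x δ : ℝ) (hδ : 0 ≤ δ) (h : max a (max b c) ≤ x - δ) :
    phiR a b c x ≤ phiR a b c (x - δ) := by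
  simp only [phiR, min_def, max_def] at *
  grind
theorem phi_up3 (a b c x δ : ℝ) (hδ : 0 ≤ δ) (h : x + δ ≤ min a (min b c)) :
    phiR a b c x + 3 * δ ≤ phiR a b c (x + δ) := by
  simp only [phiR, min_def] at *
  grind
theorem phi_down2 (a b c x δ : ℝ) (hδ : 0 ≤ δ) (h : a ≤ x - δ) :
    phiR a b c x - 2 * δ ≤ phiR a b c (x - δ) := by
  simp only [phiR, min_def] at *
  grind

theorem exchange {m : ℕ} {a b c z : Fin m → ℝ} (h : MedianOutcome a b c z) (j k : Fin m)
    (hjk : j ≠ k) (δ : ℝ) (hδ : 0 ≤ δ) (hk : δ ≤ z k) :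
    phiR (a j) (b j) (c j) (z j + δ) + phiR (a k) (b k) (c k) (z k - δ)
      ≤ phiR (a j) (b j) (c j) (z j) + phiR (a k) (b k) (c k) (z k) := by
  classical
  set z' : Fin m → ℝ := Function.update (Function.update z j (z j + δ)) k (z k - δ) with hz'
  have split : ∀ f : Fin m → ℝ, ∑ i, f i = f j + f k + ∑ i ∈ (Finset.univ.erase j).erase k, f i := by
    intro f
    rw [← Finset.add_sum_erase _ f (Finset.mem_univ j),
      ← Finset.add_sum_erase (Finset.univ.erase j) f (a := k) (by simp [hjk.symm])]
    ring
  have zj : z' j = z j + δ := by simp [hz', hjk]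
  have zk : z' k = z k - δ := by simp [hz']
  have zo : ∀ i ∈ (Finset.univ.erase j).erase k, z' i = z i := by
    intro i hi
    simp at hi
    simp [hz', hi.1, hi.2]
  have rest : ∀ F : Fin m → ℝ → ℝ, ∑ i ∈ (Finset.univ.erase j).erase k, F i (z' i)
      = ∑ i ∈ (Finset.univ.erase j).erase k, F i (z i) := fun F =>
    Finset.sum_congr rfl fun i hi => by rw [zo i hi]
  have hb : IsBudget z' := by
    refine ⟨fun i => ?_, ?_⟩
    · by_cases h1 : i = k
      · subst h1; rw [zk]; linarith
      · by_cases h2 : i = j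
        · subst h2; rw [zj]; have := h.1.1 i; linarith
        · rw [zo i (by simp [h1, h2])]; exact h.1.1 i
    · have := h.1.2
      rw [split] at this ⊢
      rw [rest (fun _ x => x), zj, zk]
      linarith
  have hu : ∀ w : Fin m → ℝ, util w a + util w b + util w c
      = ∑ i, phiR (a i) (b i) (c i) (w i) := by
    intro w; simp [util, phiR, Finset.sum_add_distrib]
  have := h.2 z' hb
  rw [hu, hu, split, split (fun i => phiR (a i) (b i) (c i) (z i)),
    rest (fun i x => phiR (a i) (b i) (c i) x), zj, zk] at this
  linarith

theorem structure_median {m : ℕ} {a b c z : Fin m → ℝ} (ha : IsBudget a) (hb : IsBudget b)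
    (hc : IsBudget c) (h : MedianOutcome a b c z) :
    ∃ σ : Bool, ∀ j, okR σ (z j) (a j) (b j) (c j) := by
  have hz := h.1
  have ex1 : ∀ k, a k < z k → ∃ j, z j < a j := by
    intro k hk
    by_contra hcon
    push Not at hcon
    have : ∑ i, a i < ∑ i, z i :=
      Finset.sum_lt_sum (fun i _ => hcon i) ⟨k, Finset.mem_univ _, hk⟩
    rw [ha.2, hz.2] at this
    exact lt_irrefl _ this
  have ex2 : ∀ k, z k < a k → ∃ j, a j < z j := by
    intro k hk
    by_contra hcon
    push Not at hcon
    have : ∑ i, z i < ∑ i, a i :=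
      Finset.sum_lt_sum (fun i _ => hcon i) ⟨k, Finset.mem_univ _, hk⟩
    rw [ha.2, hz.2] at this
    exact lt_irrefl _ this
  have c1 : ∀ j k, z j < medR (a j) (b j) (c j) → medR (a k) (b k) (c k) < z k → False := by
    intro j k hj hk
    have hjk : j ≠ k := by rintro rfl; exact lt_asymm hj hk
    have hm : 0 ≤ medR (a k) (b k) (c k) :=
      le_max_of_le_left (le_min (ha.1 k) (hb.1 k))
    obtain ⟨δ, h0, h1, h2⟩ : ∃ δ, 0 < δ ∧ z j + δ ≤ medR (a j) (b j) (c j) ∧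
        medR (a k) (b k) (c k) ≤ z k - δ :=
      ⟨min (medR (a j) (b j) (c j) - z j) (z k - medR (a k) (b k) (c k)),
        lt_min (by linarith) (by linarith),
        by linarith [min_le_left (medR (a j) (b j) (c j) - z j) (z k - medR (a k) (b k) (c k))],
        by linarith [min_le_right (medR (a j) (b j) (c j) - z j) (z k - medR (a k) (b k) (c k))]⟩
    have := exchange h j k hjk δ h0.le (by linarith)
    linarith [phi_up2 _ _ _ _ δ h0.le h1, phi_down1 _ _ _ _ δ h0.le h2]
  have c2 : ∀ k, z k ≤ max (a k) (max (b k) (c k)) := by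
    intro k
    by_contra hk
    push Not at hk
    obtain ⟨j, hj⟩ := ex1 k (lt_of_le_of_lt (le_max_left _ _) hk)
    have hjk : j ≠ k := by rintro rfl; exact lt_asymm hj (lt_of_le_of_lt (le_max_left _ _) hk)
    have hm : 0 ≤ max (a k) (max (b k) (c k)) := le_max_of_le_left (ha.1 k)
    generalize hM : max (a k) (max (b k) (c k)) = M at hk hm
    have h1 := min_le_left (a j - z j) (z k - M)
    have h2 := min_le_right (a j - z j) (z k - M)
    have h0 : 0 < min (a j - z j) (z k - M) := lt_min (by linarith) (by linarith)
    have := exchange h j k hjk _ h0.le (by linarith)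
    linarith [phi_up1 (a j) (b j) (c j) (z j) _ h0.le (by linarith),
      phi_down0 (a k) (b k) (c k) (z k) _ h0.le (by rw [hM]; linarith)]
  have c3 : ∀ j, min (a j) (min (b j) (c j)) ≤ z j := by
    intro j
    by_contra hj
    push Not at hj
    obtain ⟨k, hk⟩ := ex2 j (lt_of_lt_of_le hj (min_le_left _ _))
    have hjk : j ≠ k := by rintro rfl; exact lt_asymm hk (lt_of_lt_of_le hj (min_le_left _ _))
    have hm := ha.1 k
    generalize hM : min (a j) (min (b j) (c j)) = M at hj
    have h1 := min_le_left (M - z j) (z k - a k)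
    have h2 := min_le_right (M - z j) (z k - a k)
    have h0 : 0 < min (M - z j) (z k - a k) := lt_min (by linarith) (by linarith)
    have := exchange h j k hjk _ h0.le (by linarith)
    linarith [phi_up3 (a j) (b j) (c j) (z j) _ h0.le (by rw [hM]; linarith),
      phi_down2 (a k) (b k) (c k) (z k) _ h0.le (by linarith)]
  by_cases hA : ∀ j, medR (a j) (b j) (c j) ≤ z j
  · refine ⟨false, fun j => ?_⟩
    have := hA j
    simp only [medR, max_le_iff] at this
    exact ⟨this.1, this.2.1, this.2.2, c2 j⟩
  · push Not at hA
    obtain ⟨j, hj⟩ := hA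
    refine ⟨true, fun k => ?_⟩
    have hk : z k ≤ medR (a k) (b k) (c k) := by
      by_contra hk
      exact c1 j k hj (not_le.1 hk)
    have h3 := c3 k
    simp only [okR, if_true]
    refine ⟨h3, ?_⟩
    simp only [medR, le_max_iff, le_min_iff] at *
    grind

theorem cost_eq {m : ℕ} {a b : Fin m → ℝ} (ha : IsBudget a) (hb : IsBudget b) :
    cost a b = 2 * ∑ j, (a j - min (a j) (b j)) := by
  have : ∀ j, |a j - b j| = 2 * (a j - min (a j) (b j)) + (b j - a j) := by
    intro j
    rcases le_total (a j) (b j) with h | h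
    · rw [abs_of_nonpos (by linarith), min_eq_left h]; ring
    · rw [abs_of_nonneg (by linarith), min_eq_right h]; ring
  simp only [cost, this]
  rw [Finset.sum_add_distrib, ← Finset.mul_sum, Finset.sum_sub_distrib (f := b), ha.2, hb.2]
  ring

theorem budget_le_one {m : ℕ} {a : Fin m → ℝ} (ha : IsBudget a) (j : Fin m) :
    0 ≤ a j ∧ a j ≤ 1 :=
  ⟨ha.1 j, by rw [← ha.2]; exact Finset.single_le_sum (fun i _ => ha.1 i) (Finset.mem_univ j)⟩

/-- Summing the real bracket over the projects. -/
theorem sum_termR {m n : ℕ} (v : Fin n → Fin m → ℝ) (hv : ∀ i, IsBudget (v i))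
    (p z0 z1 z2 z3 a b c d : Fin m → ℝ) (hp : IsBudget p) (h0 : IsBudget z0) (h1 : IsBudget z1)
    (h2 : IsBudget z2) (h3 : IsBudget z3) (ha : IsBudget a) (hb : IsBudget b) (hc : IsBudget c)
    (hd : IsBudget d) (σ0 σ1 σ2 σ3 : Bool) :
    2 * ∑ j, termR (fun l => v l j) (p j) (z0 j) (z1 j) (z2 j) (z3 j) σ0 σ1 σ2 σ3
      (a j) (b j) (c j) (d j) =
    (1 / (n:ℝ)) * (∑ l, cost z0 (v l) + ∑ l, cost z1 (v l) + ∑ l, cost z2 (v l)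
      + ∑ l, cost z3 (v l)) - 36/5 * ((1 / (n:ℝ)) * ∑ l, cost p (v l)) := by
  have e : ∀ w : Fin m → ℝ, IsBudget w → ∑ l, cost w (v l) =
      2 * ∑ j, ∑ l, (w j - min (w j) (v l j)) := by
    intro w hw
    rw [Finset.sum_comm, Finset.mul_sum]
    exact Finset.sum_congr rfl fun l _ => cost_eq hw (hv l)
  rw [e _ hp, e _ h0, e _ h1, e _ h2, e _ h3]
  have q : ∀ (k : ℝ) (w : Fin m → ℝ), IsBudget w → ∑ j, k * (w j - p j) = 0 := by
    intro k w hw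
    rw [← Finset.mul_sum, Finset.sum_sub_distrib, hw.2, hp.2]; ring
  simp only [termR]
  rw [Finset.sum_sub_distrib]
  simp only [Finset.sum_add_distrib]
  simp only [Finset.sum_sub_distrib (f := fun j => (1 / (n:ℝ)) * _)]
  rw [q _ _ h0, q _ _ h1, q _ _ h2, q _ _ h3, q _ _ ha, q _ _ hb, q _ _ hc, q _ _ hd]
  simp only [← Finset.mul_sum]
  ring

/-- The distortion of the class of median schemes with three uniformly sampled voters
is at most 1.80: for every vote profile of budgets and every selection `h` of
median-scheme outcomes for each ordered triple of voters,
`(1/n⁴) Σ_{i,j,k,l} d(h(i,j,k), v_l) ≤ 1.80 · (1/n) · min_{p∈𝔹} Σ_l d(p, v_l)`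
(the minimum expressed via a minimizer `popt`). -/
theorem distortion_median_le {m n : ℕ} (hm : 1 ≤ m) (hn : 1 ≤ n)
    (v : Fin n → Fin m → ℝ) (hv : ∀ i, IsBudget (v i))
    (h : Fin n → Fin n → Fin n → (Fin m → ℝ))
    (hh : ∀ i j k, MedianOutcome (v i) (v j) (v k) (h i j k))
    (popt : Fin m → ℝ) (hpopt : IsBudget popt)
    (hmin : ∀ p : Fin m → ℝ, IsBudget p → ∑ l, cost popt (v l) ≤ ∑ l, cost p (v l)) :
    (1 / (n : ℝ) ^ 4) * ∑ i, ∑ j, ∑ k, ∑ l, cost (h i j k) (v l) ≤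
      1.80 * ((1 / (n : ℝ)) * ∑ l, cost popt (v l)) := by
  have hn' : (0:ℝ) < n := by exact_mod_cast hn
  choose σ hσ using fun i j k => structure_median (hv i) (hv j) (hv k) (hh i j k)
  have H : ∀ j, _ := fun j => coord hn (fun l => v l j) (fun a b c => h a b c j) σ (popt j)
    (fun l => budget_le_one (hv l) j) (fun a b c => budget_le_one (hh a b c).1 j)
    (budget_le_one hpopt j) (fun a b c => hσ a b c j)
  have H2 := Finset.sum_nonpos (s := Finset.univ) fun j _ => H j
  have H3 : ∑ a, ∑ b, ∑ c, ∑ d, 2 * ∑ j, termR (fun l => v l j) (popt j) (h a b c j) (h a b d j)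
      (h a c d j) (h b c d j) (σ a b c) (σ a b d) (σ a c d) (σ b c d)
      (v a j) (v b j) (v c j) (v d j) ≤ 0 := by
    simp only [← Finset.mul_sum]
    have : ∀ T : Fin n → Fin n → Fin n → Fin n → Fin m → ℝ,
        ∑ a, ∑ b, ∑ c, ∑ d, ∑ j, T a b c d j = ∑ j, ∑ a, ∑ b, ∑ c, ∑ d, T a b c d j := by
      intro T
      simp only [Finset.sum_comm (s := (Finset.univ : Finset (Fin n))) (t := (Finset.univ : Finset (Fin m)))]
    rw [this]
    linarith
  simp only [sum_termR v hv _ _ _ _ _ _ _ _ _ hpopt (hh _ _ _).1 (hh _ _ _).1 (hh _ _ _).1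
    (hh _ _ _).1 (hv _) (hv _) (hv _) (hv _)] at H3
  simp only [Finset.sum_add_distrib, Finset.sum_sub_distrib, ← Finset.mul_sum, Finset.sum_const,
    Finset.card_univ, Fintype.card_fin, nsmul_eq_mul] at H3
  generalize ∑ i, ∑ j, ∑ k, ∑ l, cost (h i j k) (v l) = A at *
  generalize ∑ l, cost popt (v l) = O at *
  have H4 : A ≤ 9/5 * n^3 * O := by
    field_simp at H3
    nlinarith
  rw [div_mul_eq_mul_div, one_mul, div_le_iff₀ (by positivity)]
  calc A ≤ 9/5 * n^3 * O := H4
    _ = _ := by norm_num; field_simp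
end
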